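/- Let w = e^{−Q} be a Freud weight on ℝ: Q even, three times continuously differentiable, Q' > 0 on (0,∞), 2 ≤ A ≤ (x·Q'(x))'/Q'(x) ≤ B on (0,∞), and |x·Q'''(x)/Q''(x)| ≤ c for |x| ≥ 1; let d ≥ 1 be such that Q''(x) ≥ (1 − (B−1)² − c(B−1))/x² for |x| ≥ d. Let \tilde{w} : ℝ → ℝ be an even, positive, twice continuously differentiable weight with \tilde{w}(x) = w(x) for |x| ≤ 1 and \tilde{w}(x) = w(x)·|x|/Q'(|x|) for |x| ≥ d, such that log(1/\tilde{w}) has positive continuous first and second derivatives on (0,∞). For each n let x_{1,n} < … < x_{n,n} be the zeros of the n-th orthonormal polynomial p_n with respect to w, l_{k,n} the fundamental Lagrange polynomials on these nodes, and Y_n(f,x) = ∑_{k=1}^n l_{k,n}(x)²·f(x_{k,n}) the Grünwald operator. Then for every continuous f : ℝ → ℝ with f(x)·\tilde{w}(x) → 0 as |x| → ∞, one has sup_{x∈ℝ} |(Y_n(f,x) − f(x))·\tilde{w}(x)| → 0 as n → ∞. -/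

import Mathlib

open Real Filter Set Finset MeasureTheory

/-!
Write `ℓ_k` for the fundamental polynomials at the zeros `x_k` of `p_n`, `λ_k` for the Christoffel
numbers, `κ_x(t) = (Q'(t) - Q'(x)) / (t - x)` and `A(x) = ∫ p_n² κ_x e^{-Q}`. Then
`ℓ_k(x)² A(x_k) = λ_k e_k(x)²` with `e_k = p_n / (· - x_k)`, so the squares `ℓ_k(x)²` become sums
accessible to Gauss quadrature. If `G` is a polynomial of small degree such that `G e^{-Q}` peaks at
`x`, integration by parts gives `∑ λ_k G(x_k) e_k(x)² = G(x) A(x) - p_n(x)² ∫ defect` with a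
nonnegative defect. A polynomial `G` in `t²` with nonnegative coefficients still satisfies the upper
bound in every degree, because Gauss quadrature underestimates the integrals of such polynomials.

Taking `G(t) ≈ e^{Q(t) - Q(x)}` bounds `∑ λ_k e^{Q(x_k)} e_k(x)²`, and sharpening `G` by a Chebyshev
polynomial gives `p_n² e^{-Q} ≤ C / L_n` in the bulk, where `L_n Q'(L_n) = n`. The moments of
`p_n² e^{-Q}` give `A(x) ≥ c (1 + Q'(x) / x)`. Together these make the Grünwald operators uniformly
bounded in the norm with weight `w̃ ≍ e^{-Q} / (1 + Q'(x) / x)`, which settles large `|x|`. On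
compact sets, `Y_n f - f` is compared through the same identity with the multiple of `A G` that
agrees with `f` at `x`: nodes near `x` contribute little by continuity, far nodes because
`p_n² e^{-Q} → 0`.
-/

namespace GrunwaldInterpolation

/-! ### Freud exponents -/

section

lemma le_of_deriv_mul_sub_nonneg {f f' : ℝ → ℝ} {x t : ℝ}
    (hf : ∀ s ∈ Set.uIcc x t, HasDerivAt f (f' s) s)
    (h : ∀ s ∈ Set.uIcc x t, 0 ≤ f' s * (s - x)) : f x ≤ f t := by
  have hcont : ContinuousOn f (Set.uIcc x t) :=
    fun s hs => (hf s hs).continuousAt.continuousWithinAt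
  have hderiv : ∀ s ∈ interior (Set.uIcc x t), HasDerivAt f (f' s) s :=
    fun s hs => hf s (interior_subset hs)
  have hdiff : DifferentiableOn ℝ f (interior (Set.uIcc x t)) :=
    fun s hs => (hderiv s hs).differentiableAt.differentiableWithinAt
  rcases le_total x t with hxt | htx
  · refine monotoneOn_of_deriv_nonneg (convex_uIcc x t) hcont hdiff (fun s hs => ?_)
      Set.left_mem_uIcc Set.right_mem_uIcc hxt
    rw [(hderiv s hs).deriv]
    refine nonneg_of_mul_nonneg_left (h s (interior_subset hs)) ?_
    rw [Set.uIcc_of_le hxt, interior_Icc] at hs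
    exact sub_pos.2 hs.1
  · refine antitoneOn_of_deriv_nonpos (convex_uIcc x t) hcont hdiff (fun s hs => ?_)
      Set.right_mem_uIcc Set.left_mem_uIcc htx
    rw [(hderiv s hs).deriv]
    have hprod := h s (interior_subset hs)
    rw [Set.uIcc_of_ge htx, interior_Icc] at hs
    exact nonpos_of_mul_nonneg_left hprod (sub_neg.2 hs.2)

/-- `Q` is the exponent of a Freud weight `e^{-Q}`: the logarithmic derivative
`(x Q'(x))' / Q'(x) = 1 + x Q''(x) / Q'(x)` lies in `[2, 1 + b]` on `(0, ∞)`. The upper bound is a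
natural number, so that the growth of `Q'` is controlled by the polynomial `x ^ b`. -/
structure IsFreudExponent (Q : ℝ → ℝ) (b : ℕ) : Prop where
  even : Function.Even Q
  contDiff : ContDiff ℝ 2 Q
  deriv_pos : ∀ x, 0 < x → 0 < deriv Q x
  deriv_le : ∀ x, 0 < x → deriv Q x ≤ x * deriv (deriv Q) x
  le_mul_deriv : ∀ x, 0 < x → x * deriv (deriv Q) x ≤ b * deriv Q x

/-- The quotient `Q'(x) / x`, continuously extended to `x = 0`. -/
noncomputable def radialSlope (Q : ℝ → ℝ) : ℝ → ℝ := dslope (deriv Q) 0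

/-- The weight `e^{-Q}` varies near `x` on the length scale `(curvatureScale Q x) ^ (-1/2)`. -/
noncomputable def curvatureScale (Q : ℝ → ℝ) (x : ℝ) : ℝ := 1 + radialSlope Q x

/-- The Euler operator `x d/dx` applied to `Q`. -/
noncomputable def eulerDeriv (Q : ℝ → ℝ) (x : ℝ) : ℝ := x * deriv Q x

variable {Q : ℝ → ℝ} {b : ℕ}

namespace IsFreudExponent

lemma one_le (hQ : IsFreudExponent Q b) : (1 : ℝ) ≤ b := by
  have h := (hQ.deriv_le 1 one_pos).trans (hQ.le_mul_deriv 1 one_pos)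
  exact le_of_mul_le_mul_right (by linarith) (hQ.deriv_pos 1 one_pos)

lemma contDiff_deriv (hQ : IsFreudExponent Q b) : ContDiff ℝ 1 (deriv Q) :=
  ((contDiff_succ_iff_deriv (n := 1)).1 hQ.contDiff).2.2

lemma hasDerivAt (hQ : IsFreudExponent Q b) (x : ℝ) : HasDerivAt Q (deriv Q x) x :=
  (hQ.contDiff.differentiable two_ne_zero x).hasDerivAt

lemma hasDerivAt_deriv (hQ : IsFreudExponent Q b) (x : ℝ) :
    HasDerivAt (deriv Q) (deriv (deriv Q) x) x :=
  (hQ.contDiff_deriv.differentiable one_ne_zero x).hasDerivAt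

lemma continuous (hQ : IsFreudExponent Q b) : Continuous Q := hQ.contDiff.continuous

lemma continuous_deriv (hQ : IsFreudExponent Q b) : Continuous (deriv Q) :=
  hQ.contDiff_deriv.continuous

lemma continuous_deriv_deriv (hQ : IsFreudExponent Q b) : Continuous (deriv (deriv Q)) :=
  hQ.contDiff_deriv.continuous_deriv le_rfl

lemma apply_abs (hQ : IsFreudExponent Q b) (x : ℝ) : Q |x| = Q x := by
  rcases abs_choice x with h | h <;> rw [h]
  exact hQ.even x

lemma odd_deriv (hQ : IsFreudExponent Q b) : Function.Odd (deriv Q) := by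
  intro x
  have h := deriv_comp_neg Q x
  rw [funext hQ.even] at h
  linarith

lemma even_deriv_deriv (hQ : IsFreudExponent Q b) : Function.Even (deriv (deriv Q)) := by
  intro x
  have h := deriv_comp_neg (deriv Q) x
  rw [funext hQ.odd_deriv, deriv.fun_neg] at h
  linarith

lemma deriv_eq (hQ : IsFreudExponent Q b) (x : ℝ) : deriv Q x = x * radialSlope Q x := by
  have h := sub_smul_dslope (deriv Q) 0 x
  rw [sub_zero, smul_eq_mul, hQ.odd_deriv.map_zero, sub_zero] at h
  exact h.symm

lemma eulerDeriv_eq (hQ : IsFreudExponent Q b) (x : ℝ) :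
    eulerDeriv Q x = radialSlope Q x * x ^ 2 := by
  rw [eulerDeriv, hQ.deriv_eq]; ring

lemma radialSlope_eq_div (hQ : IsFreudExponent Q b) {x : ℝ} (hx : x ≠ 0) :
    radialSlope Q x = deriv Q x / x := by
  rw [hQ.deriv_eq x]; field_simp

lemma continuous_dslope_deriv (hQ : IsFreudExponent Q b) (x : ℝ) :
    Continuous (dslope (deriv Q) x) :=
  continuousOn_univ.1 <| (continuousOn_dslope univ_mem).2
    ⟨hQ.continuous_deriv.continuousOn, (hQ.hasDerivAt_deriv x).differentiableAt⟩

lemma continuous_radialSlope (hQ : IsFreudExponent Q b) : Continuous (radialSlope Q) :=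
  hQ.continuous_dslope_deriv 0

lemma even_radialSlope (hQ : IsFreudExponent Q b) : Function.Even (radialSlope Q) := by
  intro x
  rcases eq_or_ne x 0 with rfl | hx
  · rw [neg_zero]
  · rw [hQ.radialSlope_eq_div hx, hQ.radialSlope_eq_div (neg_ne_zero.2 hx), hQ.odd_deriv,
      neg_div_neg_eq]

lemma radialSlope_abs (hQ : IsFreudExponent Q b) (x : ℝ) :
    radialSlope Q |x| = radialSlope Q x := by
  rcases abs_choice x with h | h <;> rw [h]
  exact hQ.even_radialSlope x

lemma radialSlope_pos (hQ : IsFreudExponent Q b) {x : ℝ} (hx : x ≠ 0) : 0 < radialSlope Q x := by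
  have hx' := abs_pos.2 hx
  rw [← hQ.radialSlope_abs, hQ.radialSlope_eq_div hx'.ne']
  exact div_pos (hQ.deriv_pos _ hx') hx'

lemma radialSlope_nonneg (hQ : IsFreudExponent Q b) (x : ℝ) : 0 ≤ radialSlope Q x := by
  have hclosed : IsClosed {y | 0 ≤ radialSlope Q y} :=
    isClosed_le continuous_const hQ.continuous_radialSlope
  exact closure_minimal (fun y hy => (hQ.radialSlope_pos hy).le) hclosed
    (dense_compl_singleton (0 : ℝ) x)

lemma radialSlope_monotoneOn (hQ : IsFreudExponent Q b) :
    MonotoneOn (radialSlope Q) (Set.Ici 0) := by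
  have hderiv : ∀ x, 0 < x → HasDerivAt (radialSlope Q)
      ((deriv (deriv Q) x * x - deriv Q x * 1) / x ^ 2) x := fun x hx =>
    ((hQ.hasDerivAt_deriv x).div (hasDerivAt_id x) hx.ne').congr_of_eventuallyEq <|
      (eventually_ne_nhds hx.ne').mono fun y hy => hQ.radialSlope_eq_div hy
  refine monotoneOn_of_deriv_nonneg (convex_Ici 0) hQ.continuous_radialSlope.continuousOn ?_ ?_ <;>
    rw [interior_Ici] <;> intro x hx
  · exact (hderiv x hx).differentiableAt.differentiableWithinAt
  · rw [(hderiv x hx).deriv]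
    exact div_nonneg (by linarith [hQ.deriv_le x hx]) (sq_nonneg x)

lemma radialSlope_le_of_abs_le (hQ : IsFreudExponent Q b) {x y : ℝ} (hxy : |x| ≤ |y|) :
    radialSlope Q x ≤ radialSlope Q y := by
  rw [← hQ.radialSlope_abs x, ← hQ.radialSlope_abs y]
  exact hQ.radialSlope_monotoneOn (abs_nonneg x) (abs_nonneg y) hxy

lemma antitoneOn_deriv_div_pow (hQ : IsFreudExponent Q b) :
    AntitoneOn (fun x => deriv Q x / x ^ b) (Set.Ioi 0) := by
  have hderiv : ∀ x, 0 < x → HasDerivAt (fun x => deriv Q x / x ^ b)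
      ((deriv (deriv Q) x * x ^ b - deriv Q x * (b * x ^ (b - 1))) / (x ^ b) ^ 2) x := fun x hx =>
    (hQ.hasDerivAt_deriv x).div (hasDerivAt_pow b x) (pow_ne_zero _ hx.ne')
  refine antitoneOn_of_deriv_nonpos (convex_Ioi 0)
    (fun x hx => (hderiv x hx).continuousAt.continuousWithinAt) ?_ ?_ <;>
    rw [interior_Ioi] <;> intro x hx
  · exact (hderiv x hx).differentiableAt.differentiableWithinAt
  · rw [(hderiv x hx).deriv]
    refine div_nonpos_of_nonpos_of_nonneg ?_ (sq_nonneg _)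
    have hpow : x ^ b = x ^ (b - 1) * x := by
      rw [← pow_succ, Nat.sub_add_cancel (Nat.one_le_cast.1 hQ.one_le)]
    have hmul := mul_le_mul_of_nonneg_left (hQ.le_mul_deriv x hx) (pow_pos hx (b - 1)).le
    rw [hpow]
    linarith

lemma radialSlope_mul_le (hQ : IsFreudExponent Q b) {l : ℝ} (hl : 1 ≤ l) (x : ℝ) :
    radialSlope Q (l * x) ≤ l ^ b * radialSlope Q x := by
  rcases eq_or_ne x 0 with rfl | hx
  · rw [mul_zero]
    exact le_mul_of_one_le_left (hQ.radialSlope_nonneg 0) (one_le_pow₀ hl)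
  wlog hpos : 0 < x generalizing x
  · have h := this (-x) (neg_ne_zero.2 hx) (neg_pos.2 (lt_of_le_of_ne (not_lt.1 hpos) hx))
    rwa [mul_neg, hQ.even_radialSlope, hQ.even_radialSlope] at h
  have : 0 < l := one_pos.trans_le hl
  have hlx : x ≤ l * x := le_mul_of_one_le_left hpos.le hl
  have hanti := hQ.antitoneOn_deriv_div_pow hpos (hpos.trans_le hlx) hlx
  simp only [hQ.deriv_eq, mul_pow] at hanti
  rw [div_le_div_iff₀ (by positivity) (by positivity)] at hanti
  have hcancel : l * radialSlope Q (l * x) ≤ l ^ b * radialSlope Q x :=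
    le_of_mul_le_mul_left (a := x * x ^ b) (by linarith) (by positivity)
  exact (le_mul_of_one_le_left (hQ.radialSlope_nonneg _) hl).trans hcancel

lemma radialSlope_one_pos (hQ : IsFreudExponent Q b) : 0 < radialSlope Q 1 :=
  hQ.radialSlope_pos one_ne_zero

lemma radialSlope_one_le (hQ : IsFreudExponent Q b) {x : ℝ} (hx : 1 ≤ |x|) :
    radialSlope Q 1 ≤ radialSlope Q x :=
  hQ.radialSlope_le_of_abs_le (by rwa [abs_one])

lemma radialSlope_le_pow (hQ : IsFreudExponent Q b) (t : ℝ) :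
    radialSlope Q t ≤ radialSlope Q 1 * (1 + t ^ 2) ^ b := by
  have h1 : (1 : ℝ) ≤ 1 + t ^ 2 := le_add_of_nonneg_right (sq_nonneg t)
  calc radialSlope Q t ≤ radialSlope Q ((1 + t ^ 2) * 1) := hQ.radialSlope_le_of_abs_le <| by
        rw [mul_one, abs_of_nonneg (a := 1 + t ^ 2) (by positivity), ← sq_abs]
        nlinarith [sq_nonneg (|t| - 1)]
    _ ≤ (1 + t ^ 2) ^ b * radialSlope Q 1 := hQ.radialSlope_mul_le h1 1
    _ = _ := mul_comm _ _

lemma one_le_curvatureScale (hQ : IsFreudExponent Q b) (x : ℝ) : 1 ≤ curvatureScale Q x :=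
  le_add_of_nonneg_right (hQ.radialSlope_nonneg x)

lemma curvatureScale_pos (hQ : IsFreudExponent Q b) (x : ℝ) : 0 < curvatureScale Q x :=
  one_pos.trans_le (hQ.one_le_curvatureScale x)

lemma curvatureScale_abs (hQ : IsFreudExponent Q b) (x : ℝ) :
    curvatureScale Q |x| = curvatureScale Q x := by
  rw [curvatureScale, hQ.radialSlope_abs, curvatureScale]

lemma curvatureScale_le_of_abs_le (hQ : IsFreudExponent Q b) {x y : ℝ} (hxy : |x| ≤ |y|) :
    curvatureScale Q x ≤ curvatureScale Q y :=
  add_le_add_right (hQ.radialSlope_le_of_abs_le hxy) 1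

lemma exists_curvatureScale_le (hQ : IsFreudExponent Q b) : ∃ C : ℝ, 1 ≤ C ∧ ∀ x y : ℝ,
    |y| ≤ |x| + 1 → curvatureScale Q y ≤ C * curvatureScale Q x := by
  have h2 := hQ.radialSlope_nonneg 2
  have hpow : (1 : ℝ) ≤ 2 ^ b := one_le_pow₀ one_le_two
  refine ⟨1 + 2 ^ b + radialSlope Q 2, by linarith, fun x y hxy => ?_⟩
  have hx := hQ.radialSlope_nonneg x
  unfold curvatureScale
  rcases le_total |x| 1 with h | h
  · have hy : radialSlope Q y ≤ radialSlope Q 2 :=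
      hQ.radialSlope_le_of_abs_le (by rw [abs_two]; linarith)
    nlinarith
  · have hy : radialSlope Q y ≤ radialSlope Q (2 * x) :=
      hQ.radialSlope_le_of_abs_le (by rw [abs_mul, abs_two]; linarith)
    nlinarith [hQ.radialSlope_mul_le one_le_two x]

lemma exists_mul_curvatureScale_le_radialSlope (hQ : IsFreudExponent Q b) :
    ∃ c : ℝ, 0 < c ∧ ∀ x : ℝ, 1 ≤ |x| → c * curvatureScale Q x ≤ radialSlope Q x := by
  have h1 := hQ.radialSlope_one_pos
  refine ⟨radialSlope Q 1 / (1 + radialSlope Q 1), by positivity, fun x hx => ?_⟩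
  rw [curvatureScale, div_mul_eq_mul_div, div_le_iff₀ (by positivity)]
  nlinarith [hQ.radialSlope_one_le hx]

lemma eulerDeriv_nonneg (hQ : IsFreudExponent Q b) (t : ℝ) : 0 ≤ eulerDeriv Q t := by
  rw [hQ.eulerDeriv_eq]
  exact mul_nonneg (hQ.radialSlope_nonneg t) (sq_nonneg t)

lemma mul_eulerDeriv_le (hQ : IsFreudExponent Q b) {l s t : ℝ} (hst : |s| ≤ |t|)
    (hl : l * s ^ 2 ≤ t ^ 2) : l * eulerDeriv Q s ≤ eulerDeriv Q t := by
  simp only [hQ.eulerDeriv_eq]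
  calc l * (radialSlope Q s * s ^ 2) = radialSlope Q s * (l * s ^ 2) := by ring
    _ ≤ radialSlope Q s * t ^ 2 := by gcongr; exact hQ.radialSlope_nonneg s
    _ ≤ radialSlope Q t * t ^ 2 := by gcongr; exact hQ.radialSlope_le_of_abs_le hst

lemma eulerDeriv_le_of_abs_le (hQ : IsFreudExponent Q b) {s t : ℝ} (hst : |s| ≤ |t|) :
    eulerDeriv Q s ≤ eulerDeriv Q t := by
  simpa only [one_mul] using hQ.mul_eulerDeriv_le (l := 1) hst (by simpa using sq_le_sq.2 hst)

-- As the slope `Q'(s) / s` is increasing, `Q` is a convex function of `s²`.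
lemma add_half_mul_le (hQ : IsFreudExponent Q b) (x t : ℝ) :
    Q x + radialSlope Q x / 2 * (t ^ 2 - x ^ 2) ≤ Q t := by
  wlog hnonneg : 0 ≤ x ∧ 0 ≤ t generalizing x t
  · have h := this |x| |t| ⟨abs_nonneg x, abs_nonneg t⟩
    rwa [hQ.apply_abs, hQ.apply_abs, hQ.radialSlope_abs, sq_abs, sq_abs] at h
  have hderiv : ∀ s, HasDerivAt (fun s => Q s - radialSlope Q x / 2 * (s ^ 2 - x ^ 2))
      (s * (radialSlope Q s - radialSlope Q x)) s := fun s =>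
    ((hQ.hasDerivAt s).sub (((hasDerivAt_pow 2 s).sub_const (x ^ 2)).const_mul
      (radialSlope Q x / 2))).congr_deriv (by rw [hQ.deriv_eq]; push_cast; ring)
  have hsign : ∀ s, 0 ≤ s → 0 ≤ (radialSlope Q s - radialSlope Q x) * (s - x) := fun s hs => by
    rcases le_total s x with h | h
    · exact mul_nonneg_of_nonpos_of_nonpos
        (sub_nonpos.2 (hQ.radialSlope_monotoneOn hs hnonneg.1 h)) (sub_nonpos.2 h)
    · exact mul_nonneg
        (sub_nonneg.2 (hQ.radialSlope_monotoneOn hnonneg.1 hs h)) (sub_nonneg.2 h)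
  have hle := le_of_deriv_mul_sub_nonneg (t := t) (fun s _ => hderiv s) fun s hs => by
    have hs0 : 0 ≤ s := (le_min hnonneg.1 hnonneg.2).trans hs.1
    rw [mul_assoc]
    exact mul_nonneg hs0 (hsign s hs0)
  simp only [sub_self, mul_zero, sub_zero] at hle
  linarith

lemma apply_zero_le (hQ : IsFreudExponent Q b) (t : ℝ) : Q 0 ≤ Q t := by
  nlinarith [hQ.add_half_mul_le 0 t, mul_nonneg (hQ.radialSlope_nonneg 0) (sq_nonneg t)]

lemma exists_mul_sq_sub_le (hQ : IsFreudExponent Q b) :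
    ∃ a C : ℝ, 0 < a ∧ ∀ t : ℝ, a * t ^ 2 - C ≤ Q t :=
  ⟨radialSlope Q 1 / 2, radialSlope Q 1 / 2 - Q 1, half_pos hQ.radialSlope_one_pos,
    fun t => by linarith [hQ.add_half_mul_le 1 t]⟩

lemma deriv_deriv_mem_Icc (hQ : IsFreudExponent Q b) (x : ℝ) :
    deriv (deriv Q) x ∈ Set.Icc (radialSlope Q x) (b * radialSlope Q x) := by
  rcases eq_or_ne x 0 with rfl | hx
  · rw [show deriv (deriv Q) 0 = radialSlope Q 0 from (dslope_same _ _).symm]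
    exact ⟨le_rfl, le_mul_of_one_le_left (hQ.radialSlope_nonneg 0) hQ.one_le⟩
  wlog hpos : 0 < x generalizing x
  · have h := this (-x) (neg_ne_zero.2 hx) (neg_pos.2 (lt_of_le_of_ne (not_lt.1 hpos) hx))
    rwa [hQ.even_deriv_deriv, hQ.even_radialSlope] at h
  have hlo := hQ.deriv_le x hpos
  have hhi := hQ.le_mul_deriv x hpos
  rw [hQ.deriv_eq] at hlo hhi
  exact ⟨le_of_mul_le_mul_left hlo hpos, le_of_mul_le_mul_left (by linarith) hpos⟩

lemma half_add_le_dslope_deriv (hQ : IsFreudExponent Q b) (x t : ℝ) :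
    (radialSlope Q x + radialSlope Q t) / 2 ≤ dslope (deriv Q) x t := by
  rcases eq_or_ne t x with rfl | hne
  · rw [dslope_same, add_self_div_two]
    exact (hQ.deriv_deriv_mem_Icc t).1
  have hdslope := sub_smul_dslope (deriv Q) x t
  rw [smul_eq_mul, hQ.deriv_eq t, hQ.deriv_eq x] at hdslope
  have hcomonotone : 0 ≤ (radialSlope Q t - radialSlope Q x) * (t ^ 2 - x ^ 2) := by
    rcases le_total |t| |x| with h | h
    · exact mul_nonneg_of_nonpos_of_nonpos
        (sub_nonpos.2 (hQ.radialSlope_le_of_abs_le h)) (sub_nonpos.2 (sq_le_sq.2 h))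
    · exact mul_nonneg
        (sub_nonneg.2 (hQ.radialSlope_le_of_abs_le h)) (sub_nonneg.2 (sq_le_sq.2 h))
  refine le_of_mul_le_mul_left (a := (t - x) ^ 2) ?_ (pow_two_pos_of_ne_zero (sub_ne_zero.2 hne))
  calc (t - x) ^ 2 * ((radialSlope Q x + radialSlope Q t) / 2)
      = (t - x) * (t * radialSlope Q t - x * radialSlope Q x)
        - (radialSlope Q t - radialSlope Q x) * (t ^ 2 - x ^ 2) / 2 := by ring
    _ ≤ (t - x) * (t * radialSlope Q t - x * radialSlope Q x) := by linarith
    _ = (t - x) ^ 2 * dslope (deriv Q) x t := by rw [← hdslope]; ring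

lemma dslope_deriv_nonneg (hQ : IsFreudExponent Q b) (x t : ℝ) : 0 ≤ dslope (deriv Q) x t := by
  linarith [hQ.half_add_le_dslope_deriv x t, hQ.radialSlope_nonneg x, hQ.radialSlope_nonneg t]

lemma exists_dslope_deriv_eq (hQ : IsFreudExponent Q b) (x t : ℝ) :
    ∃ s ∈ Set.uIcc x t, dslope (deriv Q) x t = deriv (deriv Q) s := by
  have mean_value : ∀ u v, u < v →
      ∃ s ∈ Set.uIcc u v, slope (deriv Q) u v = deriv (deriv Q) s := fun u v huv => by
    obtain ⟨s, hs, hslope⟩ := exists_hasDerivAt_eq_slope (deriv Q) (deriv (deriv Q)) huv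
      hQ.continuous_deriv.continuousOn fun y _ => hQ.hasDerivAt_deriv y
    exact ⟨s, Set.Icc_subset_uIcc (Set.Ioo_subset_Icc_self hs), by rw [hslope, slope_def_field]⟩
  rcases lt_trichotomy x t with h | rfl | h
  · rw [dslope_of_ne _ h.ne']
    exact mean_value x t h
  · exact ⟨x, Set.left_mem_uIcc, dslope_same _ _⟩
  · rw [dslope_of_ne _ h.ne, slope_comm, Set.uIcc_comm]
    exact mean_value t x h

lemma dslope_deriv_le_max (hQ : IsFreudExponent Q b) (x t : ℝ) :
    dslope (deriv Q) x t ≤ b * max (radialSlope Q x) (radialSlope Q t) := by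
  obtain ⟨s, hs, heq⟩ := hQ.exists_dslope_deriv_eq x t
  rw [heq]
  refine (hQ.deriv_deriv_mem_Icc s).2.trans (mul_le_mul_of_nonneg_left ?_ (Nat.cast_nonneg b))
  rcases le_max_iff.1 (abs_le_max_abs_abs hs.1 hs.2) with h | h <;>
    rcases le_total x t with hxt | hxt <;>
    simp only [hxt, inf_of_le_left, inf_of_le_right, sup_of_le_left, sup_of_le_right] at h
  exacts [le_max_of_le_left (hQ.radialSlope_le_of_abs_le h),
    le_max_of_le_right (hQ.radialSlope_le_of_abs_le h),
    le_max_of_le_right (hQ.radialSlope_le_of_abs_le h),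
    le_max_of_le_left (hQ.radialSlope_le_of_abs_le h)]

lemma dslope_deriv_le (hQ : IsFreudExponent Q b) (x t : ℝ) :
    dslope (deriv Q) x t ≤ b * (radialSlope Q x + radialSlope Q t) :=
  (hQ.dslope_deriv_le_max x t).trans <| mul_le_mul_of_nonneg_left
    (max_le_add_of_nonneg (hQ.radialSlope_nonneg x) (hQ.radialSlope_nonneg t)) (Nat.cast_nonneg b)

lemma exists_le_add_mul_sq (hQ : IsFreudExponent Q b) :
    ∃ C : ℝ, 1 ≤ C ∧ ∀ x t : ℝ, |t - x| ≤ 1 →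
      Q t ≤ Q x + deriv Q x * (t - x) + C * curvatureScale Q x * (t - x) ^ 2 := by
  obtain ⟨C, hC1, hC⟩ := hQ.exists_curvatureScale_le
  refine ⟨b * C, one_le_mul_of_one_le_of_one_le hQ.one_le hC1, fun x t htx => ?_⟩
  set M := b * C * curvatureScale Q x with hM
  have hM0 : 0 ≤ M := by have := hQ.curvatureScale_pos x; positivity
  have hslope : ∀ s ∈ Set.uIcc x t, dslope (deriv Q) x s ≤ M := fun s hs => by
    have hsx : |s| ≤ |x| + 1 := by
      linarith [abs_sub_abs_le_abs_sub s x, (Set.abs_sub_left_of_mem_uIcc hs).trans htx]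
    rw [hM, mul_assoc]
    refine (hQ.dslope_deriv_le_max x s).trans ?_
    gcongr
    exact max_le ((le_add_of_nonneg_left zero_le_one).trans (hC x x (by linarith)))
      ((le_add_of_nonneg_left zero_le_one).trans (hC x s hsx))
  have hderiv : ∀ s, HasDerivAt (fun s => Q x + deriv Q x * (s - x) + M * (s - x) ^ 2 - Q s)
      (deriv Q x + M * (2 * (s - x)) - deriv Q s) s := fun s => by
    have hlin : HasDerivAt (fun s : ℝ => s - x) 1 s := (hasDerivAt_id s).sub_const x
    exact ((((hlin.const_mul (deriv Q x)).const_add (Q x)).add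
      ((hlin.pow 2).const_mul M)).sub (hQ.hasDerivAt s)).congr_deriv (by push_cast; ring)
  have hle := le_of_deriv_mul_sub_nonneg (t := t) (fun s _ => hderiv s) fun s hs => by
    have hdslope := sub_smul_dslope (deriv Q) x s
    rw [smul_eq_mul] at hdslope
    calc 0 ≤ (M - dslope (deriv Q) x s) * (s - x) ^ 2 + M * (s - x) ^ 2 :=
          add_nonneg (mul_nonneg (sub_nonneg.2 (hslope s hs)) (sq_nonneg _)) (by positivity)
      _ = _ := by linear_combination -(s - x) * hdslope
  simp only [sub_self, mul_zero, add_zero, ne_eq, OfNat.ofNat_ne_zero, not_false_eq_true,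
    zero_pow] at hle
  linarith

end IsFreudExponent

end

/-! ### Weighted integrals -/

section

/-- Continuous functions of at most polynomial growth; they form an algebra of functions that are
integrable against `e^{-Q}` and contains both the polynomials and the derivative `Q'`. -/
def IsPolyBounded (g : ℝ → ℝ) : Prop :=
  Continuous g ∧ ∃ C : ℝ, ∃ m : ℕ, 0 ≤ C ∧ ∀ t, |g t| ≤ C * (1 + t ^ 2) ^ m

variable {Q : ℝ → ℝ} {b : ℕ} {f g : ℝ → ℝ}

lemma one_le_one_add_sq (t : ℝ) : 1 ≤ 1 + t ^ 2 := le_add_of_nonneg_right (sq_nonneg t)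

namespace IsPolyBounded

lemma const (c : ℝ) : IsPolyBounded fun _ => c :=
  ⟨continuous_const, |c|, 0, abs_nonneg c, fun t => by simp⟩

lemma id : IsPolyBounded fun t => t := by
  refine ⟨continuous_id, 1, 1, zero_le_one, fun t => ?_⟩
  rw [one_mul, pow_one, abs_le]
  constructor <;> nlinarith [sq_nonneg (t - 1), sq_nonneg (t + 1)]

lemma mul (hf : IsPolyBounded f) (hg : IsPolyBounded g) : IsPolyBounded fun t => f t * g t := by
  obtain ⟨cf, C, m, hC, h⟩ := hf
  obtain ⟨cg, D, k, hD, h'⟩ := hg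
  refine ⟨cf.mul cg, C * D, m + k, mul_nonneg hC hD, fun t => ?_⟩
  calc |f t * g t| = |f t| * |g t| := abs_mul _ _
    _ ≤ (C * (1 + t ^ 2) ^ m) * (D * (1 + t ^ 2) ^ k) := by gcongr; exacts [h t, h' t]
    _ = C * D * (1 + t ^ 2) ^ (m + k) := by ring

lemma add (hf : IsPolyBounded f) (hg : IsPolyBounded g) : IsPolyBounded fun t => f t + g t := by
  obtain ⟨cf, C, m, hC, h⟩ := hf
  obtain ⟨cg, D, k, hD, h'⟩ := hg
  refine ⟨cf.add cg, C + D, m + k, add_nonneg hC hD, fun t => ?_⟩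
  have h0 := one_le_one_add_sq t
  calc |f t + g t| ≤ |f t| + |g t| := abs_add_le _ _
    _ ≤ C * (1 + t ^ 2) ^ m + D * (1 + t ^ 2) ^ k := add_le_add (h t) (h' t)
    _ ≤ C * (1 + t ^ 2) ^ (m + k) + D * (1 + t ^ 2) ^ (m + k) := by
        gcongr
        exacts [m.le_add_right k, k.le_add_left m]
    _ = (C + D) * (1 + t ^ 2) ^ (m + k) := by ring

lemma const_mul (c : ℝ) (hf : IsPolyBounded f) : IsPolyBounded fun t => c * f t := (const c).mul hf

lemma sub (hf : IsPolyBounded f) (hg : IsPolyBounded g) : IsPolyBounded fun t => f t - g t := by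
  simpa only [neg_one_mul, ← sub_eq_add_neg] using hf.add (hg.const_mul (-1))

lemma pow (hf : IsPolyBounded f) (n : ℕ) : IsPolyBounded fun t => f t ^ n := by
  induction n with
  | zero => simpa only [pow_zero] using const 1
  | succ n ih => simpa only [pow_succ] using ih.mul hf

lemma polynomial (p : Polynomial ℝ) : IsPolyBounded fun t => p.eval t := by
  induction p using Polynomial.induction_on' with
  | add p q hp hq => simpa only [Polynomial.eval_add] using hp.add hq
  | monomial n a => simpa only [Polynomial.eval_monomial] using (id.pow n).const_mul a

lemma of_abs_le (hf : Continuous f) (hg : IsPolyBounded g) (h : ∀ t, |f t| ≤ g t) :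
    IsPolyBounded f := by
  obtain ⟨-, C, m, hC, h'⟩ := hg
  exact ⟨hf, C, m, hC, fun t => (h t).trans ((le_abs_self _).trans (h' t))⟩

lemma exists_abs_le_exp (hf : IsPolyBounded f) {a : ℝ} (ha : 0 < a) :
    ∃ C : ℝ, 0 ≤ C ∧ ∀ t, |f t| ≤ C * exp (a * t ^ 2) := by
  obtain ⟨-, C, m, hC, h⟩ := hf
  refine ⟨C * (m.factorial / a ^ m * exp a), by positivity, fun t => ?_⟩
  have hpow : (a * (1 + t ^ 2)) ^ m / m.factorial ≤ exp (a * (1 + t ^ 2)) :=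
    Real.pow_div_factorial_le_exp _ (by positivity) m
  rw [mul_pow, div_le_iff₀ (by positivity)] at hpow
  calc |f t| ≤ C * (1 + t ^ 2) ^ m := h t
    _ ≤ C * (m.factorial / a ^ m * exp (a * (1 + t ^ 2))) := by
        gcongr
        rw [div_mul_eq_mul_div, le_div_iff₀ (by positivity)]
        linarith
    _ = C * (m.factorial / a ^ m * exp a) * exp (a * t ^ 2) := by
        rw [mul_add, mul_one, exp_add]; ring

lemma exists_abs_mul_exp_neg_le (hQ : IsFreudExponent Q b) (hf : IsPolyBounded f) :
    ∃ a C : ℝ, 0 < a ∧ ∀ t, |f t * exp (-Q t)| ≤ C * exp (-a * t ^ 2) := by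
  obtain ⟨a, C, ha, hQa⟩ := hQ.exists_mul_sq_sub_le
  obtain ⟨D, hD, h⟩ := hf.exists_abs_le_exp (half_pos ha)
  refine ⟨a / 2, D * exp C, half_pos ha, fun t => ?_⟩
  calc |f t * exp (-Q t)| = |f t| * exp (-Q t) := by rw [abs_mul, abs_of_pos (exp_pos _)]
    _ ≤ (D * exp (a / 2 * t ^ 2)) * exp (C - a * t ^ 2) := by
        gcongr
        · exact h t
        · linarith [hQa t]
    _ = D * exp C * exp (-(a / 2) * t ^ 2) := by
        rw [mul_assoc, mul_assoc, ← exp_add, ← exp_add]; ring_nf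

lemma integrable (hQ : IsFreudExponent Q b) (hf : IsPolyBounded f) :
    Integrable fun t => f t * exp (-Q t) := by
  obtain ⟨a, C, ha, h⟩ := hf.exists_abs_mul_exp_neg_le hQ
  exact ((integrable_exp_neg_mul_sq ha).const_mul C).mono'
    (hf.1.mul (continuous_exp.comp hQ.continuous.neg)).aestronglyMeasurable
    (Eventually.of_forall h)

end IsPolyBounded

namespace IsFreudExponent

lemma isPolyBounded_radialSlope (hQ : IsFreudExponent Q b) : IsPolyBounded (radialSlope Q) :=
  ⟨hQ.continuous_radialSlope, radialSlope Q 1, b, hQ.radialSlope_nonneg 1, fun t => by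
    rw [abs_of_nonneg (hQ.radialSlope_nonneg t)]; exact hQ.radialSlope_le_pow t⟩

lemma isPolyBounded_deriv (hQ : IsFreudExponent Q b) : IsPolyBounded (deriv Q) := by
  rw [funext hQ.deriv_eq]
  exact IsPolyBounded.id.mul hQ.isPolyBounded_radialSlope

lemma isPolyBounded_dslope_deriv (hQ : IsFreudExponent Q b) (x : ℝ) :
    IsPolyBounded (dslope (deriv Q) x) := by
  refine .of_abs_le (hQ.continuous_dslope_deriv x)
    (((IsPolyBounded.const (radialSlope Q x)).add hQ.isPolyBounded_radialSlope).const_mul b)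
    fun t => ?_
  rw [abs_of_nonneg (hQ.dslope_deriv_nonneg x t)]
  exact hQ.dslope_deriv_le x t

lemma tendsto_exp_neg (hQ : IsFreudExponent Q b) :
    Tendsto (fun t => exp (-Q t)) (cocompact ℝ) (nhds 0) := by
  obtain ⟨a, C, ha, h⟩ := hQ.exists_mul_sq_sub_le
  have hsq : Tendsto (fun t : ℝ => a * t ^ 2 - C) (cocompact ℝ) atTop := by
    refine tendsto_atTop_add_const_right _ _ (Tendsto.const_mul_atTop ha ?_)
    simpa only [Function.comp_def, norm_eq_abs, sq_abs] using
      (tendsto_pow_atTop two_ne_zero).comp (tendsto_norm_cocompact_atTop (E := ℝ))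
  exact tendsto_exp_neg_atTop_nhds_zero.comp (tendsto_atTop_mono h hsq)

end IsFreudExponent

/-- The functional `g ↦ ∫ g e^{-Q}`. -/
noncomputable def weightedIntegral (Q g : ℝ → ℝ) : ℝ := ∫ t, g t * exp (-Q t)

lemma weightedIntegral_add (hQ : IsFreudExponent Q b) (hf : IsPolyBounded f)
    (hg : IsPolyBounded g) :
    weightedIntegral Q (fun t => f t + g t) = weightedIntegral Q f + weightedIntegral Q g := by
  simp only [weightedIntegral, add_mul]
  exact integral_add (hf.integrable hQ) (hg.integrable hQ)

lemma weightedIntegral_sub (hQ : IsFreudExponent Q b) (hf : IsPolyBounded f)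
    (hg : IsPolyBounded g) :
    weightedIntegral Q (fun t => f t - g t) = weightedIntegral Q f - weightedIntegral Q g := by
  simp only [weightedIntegral, sub_mul]
  exact integral_sub (hf.integrable hQ) (hg.integrable hQ)

lemma weightedIntegral_const_mul (a : ℝ) (f : ℝ → ℝ) :
    weightedIntegral Q (fun t => a * f t) = a * weightedIntegral Q f := by
  simp only [weightedIntegral, mul_assoc]
  exact integral_const_mul _ _

lemma weightedIntegral_nonneg (h : ∀ t, 0 ≤ f t) : 0 ≤ weightedIntegral Q f :=
  integral_nonneg fun t => mul_nonneg (h t) (exp_pos _).le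

lemma weightedIntegral_mono (hQ : IsFreudExponent Q b) (hf : IsPolyBounded f)
    (hg : IsPolyBounded g) (h : ∀ t, f t ≤ g t) : weightedIntegral Q f ≤ weightedIntegral Q g :=
  integral_mono (hf.integrable hQ) (hg.integrable hQ)
    fun t => mul_le_mul_of_nonneg_right (h t) (exp_pos _).le

lemma weightedIntegral_sum (hQ : IsFreudExponent Q b) {ι : Type*} (s : Finset ι) {f : ι → ℝ → ℝ}
    (hf : ∀ i, IsPolyBounded (f i)) :
    weightedIntegral Q (fun t => ∑ i ∈ s, f i t) = ∑ i ∈ s, weightedIntegral Q (f i) := by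
  simp only [weightedIntegral, Finset.sum_mul]
  exact integral_finsetSum s fun i _ => (hf i).integrable hQ

lemma weightedIntegral_comp_neg (hQ : IsFreudExponent Q b) (f : ℝ → ℝ) :
    weightedIntegral Q (fun t => f (-t)) = weightedIntegral Q f := by
  simpa only [weightedIntegral, hQ.even _] using
    integral_neg_eq_self (fun t => f t * exp (-Q t)) volume

lemma weightedIntegral_eq_zero_of_odd (hQ : IsFreudExponent Q b) (hf : Function.Odd f) :
    weightedIntegral Q f = 0 := by
  have h := weightedIntegral_comp_neg hQ f
  simp only [hf _, ← neg_one_mul (f _), weightedIntegral_const_mul] at h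
  linarith

lemma weightedIntegral_sq_pos (hQ : IsFreudExponent Q b) {p : Polynomial ℝ} (hp : p ≠ 0) :
    0 < weightedIntegral Q fun t => p.eval t ^ 2 := by
  obtain ⟨x, hx⟩ : ∃ x, p.eval x ≠ 0 := by
    by_contra! hzero
    exact hp (Polynomial.funext (by simpa using hzero))
  exact integral_pos_of_integrable_nonneg_nonzero (x := x)
    ((p.continuous.pow 2).mul (continuous_exp.comp hQ.continuous.neg))
    (((IsPolyBounded.polynomial p).pow 2).integrable hQ)
    (fun t => mul_nonneg (sq_nonneg _) (exp_pos _).le)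
    (mul_ne_zero (pow_ne_zero 2 hx) (exp_pos _).ne')

lemma weightedIntegral_derivative_sub (hQ : IsFreudExponent Q b) (q : Polynomial ℝ) :
    weightedIntegral Q (fun t => q.derivative.eval t - q.eval t * deriv Q t) = 0 := by
  refine integral_eq_zero_of_hasDerivAt_of_integrable (f := fun t => q.eval t * exp (-Q t))
    (fun t => ?_) (IsPolyBounded.integrable hQ ?_) ((IsPolyBounded.polynomial q).integrable hQ)
  · refine ((q.hasDerivAt t).mul (hQ.hasDerivAt t).neg.exp).congr_deriv ?_
    simp only [Pi.neg_apply]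
    ring
  · exact (IsPolyBounded.polynomial _).sub
      ((IsPolyBounded.polynomial q).mul hQ.isPolyBounded_deriv)

end

/-! ### Gauss quadrature and the ladder coefficient -/

section

/-- The difference quotient `(p - p(x)) / (X - x)` as a polynomial. -/
noncomputable def diffQuot (p : Polynomial ℝ) (x : ℝ) : Polynomial ℝ :=
  p /ₘ (Polynomial.X - Polynomial.C x)

lemma C_add_mul_diffQuot (p : Polynomial ℝ) (x : ℝ) :
    Polynomial.C (p.eval x) + (Polynomial.X - Polynomial.C x) * diffQuot p x = p := by
  rw [← Polynomial.modByMonic_X_sub_C_eq_C_eval]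
  exact Polynomial.modByMonic_add_div p (Polynomial.X - Polynomial.C x)

lemma sub_mul_eval_diffQuot (p : Polynomial ℝ) (x t : ℝ) :
    (t - x) * (diffQuot p x).eval t = p.eval t - p.eval x := by
  have h := congrArg (Polynomial.eval t) (C_add_mul_diffQuot p x)
  simp only [Polynomial.eval_add, Polynomial.eval_mul, Polynomial.eval_sub, Polynomial.eval_X,
    Polynomial.eval_C] at h
  linarith

lemma eval_diffQuot_self (p : Polynomial ℝ) (x : ℝ) :
    (diffQuot p x).eval x = p.derivative.eval x := by
  have h := congrArg (fun q => q.derivative.eval x) (C_add_mul_diffQuot p x)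
  simpa using h

lemma eval_diffQuot_comm (p : Polynomial ℝ) (x y : ℝ) :
    (diffQuot p x).eval y = (diffQuot p y).eval x := by
  rcases eq_or_ne x y with rfl | hxy
  · rfl
  · refine mul_left_cancel₀ (sub_ne_zero.2 hxy) ?_
    linear_combination -sub_mul_eval_diffQuot p x y - sub_mul_eval_diffQuot p y x

lemma eval_eq_add_sub_mul (G : Polynomial ℝ) (x t : ℝ) :
    G.eval t = G.eval x +
      (t - x) * (G.derivative.eval x + (t - x) * (diffQuot (diffQuot G x) x).eval t) := by
  rw [sub_mul_eval_diffQuot, eval_diffQuot_self]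
  linear_combination -sub_mul_eval_diffQuot G x t

lemma degree_diffQuot_lt {p : Polynomial ℝ} (hp : p ≠ 0) (x : ℝ) :
    (diffQuot p x).degree < p.degree :=
  Polynomial.degree_divByMonic_lt p _ hp (by rw [Polynomial.degree_X_sub_C]; exact one_pos)

lemma degree_sq_lt_two_mul {q : Polynomial ℝ} {n : ℕ} (hq : q.degree < n) :
    (q ^ 2).degree < (2 * n : ℕ) := by
  rcases eq_or_ne q 0 with rfl | h0
  · rw [zero_pow two_ne_zero, Polynomial.degree_zero]; exact WithBot.bot_lt_coe _
  · rw [← Polynomial.natDegree_lt_iff_degree_lt (pow_ne_zero 2 h0), Polynomial.natDegree_pow]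
    have := (Polynomial.natDegree_lt_iff_degree_lt h0).2 hq
    omega

variable {Q : ℝ → ℝ} {b n : ℕ} {p : Polynomial ℝ} {z : Fin n → ℝ}

/-- `p` is an orthonormal polynomial of degree `n` for the weight `e^{-Q}`, up to sign, and the
`z k` are its `n` distinct zeros. -/
structure IsOrthonormalNodes (Q : ℝ → ℝ) (p : Polynomial ℝ) (z : Fin n → ℝ) : Prop where
  natDegree_eq : p.natDegree = n
  orthogonal : ∀ q : Polynomial ℝ, q.degree < n →
    weightedIntegral Q (fun t => p.eval t * q.eval t) = 0
  normalized : weightedIntegral Q (fun t => p.eval t ^ 2) = 1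
  injective : Function.Injective z
  eval_node : ∀ k, p.eval (z k) = 0

/-- The coefficient `A(x) = ∫ p(t)² (Q'(t) - Q'(x)) / (t - x) e^{-Q(t)} dt` of the ladder operators
of the orthogonal polynomial `p`. -/
noncomputable def ladderCoeff (Q : ℝ → ℝ) (p : Polynomial ℝ) (x : ℝ) : ℝ :=
  weightedIntegral Q fun t => p.eval t ^ 2 * dslope (deriv Q) x t

/-- The weights of Gauss quadrature on the nodes `z`. -/
noncomputable def christoffel (Q : ℝ → ℝ) (z : Fin n → ℝ) (k : Fin n) : ℝ :=
  weightedIntegral Q fun t => (Lagrange.basis Finset.univ z k).eval t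

lemma weightedIntegral_eq_sum_of_degree_lt (hQ : IsFreudExponent Q b)
    (hz : Function.Injective z) {q : Polynomial ℝ} (hq : q.degree < n) :
    weightedIntegral Q (fun t => q.eval t) = ∑ k, christoffel Q z k * q.eval (z k) := by
  rw [← Finset.card_fin n] at hq
  have hq_eval : ∀ t, q.eval t =
      ∑ k, q.eval (z k) * (Lagrange.basis Finset.univ z k).eval t := fun t => by
    conv_lhs => rw [Lagrange.eq_interpolate hz.injOn hq]
    simp only [Lagrange.interpolate_apply, Polynomial.eval_mul, Polynomial.eval_finsetSum,
      Polynomial.eval_C]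
  rw [funext hq_eval, weightedIntegral_sum hQ _ fun k =>
    (IsPolyBounded.polynomial (Lagrange.basis Finset.univ z k)).const_mul (q.eval (z k))]
  refine Finset.sum_congr rfl fun k _ => ?_
  rw [weightedIntegral_const_mul, christoffel, mul_comm]

namespace IsOrthonormalNodes

lemma ne_zero (hp : IsOrthonormalNodes Q p z) : p ≠ 0 := by
  rintro rfl
  simpa [weightedIntegral] using hp.normalized

lemma degree_eq (hp : IsOrthonormalNodes Q p z) : p.degree = n := by
  rw [Polynomial.degree_eq_natDegree hp.ne_zero, hp.natDegree_eq]

lemma degree_diffQuot_lt (hp : IsOrthonormalNodes Q p z) (x : ℝ) : (diffQuot p x).degree < n :=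
  (GrunwaldInterpolation.degree_diffQuot_lt hp.ne_zero x).trans_eq hp.degree_eq

lemma sub_mul_eval_diffQuot (hp : IsOrthonormalNodes Q p z) (k : Fin n) (x : ℝ) :
    (x - z k) * (diffQuot p (z k)).eval x = p.eval x := by
  rw [GrunwaldInterpolation.sub_mul_eval_diffQuot, hp.eval_node, sub_zero]

lemma eval_diffQuot_node_of_ne (hp : IsOrthonormalNodes Q p z) {j k : Fin n} (hjk : j ≠ k) :
    (diffQuot p (z k)).eval (z j) = 0 := by
  have h := hp.sub_mul_eval_diffQuot k (z j)
  rw [hp.eval_node] at h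
  exact (mul_eq_zero.1 h).resolve_left (sub_ne_zero.2 (hp.injective.ne hjk))

lemma diffQuot_node_eq (hp : IsOrthonormalNodes Q p z) (k : Fin n) :
    diffQuot p (z k) =
      Polynomial.C ((diffQuot p (z k)).eval (z k)) * Lagrange.basis Finset.univ z k := by
  have hdeg : (diffQuot p (z k)).degree < #(Finset.univ : Finset (Fin n)) := by
    rw [Finset.card_fin]; exact hp.degree_diffQuot_lt _
  conv_lhs => rw [Lagrange.eq_interpolate hp.injective.injOn hdeg, Lagrange.interpolate_apply]
  refine Finset.sum_eq_single k (fun j _ hj => ?_) (fun hk => absurd (Finset.mem_univ k) hk)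
  rw [hp.eval_diffQuot_node_of_ne hj, map_zero, zero_mul]

lemma eq_C_mul_nodal (hp : IsOrthonormalNodes Q p z) :
    p = Polynomial.C p.leadingCoeff * Lagrange.nodal Finset.univ z := by
  have hlead : p.leadingCoeff ≠ 0 := Polynomial.leadingCoeff_ne_zero.2 hp.ne_zero
  refine Polynomial.eq_of_degree_sub_lt_of_eval_index_eq Finset.univ hp.injective.injOn ?_ ?_
  · rw [Finset.card_fin, ← hp.degree_eq]
    refine Polynomial.degree_sub_lt_left ?_ hp.ne_zero ?_
    · rw [Polynomial.degree_C_mul hlead, Lagrange.degree_nodal, Finset.card_fin, hp.degree_eq]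
    · rw [Polynomial.leadingCoeff_mul, Polynomial.leadingCoeff_C,
        Lagrange.nodal_monic.leadingCoeff, mul_one]
  · intro k hk
    rw [hp.eval_node, Polynomial.eval_mul, Lagrange.eval_nodal_at_node hk, mul_zero]

lemma eval_eq_mul_prod (hp : IsOrthonormalNodes Q p z) (t : ℝ) :
    p.eval t = p.leadingCoeff * ∏ k, (t - z k) := by
  conv_lhs => rw [hp.eq_C_mul_nodal]
  rw [Polynomial.eval_mul, Polynomial.eval_C, Lagrange.eval_nodal]

theorem weightedIntegral_eq_sum (hQ : IsFreudExponent Q b) (hp : IsOrthonormalNodes Q p z)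
    {r : Polynomial ℝ} (hr : r.degree < (2 * n : ℕ)) :
    weightedIntegral Q (fun t => r.eval t) = ∑ k, christoffel Q z k * r.eval (z k) := by
  have hdecomp : p * (r / p) + r % p = r := EuclideanDomain.div_add_mod r p
  have hmod : (r % p).degree < n := hp.degree_eq ▸ Polynomial.degree_mod_lt r hp.ne_zero
  have hdiv : (r / p).degree < n := by
    rcases lt_or_ge r.degree p.degree with hlt | hge
    · rw [(Polynomial.div_eq_zero_iff hp.ne_zero).2 hlt, Polynomial.degree_zero]
      exact WithBot.bot_lt_coe _
    · have h := (Polynomial.degree_add_div hp.ne_zero hge).trans_lt hr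
      rw [hp.degree_eq, two_mul, Nat.cast_add] at h
      exact lt_of_add_lt_add_left h
  have hr_eval : ∀ t, r.eval t = p.eval t * (r / p).eval t + (r % p).eval t := fun t => by
    conv_lhs => rw [← hdecomp]
    rw [Polynomial.eval_add, Polynomial.eval_mul]
  simp only [hr_eval, hp.eval_node, zero_mul, zero_add]
  rw [weightedIntegral_add hQ ((IsPolyBounded.polynomial p).mul (IsPolyBounded.polynomial _))
    (IsPolyBounded.polynomial _), hp.orthogonal _ hdiv, zero_add,
    weightedIntegral_eq_sum_of_degree_lt hQ hp.injective hmod]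

lemma christoffel_pos (hQ : IsFreudExponent Q b) (hp : IsOrthonormalNodes Q p z) (k : Fin n) :
    0 < christoffel Q z k := by
  set l := Lagrange.basis Finset.univ z k with hl
  have hdeg : l.degree < n := by
    rw [hl, Lagrange.degree_basis hp.injective.injOn (Finset.mem_univ k), Finset.card_fin]
    exact_mod_cast Nat.sub_lt k.pos one_pos
  have hself : l.eval (z k) = 1 :=
    Lagrange.eval_basis_self hp.injective.injOn (Finset.mem_univ k)
  have hquad := hp.weightedIntegral_eq_sum hQ (degree_sq_lt_two_mul hdeg)
  simp only [Polynomial.eval_pow] at hquad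
  rw [Finset.sum_eq_single k (fun j _ hj => ?_) (fun hk => absurd (Finset.mem_univ k) hk), hself,
    one_pow, mul_one] at hquad
  · rw [← hquad]
    exact weightedIntegral_sq_pos hQ fun h0 => by simp [h0] at hself
  · rw [hl, Lagrange.eval_basis_of_ne hj.symm (Finset.mem_univ j), zero_pow two_ne_zero, mul_zero]

lemma weightedIntegral_diffQuot_sq_sub (hQ : IsFreudExponent Q b)
    (hp : IsOrthonormalNodes Q p z) (x : ℝ) :
    weightedIntegral Q (fun t => (diffQuot p x).eval t ^ 2 -
        deriv Q x * p.eval x * (diffQuot p x).eval t) =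
      ladderCoeff Q p x - p.eval x ^ 2 * weightedIntegral Q (dslope (deriv Q) x) := by
  set S := diffQuot p x
  set r := (Polynomial.X - Polynomial.C x) * S ^ 2 + (2 * p.eval x) • S with hr
  set u := deriv Q x • S - (2 : ℝ) • S.derivative with hu
  have hSdeg : S.degree < n := hp.degree_diffQuot_lt x
  have hudeg : u.degree < n := by
    refine (Polynomial.degree_sub_le _ _).trans_lt (max_lt ?_ ?_)
    · exact (Polynomial.degree_smul_le _ _).trans_lt hSdeg
    · exact (Polynomial.degree_smul_le _ _).trans_lt
        (Polynomial.degree_derivative_le.trans_lt hSdeg)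
  have hpoly := IsPolyBounded.polynomial
  have hident : ∀ t, S.eval t ^ 2 - deriv Q x * p.eval x * S.eval t =
      (p.eval t ^ 2 * dslope (deriv Q) x t - p.eval x ^ 2 * dslope (deriv Q) x t) +
      ((r.derivative.eval t - r.eval t * deriv Q t) + p.eval t * u.eval t) := fun t => by
    have hSt : (t - x) * S.eval t = p.eval t - p.eval x :=
      GrunwaldInterpolation.sub_mul_eval_diffQuot p x t
    have hκ : (t - x) * dslope (deriv Q) x t = deriv Q t - deriv Q x :=
      sub_smul_dslope (deriv Q) x t
    simp only [hr, hu, Polynomial.derivative_add, Polynomial.derivative_mul,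
      Polynomial.derivative_sub, Polynomial.derivative_X, Polynomial.derivative_C,
      Polynomial.derivative_smul, Polynomial.derivative_sq, Polynomial.eval_add,
      Polynomial.eval_sub, Polynomial.eval_mul, Polynomial.eval_smul, Polynomial.eval_pow,
      Polynomial.eval_X, Polynomial.eval_C, Polynomial.eval_one, Polynomial.eval_zero, smul_eq_mul]
    linear_combination ((p.eval t + p.eval x) * dslope (deriv Q) x t - 2 * S.derivative.eval t
      + S.eval t * deriv Q t) * hSt - (p.eval t + p.eval x) * S.eval t * hκ
  have hκ := hQ.isPolyBounded_dslope_deriv x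
  have hκp := ((hpoly p).pow 2).mul hκ
  have hκx := hκ.const_mul (p.eval x ^ 2)
  have hr' := (hpoly r.derivative).sub ((hpoly r).mul hQ.isPolyBounded_deriv)
  have hpu := (hpoly p).mul (hpoly u)
  rw [funext hident, weightedIntegral_add hQ (hκp.sub hκx) (hr'.add hpu),
    weightedIntegral_sub hQ hκp hκx, weightedIntegral_add hQ hr' hpu,
    weightedIntegral_derivative_sub hQ, hp.orthogonal u hudeg, weightedIntegral_const_mul,
    add_zero, add_zero, ladderCoeff]

theorem sum_christoffel_mul_diffQuot_sq_sub (hQ : IsFreudExponent Q b)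
    (hp : IsOrthonormalNodes Q p z) (x : ℝ) :
    ∑ k, christoffel Q z k * ((diffQuot p (z k)).eval x ^ 2 -
        deriv Q x * p.eval x * (diffQuot p (z k)).eval x) =
      ladderCoeff Q p x - p.eval x ^ 2 * weightedIntegral Q (dslope (deriv Q) x) := by
  have hdeg : (diffQuot p x ^ 2 - (deriv Q x * p.eval x) • diffQuot p x).degree <
      (2 * n : ℕ) := by
    have h := hp.degree_diffQuot_lt x
    refine (Polynomial.degree_sub_le _ _).trans_lt (max_lt (degree_sq_lt_two_mul h) ?_)
    refine (Polynomial.degree_smul_le _ _).trans_lt (h.trans_le ?_)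
    exact_mod_cast Nat.le_mul_of_pos_left n two_pos
  have hquad := hp.weightedIntegral_eq_sum hQ hdeg
  simp only [Polynomial.eval_sub, Polynomial.eval_pow, Polynomial.eval_smul, smul_eq_mul,
    eval_diffQuot_comm p x (z _)] at hquad
  rw [← hquad, ← hp.weightedIntegral_diffQuot_sq_sub hQ]

lemma christoffel_mul_diffQuot_node_sq (hQ : IsFreudExponent Q b)
    (hp : IsOrthonormalNodes Q p z) (k : Fin n) :
    christoffel Q z k * (diffQuot p (z k)).eval (z k) ^ 2 = ladderCoeff Q p (z k) := by
  have h := hp.sum_christoffel_mul_diffQuot_sq_sub hQ (z k)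
  simp only [hp.eval_node, mul_zero, zero_mul, sub_zero, zero_pow two_ne_zero] at h
  rw [← h, Finset.sum_eq_single k (fun j _ hj => ?_) (fun hk => absurd (Finset.mem_univ k) hk)]
  rw [hp.eval_diffQuot_node_of_ne hj.symm, zero_pow two_ne_zero, mul_zero]

theorem basis_sq_mul_ladderCoeff (hQ : IsFreudExponent Q b) (hp : IsOrthonormalNodes Q p z)
    (k : Fin n) (x : ℝ) :
    (Lagrange.basis Finset.univ z k).eval x ^ 2 * ladderCoeff Q p (z k) =
      christoffel Q z k * (diffQuot p (z k)).eval x ^ 2 := by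
  have h := congrArg (Polynomial.eval x) (hp.diffQuot_node_eq k)
  rw [Polynomial.eval_mul, Polynomial.eval_C] at h
  rw [← hp.christoffel_mul_diffQuot_node_sq hQ, h]
  ring

lemma half_radialSlope_le_ladderCoeff (hQ : IsFreudExponent Q b) (hp : IsOrthonormalNodes Q p z)
    (x : ℝ) : radialSlope Q x / 2 ≤ ladderCoeff Q p x := by
  have hsq := (IsPolyBounded.polynomial p).pow 2
  have h := weightedIntegral_mono hQ (hsq.const_mul (radialSlope Q x / 2))
    (hsq.mul (hQ.isPolyBounded_dslope_deriv x)) fun t => by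
      rw [mul_comm]
      gcongr
      linarith [hQ.half_add_le_dslope_deriv x t, hQ.radialSlope_nonneg t]
  rwa [weightedIntegral_const_mul, hp.normalized, mul_one] at h

lemma ladderCoeff_le (hQ : IsFreudExponent Q b) (hp : IsOrthonormalNodes Q p z) (x : ℝ) :
    ladderCoeff Q p x ≤
      b * (radialSlope Q x + weightedIntegral Q fun t => p.eval t ^ 2 * radialSlope Q t) := by
  have hsq := (IsPolyBounded.polynomial p).pow 2
  have hslope := hsq.mul hQ.isPolyBounded_radialSlope
  have h := weightedIntegral_mono hQ (hsq.mul (hQ.isPolyBounded_dslope_deriv x))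
    (((hsq.const_mul (radialSlope Q x)).add hslope).const_mul b) fun t => by
      linarith [mul_le_mul_of_nonneg_left (hQ.dslope_deriv_le x t) (sq_nonneg (p.eval t))]
  rwa [weightedIntegral_const_mul, weightedIntegral_add hQ (hsq.const_mul _) hslope,
    weightedIntegral_const_mul, hp.normalized, mul_one] at h

end IsOrthonormalNodes

lemma half_weightedIntegral_le_ladderCoeff (hQ : IsFreudExponent Q b) (p : Polynomial ℝ) (x : ℝ) :
    (weightedIntegral Q fun t => p.eval t ^ 2 * radialSlope Q t) / 2 ≤ ladderCoeff Q p x := by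
  have hsq := (IsPolyBounded.polynomial p).pow 2
  have h := weightedIntegral_mono hQ ((hsq.mul hQ.isPolyBounded_radialSlope).const_mul (1 / 2))
    (hsq.mul (hQ.isPolyBounded_dslope_deriv x)) fun t => by
      nlinarith [hQ.half_add_le_dslope_deriv x t, hQ.radialSlope_nonneg x, sq_nonneg (p.eval t)]
  rw [weightedIntegral_const_mul] at h
  rw [ladderCoeff]
  linarith

end

section

/-- Polynomials with nonnegative coefficients: for them Gauss quadrature on symmetric nodes is a
one-sided bound in every degree. -/
def NonnegCoeffs (K : Polynomial ℝ) : Prop := ∀ i, 0 ≤ K.coeff i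

namespace NonnegCoeffs

variable {f g : Polynomial ℝ}

lemma C {a : ℝ} (ha : 0 ≤ a) : NonnegCoeffs (Polynomial.C a) := fun i => by
  rw [Polynomial.coeff_C]; split_ifs <;> simp [ha]

lemma X_pow (n : ℕ) : NonnegCoeffs (Polynomial.X ^ n) := fun i => by
  rw [Polynomial.coeff_X_pow]; split_ifs <;> simp

lemma add (hf : NonnegCoeffs f) (hg : NonnegCoeffs g) : NonnegCoeffs (f + g) := fun i => by
  rw [Polynomial.coeff_add]; exact add_nonneg (hf i) (hg i)

lemma mul (hf : NonnegCoeffs f) (hg : NonnegCoeffs g) : NonnegCoeffs (f * g) := fun i => by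
  rw [Polynomial.coeff_mul]; exact Finset.sum_nonneg fun x _ => mul_nonneg (hf _) (hg _)

lemma pow (hf : NonnegCoeffs f) (n : ℕ) : NonnegCoeffs (f ^ n) := by
  induction n with
  | zero => rw [pow_zero, ← Polynomial.C_1]; exact C zero_le_one
  | succ n ih => simpa only [pow_succ] using ih.mul hf

lemma diffQuot (hf : NonnegCoeffs f) {x : ℝ} (hx : 0 ≤ x) : NonnegCoeffs (diffQuot f x) :=
  fun i => by
    rw [GrunwaldInterpolation.diffQuot, Polynomial.coeff_divByMonic_X_sub_C]
    exact Finset.sum_nonneg fun j _ => mul_nonneg (pow_nonneg hx _) (hf j)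

lemma eval_nonneg (hf : NonnegCoeffs f) {x : ℝ} (hx : 0 ≤ x) : 0 ≤ f.eval x := by
  rw [Polynomial.eval_eq_sum_range]
  exact Finset.sum_nonneg fun j _ => mul_nonneg (hf j) (pow_nonneg hx _)

lemma exists_eq_mul_nodal_add {ι : Type*} (s : Finset ι) {u : ι → ℝ} (hu : ∀ i, 0 ≤ u i)
    (hf : NonnegCoeffs f) :
    ∃ A R : Polynomial ℝ, NonnegCoeffs A ∧ R.degree < #s ∧ f = A * Lagrange.nodal s u + R := by
  classical
  induction s using Finset.induction_on with
  | empty => exact ⟨f, 0, hf, by simp, by simp⟩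
  | insert a s ha ih =>
    obtain ⟨A, R, hA, hR, hfAR⟩ := ih
    have hlt : (#s : WithBot ℕ) < #(insert a s) := by
      rw [Finset.card_insert_of_notMem ha]; exact_mod_cast Nat.lt_succ_self _
    refine ⟨GrunwaldInterpolation.diffQuot A (u a), A.eval (u a) • Lagrange.nodal s u + R,
      hA.diffQuot (hu a), ?_, ?_⟩
    · refine (Polynomial.degree_add_le _ _).trans_lt (max_lt ?_ (hR.trans hlt))
      exact ((Polynomial.degree_smul_le _ _).trans_eq Lagrange.degree_nodal).trans_lt hlt
    · conv_lhs => rw [hfAR, ← C_add_mul_diffQuot A (u a)]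
      rw [Lagrange.nodal_insert_eq_nodal ha, Polynomial.smul_eq_C_mul]
      ring

end NonnegCoeffs

variable {Q : ℝ → ℝ} {b n : ℕ} {p : Polynomial ℝ} {z : Fin n → ℝ}

namespace IsOrthonormalNodes

lemma eq_of_orthogonal (hQ : IsFreudExponent Q b) (hp : IsOrthonormalNodes Q p z)
    {q : Polynomial ℝ} (hdeg : (p - q).degree < n)
    (hq : ∀ r : Polynomial ℝ, r.degree < n →
      weightedIntegral Q (fun t => q.eval t * r.eval t) = 0) : p = q := by
  by_contra hpq
  have hpos := weightedIntegral_sq_pos hQ (sub_ne_zero.2 hpq)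
  have hpoly := IsPolyBounded.polynomial
  have hsplit : ∀ t, (p - q).eval t ^ 2 =
      p.eval t * (p - q).eval t - q.eval t * (p - q).eval t := fun t => by
    rw [Polynomial.eval_sub]; ring
  rw [funext hsplit, weightedIntegral_sub hQ ((hpoly p).mul (hpoly _)) ((hpoly q).mul (hpoly _)),
    hp.orthogonal _ hdeg, hq _ hdeg, sub_zero] at hpos
  exact lt_irrefl _ hpos

lemma eval_neg (hQ : IsFreudExponent Q b) (hp : IsOrthonormalNodes Q p z) (t : ℝ) :
    p.eval (-t) = (-1) ^ n * p.eval t := by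
  have hreflect : p = (-1 : ℝ) ^ n • p.comp (Polynomial.C (-1) * Polynomial.X) := by
    refine hp.eq_of_orthogonal hQ ?_ fun r hr => ?_
    · refine (Polynomial.degree_lt_iff_coeff_zero _ _).2 fun m hm => ?_
      rw [Polynomial.coeff_sub, Polynomial.coeff_smul, Polynomial.comp_C_mul_X_coeff,
        smul_eq_mul]
      rcases hm.eq_or_lt with rfl | hlt
      · rw [mul_left_comm, ← pow_add, (Even.add_self n).neg_one_pow, mul_one, sub_self]
      · rw [Polynomial.coeff_eq_zero_of_natDegree_lt (hp.natDegree_eq.trans_lt hlt), zero_mul,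
          mul_zero, sub_zero]
    · have hr' : (r.comp (Polynomial.C (-1) * Polynomial.X)).degree < n := by
        refine (Polynomial.degree_lt_iff_coeff_zero _ _).2 fun m hm => ?_
        rw [Polynomial.comp_C_mul_X_coeff, (Polynomial.degree_lt_iff_coeff_zero _ _).1 hr m hm,
          zero_mul]
      have horth := hp.orthogonal _ hr'
      rw [← weightedIntegral_comp_neg hQ] at horth
      simp only [Polynomial.eval_comp, Polynomial.eval_mul, Polynomial.eval_C, Polynomial.eval_X,
        neg_one_mul, neg_neg] at horth
      simp only [Polynomial.eval_smul, Polynomial.eval_comp, Polynomial.eval_mul,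
        Polynomial.eval_C, Polynomial.eval_X, smul_eq_mul, neg_one_mul, mul_assoc,
        weightedIntegral_const_mul, horth, mul_zero]
  conv_lhs => rw [hreflect]
  simp only [Polynomial.eval_smul, Polynomial.eval_comp, Polynomial.eval_mul, Polynomial.eval_C,
    Polynomial.eval_X, neg_one_mul, neg_neg, smul_eq_mul]

lemma eval_sq_eq_mul_prod (hQ : IsFreudExponent Q b) (hp : IsOrthonormalNodes Q p z) (t : ℝ) :
    p.eval t ^ 2 = p.leadingCoeff ^ 2 * ∏ k, (t ^ 2 - z k ^ 2) := by
  have hneg : ∏ k, (-t - z k) = (-1) ^ n * ∏ k, (t + z k) := by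
    have : ∏ _k : Fin n, (-1 : ℝ) = (-1) ^ n := by rw [Finset.prod_const, Finset.card_fin]
    rw [← this, ← Finset.prod_mul_distrib]
    exact Finset.prod_congr rfl fun k _ => by ring
  have hprod : ∏ k, (t ^ 2 - z k ^ 2) = (∏ k, (t + z k)) * ∏ k, (t - z k) := by
    rw [← Finset.prod_mul_distrib]
    exact Finset.prod_congr rfl fun k _ => sq_sub_sq t (z k)
  have hparity := hp.eval_neg hQ t
  rw [hp.eval_eq_mul_prod (-t), hneg] at hparity
  have hplus : p.eval t = p.leadingCoeff * ∏ k, (t + z k) :=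
    mul_left_cancel₀ (pow_ne_zero n (neg_ne_zero.2 one_ne_zero)) (by linear_combination -hparity)
  rw [hprod, sq]
  nth_rw 2 [hp.eval_eq_mul_prod t]
  rw [hplus]
  ring

lemma exists_pow_eq_mul_sq_add (hQ : IsFreudExponent Q b) (hp : IsOrthonormalNodes Q p z)
    (j : ℕ) : ∃ A R : Polynomial ℝ, NonnegCoeffs A ∧ R.degree < n ∧
      ∀ t : ℝ, (t ^ 2) ^ j = A.eval (t ^ 2) * p.eval t ^ 2 + R.eval (t ^ 2) := by
  obtain ⟨A, R, hA, hR, hX⟩ := (NonnegCoeffs.X_pow j).exists_eq_mul_nodal_add Finset.univ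
    (u := fun k => z k ^ 2) fun k => sq_nonneg _
  rw [Finset.card_fin] at hR
  have hlead : p.leadingCoeff ^ 2 ≠ 0 :=
    pow_ne_zero 2 (Polynomial.leadingCoeff_ne_zero.2 hp.ne_zero)
  refine ⟨Polynomial.C (p.leadingCoeff ^ 2)⁻¹ * A, R, .mul (.C (by positivity)) hA, hR,
    fun t => ?_⟩
  have h := congrArg (Polynomial.eval (t ^ 2)) hX
  rw [Polynomial.eval_pow, Polynomial.eval_X, Polynomial.eval_add, Polynomial.eval_mul,
    Lagrange.eval_nodal] at h
  rw [h, hp.eval_sq_eq_mul_prod hQ, Polynomial.eval_mul, Polynomial.eval_C]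
  linear_combination (-A.eval (t ^ 2) * ∏ k, (t ^ 2 - z k ^ 2)) * inv_mul_cancel₀ hlead

lemma sum_christoffel_mul_pow_le (hQ : IsFreudExponent Q b) (hp : IsOrthonormalNodes Q p z)
    (i : ℕ) : ∑ k, christoffel Q z k * z k ^ i ≤ weightedIntegral Q fun t => t ^ i := by
  obtain ⟨A, R, hA, hR, hdecomp⟩ := hp.exists_pow_eq_mul_sq_add hQ (i / 2)
  set r := Polynomial.X ^ (i % 2) * R.comp (Polynomial.X ^ 2) with hr
  have hr_eval : ∀ t : ℝ, r.eval t = t ^ (i % 2) * R.eval (t ^ 2) := fun t => by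
    simp only [hr, Polynomial.eval_mul, Polynomial.eval_comp, Polynomial.eval_pow,
      Polynomial.eval_X]
  have hpow : ∀ t : ℝ, t ^ i = t ^ (i % 2) * (A.eval (t ^ 2) * p.eval t ^ 2) + r.eval t :=
    fun t => by
      rw [hr_eval, ← mul_add, ← hdecomp, ← pow_mul, ← pow_add, Nat.mod_add_div]
  have hr_deg : r.degree < (2 * n : ℕ) := by
    rcases eq_or_ne R 0 with rfl | hR0
    · simp only [hr, Polynomial.zero_comp, mul_zero, Polynomial.degree_zero]
      exact WithBot.bot_lt_coe _
    · have hR' := (Polynomial.natDegree_lt_iff_degree_lt hR0).2 hR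
      refine (Polynomial.degree_le_natDegree).trans_lt (Nat.cast_lt.2 ?_)
      have := Polynomial.natDegree_mul_le (p := Polynomial.X ^ (i % 2))
        (q := R.comp (Polynomial.X ^ 2))
      rw [Polynomial.natDegree_X_pow, Polynomial.natDegree_comp, Polynomial.natDegree_X_pow,
        ← hr] at this
      have := Nat.mod_lt i two_pos
      omega
  have hmain : IsPolyBounded fun t => t ^ (i % 2) * (A.eval (t ^ 2) * p.eval t ^ 2) := by
    refine (IsPolyBounded.id.pow _).mul (.mul ?_ ((IsPolyBounded.polynomial p).pow 2))
    have := IsPolyBounded.polynomial (A.comp (Polynomial.X ^ 2))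
    simpa only [Polynomial.eval_comp, Polynomial.eval_pow, Polynomial.eval_X] using this
  have hnonneg : 0 ≤ weightedIntegral Q
      fun t => t ^ (i % 2) * (A.eval (t ^ 2) * p.eval t ^ 2) := by
    rcases Nat.mod_two_eq_zero_or_one i with h | h <;> rw [h]
    · exact weightedIntegral_nonneg fun t => mul_nonneg (zero_le_one.trans_eq (pow_zero t).symm)
        (mul_nonneg (hA.eval_nonneg (sq_nonneg t)) (sq_nonneg _))
    · refine (weightedIntegral_eq_zero_of_odd hQ fun t => ?_).ge
      simp only [pow_one, neg_sq, hp.eval_sq_eq_mul_prod hQ, neg_mul]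
  simp only [hpow, hp.eval_node, zero_pow two_ne_zero, mul_zero, zero_add]
  rw [weightedIntegral_add hQ hmain (IsPolyBounded.polynomial r),
    hp.weightedIntegral_eq_sum hQ hr_deg]
  exact le_add_of_nonneg_left hnonneg

theorem sum_christoffel_mul_eval_le (hQ : IsFreudExponent Q b) (hp : IsOrthonormalNodes Q p z)
    {K : Polynomial ℝ} (hK : NonnegCoeffs K) :
    ∑ k, christoffel Q z k * K.eval (z k) ≤ weightedIntegral Q fun t => K.eval t := by
  simp only [Polynomial.eval_eq_sum_range, Finset.mul_sum]
  rw [Finset.sum_comm, weightedIntegral_sum hQ _ fun i =>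
    (IsPolyBounded.id.pow i).const_mul (K.coeff i)]
  refine Finset.sum_le_sum fun i _ => ?_
  simp only [weightedIntegral_const_mul, mul_left_comm _ (K.coeff i), ← Finset.mul_sum]
  exact mul_le_mul_of_nonneg_left (hp.sum_christoffel_mul_pow_le hQ i) (hK i)

lemma sum_christoffel_mul_diffQuot_sq (hQ : IsFreudExponent Q b)
    (hp : IsOrthonormalNodes Q p z) {x : ℝ} {G : Polynomial ℝ}
    (hG : G.derivative.eval x = deriv Q x * G.eval x) :
    ∑ k, christoffel Q z k * G.eval (z k) * (diffQuot p (z k)).eval x ^ 2 =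
      G.eval x * (ladderCoeff Q p x - p.eval x ^ 2 * weightedIntegral Q (dslope (deriv Q) x)) +
        p.eval x ^ 2 * ∑ k, christoffel Q z k * (diffQuot (diffQuot G x) x).eval (z k) := by
  rw [← hp.sum_christoffel_mul_diffQuot_sq_sub hQ, Finset.mul_sum, Finset.mul_sum,
    ← Finset.sum_add_distrib]
  refine Finset.sum_congr rfl fun k _ => ?_
  rw [eval_eq_add_sub_mul G x (z k), hG, ← hp.sub_mul_eval_diffQuot k x]
  ring

end IsOrthonormalNodes

lemma integrableOn_Iic_deriv_of_nonneg {F v : ℝ → ℝ} {x m : ℝ} (hF : Continuous F)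
    (hderiv : ∀ t < x, HasDerivAt F (v t) t) (hv : ∀ t, 0 ≤ v t)
    (hm : Tendsto F atBot (nhds m)) : IntegrableOn v (Set.Iic x) := by
  have hreflect : IntegrableOn (fun s => v (-s)) (Set.Ioi (-x)) := by
    refine integrableOn_Ioi_deriv_of_nonneg (g := fun s => -F (-s)) (l := -m)
      (hF.comp continuous_neg).neg.continuousWithinAt (fun s hs => ?_) (fun s _ => hv _)
      (hm.comp tendsto_neg_atTop_atBot).neg
    have := (hderiv (-s) (neg_lt.1 hs)).comp s (hasDerivAt_neg s)
    exact this.neg.congr_deriv (by ring)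
  have hpre : (Neg.neg : ℝ → ℝ) ⁻¹' Set.Iio x = Set.Ioi (-x) := by
    ext t; exact neg_lt (a := t) (b := x)
  rw [integrableOn_Iic_iff_integrableOn_Iio,
    ← (Measure.measurePreserving_neg volume).integrableOn_comp_preimage
      (Homeomorph.neg ℝ).measurableEmbedding, hpre]
  exact hreflect

lemma integral_deriv_of_nonneg {F v : ℝ → ℝ} {x l m : ℝ} (hF : Continuous F)
    (hderiv : ∀ t, t ≠ x → HasDerivAt F (v t) t) (hv : ∀ t, 0 ≤ v t)
    (hl : Tendsto F atTop (nhds l)) (hm : Tendsto F atBot (nhds m)) :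
    Integrable v ∧ ∫ t, v t = l - m := by
  have hIoi : IntegrableOn v (Set.Ioi x) :=
    integrableOn_Ioi_deriv_of_nonneg hF.continuousWithinAt (fun t ht => hderiv t (ne_of_gt ht))
      (fun t _ => hv t) hl
  have hIic : IntegrableOn v (Set.Iic x) :=
    integrableOn_Iic_deriv_of_nonneg hF (fun t ht => hderiv t ht.ne) hv hm
  refine ⟨integrableOn_univ.1 (Set.Iic_union_Ioi (a := x) ▸ hIic.union hIoi), ?_⟩
  rw [← intervalIntegral.integral_Iic_add_Ioi hIic hIoi,
    integral_Iic_of_hasDerivAt_of_tendsto hF.continuousWithinAt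
      (fun t ht => hderiv t (ne_of_lt ht)) hIic hm,
    integral_Ioi_of_hasDerivAt_of_tendsto hF.continuousWithinAt
      (fun t ht => hderiv t (ne_of_gt ht)) hIoi hl]
  ring

end

/-! ### The defect identity -/

section

lemma tendsto_dslope_cocompact {f : ℝ → ℝ} {l : Filter ℝ} (hl : l ≤ cocompact ℝ) {y : ℝ}
    (hf : Tendsto f l (nhds y)) (x : ℝ) : Tendsto (dslope f x) l (nhds 0) := by
  have hne : ∀ᶠ t in l, t ≠ x := hl (isCompact_singleton (x := x)).compl_mem_cocompact
  have hinv : Tendsto (fun t => (t - x)⁻¹) l (nhds 0) :=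
    (tendsto_inv₀_cobounded.comp ((tendsto_sub_const_cobounded x).mono_left
      (hl.trans_eq Metric.cobounded_eq_cocompact.symm)))
  have hslope := hinv.mul (hf.sub_const (f x))
  rw [zero_mul] at hslope
  refine hslope.congr' ?_
  filter_upwards [hne] with t ht
  rw [dslope_of_ne _ ht, slope_def_field, div_eq_inv_mul]

lemma hasDerivAt_dslope_of_ne {f : ℝ → ℝ} {f' x t : ℝ} (hf : HasDerivAt f f' t) (ht : t ≠ x) :
    HasDerivAt (dslope f x) ((f' - dslope f x t) / (t - x)) t := by
  have ht' : t - x ≠ 0 := sub_ne_zero.2 ht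
  have hquot : HasDerivAt (fun s => (f s - f x) / (s - x))
      ((f' * (t - x) - (f t - f x) * 1) / (t - x) ^ 2) t :=
    (hf.sub_const (f x)).div ((hasDerivAt_id t).sub_const x) ht'
  refine (hquot.congr_of_eventuallyEq ?_).congr_deriv ?_
  · filter_upwards [isOpen_ne.mem_nhds ht] with s hs
    rw [dslope_of_ne _ hs, slope_def_field]
  · rw [dslope_of_ne _ ht, slope_def_field]
    field_simp

variable {Q : ℝ → ℝ} {b n : ℕ} {p G : Polynomial ℝ} {z : Fin n → ℝ} {x : ℝ}

/-- The weighted polynomial `G e^{-Q}`. -/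
noncomputable def weightedEval (Q : ℝ → ℝ) (G : Polynomial ℝ) (t : ℝ) : ℝ :=
  G.eval t * exp (-Q t)

/-- `(φ(x) - φ(t)) / (t - x)²` for `φ = G e^{-Q}`; it is nonnegative when `φ` peaks at `x`. -/
noncomputable def peakDefect (Q : ℝ → ℝ) (G : Polynomial ℝ) (x t : ℝ) : ℝ :=
  (weightedEval Q G x - weightedEval Q G t) / (t - x) ^ 2

/-- The weighted polynomial `G e^{-Q}` is maximal at `x`. -/
def PeaksAt (Q : ℝ → ℝ) (G : Polynomial ℝ) (x : ℝ) : Prop :=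
  ∀ t, weightedEval Q G t ≤ weightedEval Q G x

namespace IsFreudExponent

lemma hasDerivAt_exp_neg (hQ : IsFreudExponent Q b) (t : ℝ) :
    HasDerivAt (fun t => exp (-Q t)) (-deriv Q t * exp (-Q t)) t :=
  (hQ.hasDerivAt t).neg.exp.congr_deriv (mul_comm _ _)

lemma continuous_exp_neg (hQ : IsFreudExponent Q b) : Continuous fun t => exp (-Q t) :=
  continuous_exp.comp hQ.continuous.neg

end IsFreudExponent

namespace PeaksAt

lemma eval_derivative (hQ : IsFreudExponent Q b) (hG : PeaksAt Q G x) :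
    G.derivative.eval x = deriv Q x * G.eval x := by
  have hmax : IsLocalMax (weightedEval Q G) x := Eventually.of_forall hG
  have hzero := hmax.hasDerivAt_eq_zero ((G.hasDerivAt x).mul (hQ.hasDerivAt_exp_neg x))
  have : (G.derivative.eval x - deriv Q x * G.eval x) * exp (-Q x) = 0 := by
    linear_combination hzero
  exact sub_eq_zero.1 ((mul_eq_zero.1 this).resolve_right (exp_ne_zero _))

lemma peakDefect_nonneg (hG : PeaksAt Q G x) (t : ℝ) : 0 ≤ peakDefect Q G x t :=
  div_nonneg (sub_nonneg.2 (hG t)) (sq_nonneg _)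

lemma peakDefect_eq (hQ : IsFreudExponent Q b) (hG : PeaksAt Q G x) {t : ℝ} (ht : t ≠ x) :
    peakDefect Q G x t =
      G.eval x * ((-deriv Q t * exp (-Q t) - dslope (fun s => exp (-Q s)) x t) / (t - x)) -
        ((diffQuot (diffQuot G x) x).eval t - G.eval x * dslope (deriv Q) x t) * exp (-Q t) := by
  have ht' : t - x ≠ 0 := sub_ne_zero.2 ht
  rw [peakDefect, weightedEval, weightedEval, eval_eq_add_sub_mul G x t, hG.eval_derivative hQ,
    dslope_of_ne _ ht, dslope_of_ne _ ht, slope_def_field, slope_def_field]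
  field_simp
  ring

/-- The defect is the derivative of `G(x) (e^{-Q} - e^{-Q(x)}) / (t - x)`, which vanishes at
infinity, minus an integrable function. -/
lemma integral_peakDefect (hQ : IsFreudExponent Q b) (hG : PeaksAt Q G x) :
    Integrable (peakDefect Q G x) ∧
      ∫ t, peakDefect Q G x t = G.eval x * weightedIntegral Q (dslope (deriv Q) x) -
        weightedIntegral Q fun t => (diffQuot (diffQuot G x) x).eval t := by
  have hslope := (hQ.isPolyBounded_dslope_deriv x).const_mul (G.eval x)
  have hquot := IsPolyBounded.polynomial (diffQuot (diffQuot G x) x)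
  set ψ : ℝ → ℝ := fun t =>
    ((diffQuot (diffQuot G x) x).eval t - G.eval x * dslope (deriv Q) x t) * exp (-Q t)
  have hψ_cont : Continuous ψ := (hquot.sub hslope).1.mul hQ.continuous_exp_neg
  have hψ_int : Integrable ψ := (hquot.sub hslope).integrable hQ
  have hprim : ∀ t, HasDerivAt (fun u => ∫ s in x..u, ψ s) (ψ t) t := fun t =>
    hψ_cont.integral_hasStrictDerivAt x t |>.hasDerivAt
  have hD_cont : Continuous (dslope (fun s => exp (-Q s)) x) :=
    continuousOn_univ.1 <| (continuousOn_dslope univ_mem).2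
      ⟨hQ.continuous_exp_neg.continuousOn, (hQ.hasDerivAt_exp_neg x).differentiableAt⟩
  have hD_lim := fun {l : Filter ℝ} (hl : l ≤ cocompact ℝ) =>
    (tendsto_dslope_cocompact hl (hQ.tendsto_exp_neg.mono_left hl) x).const_mul (G.eval x)
  have hbot := (hD_lim atBot_le_cocompact).sub
    (intervalIntegral_tendsto_integral_Iic x hψ_int.integrableOn tendsto_id).neg
  have htop := (hD_lim atTop_le_cocompact).sub
    (intervalIntegral_tendsto_integral_Ioi x hψ_int.integrableOn tendsto_id)
  simp only [id, ← intervalIntegral.integral_symm] at hbot htop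
  obtain ⟨h_int, heq⟩ := integral_deriv_of_nonneg
    ((hD_cont.const_mul (G.eval x)).sub (continuous_iff_continuousAt.2 fun t =>
      (hprim t).continuousAt))
    (fun t ht => (((hasDerivAt_dslope_of_ne (hQ.hasDerivAt_exp_neg t) ht).const_mul
      (G.eval x)).sub (hprim t)).congr_deriv (hG.peakDefect_eq hQ ht).symm)
    hG.peakDefect_nonneg htop hbot
  refine ⟨h_int, ?_⟩
  have hψ_eq : ∫ t, ψ t = _ := weightedIntegral_sub hQ hquot hslope
  rw [← intervalIntegral.integral_Iic_add_Ioi (b := x) hψ_int.integrableOn hψ_int.integrableOn,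
    weightedIntegral_const_mul] at hψ_eq
  linarith

end PeaksAt

namespace IsOrthonormalNodes

theorem sum_christoffel_mul_diffQuot_sq_le (hQ : IsFreudExponent Q b)
    (hp : IsOrthonormalNodes Q p z) (hx : 0 ≤ x) (hG_nonneg : NonnegCoeffs G)
    (hG : PeaksAt Q G x) :
    ∑ k, christoffel Q z k * G.eval (z k) * (diffQuot p (z k)).eval x ^ 2 ≤
      G.eval x * ladderCoeff Q p x - p.eval x ^ 2 * ∫ t, peakDefect Q G x t := by
  rw [hp.sum_christoffel_mul_diffQuot_sq hQ (hG.eval_derivative hQ), (hG.integral_peakDefect hQ).2]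
  have := mul_le_mul_of_nonneg_left
    (hp.sum_christoffel_mul_eval_le hQ ((hG_nonneg.diffQuot hx).diffQuot hx))
    (sq_nonneg (p.eval x))
  linarith

theorem sum_christoffel_mul_diffQuot_sq_eq (hQ : IsFreudExponent Q b)
    (hp : IsOrthonormalNodes Q p z) (hdeg : (diffQuot (diffQuot G x) x).degree < (2 * n : ℕ))
    (hG : PeaksAt Q G x) :
    ∑ k, christoffel Q z k * G.eval (z k) * (diffQuot p (z k)).eval x ^ 2 =
      G.eval x * ladderCoeff Q p x - p.eval x ^ 2 * ∫ t, peakDefect Q G x t := by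
  rw [hp.sum_christoffel_mul_diffQuot_sq hQ (hG.eval_derivative hQ),
    (hG.integral_peakDefect hQ).2, ← hp.weightedIntegral_eq_sum hQ hdeg]
  ring

end IsOrthonormalNodes

end

/-! ### Polynomial approximation of the exponential -/

section

lemma one_add_mul_le_exp {y : ℝ} (hy : -1 ≤ y) : (1 + y) * (1 + y ^ 2 / 16) ≤ exp y := by
  have hpow : (1 + y / 4) ^ 4 ≤ exp (y / 4) ^ 4 :=
    pow_le_pow_left₀ (by linarith) (by linarith [add_one_le_exp (y / 4)]) 4
  rw [← exp_nat_mul, Nat.cast_ofNat, mul_div_cancel₀ y four_ne_zero] at hpow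
  nlinarith [sq_nonneg y, sq_nonneg (y ^ 2)]

lemma exp_sub_two_mul_sq_le {y : ℝ} (hy : -(1 / 2) ≤ y) : exp (y - 2 * y ^ 2) ≤ 1 + y := by
  have hpos : 0 < 1 + y := by linarith
  rw [← le_log_iff_exp_le hpos]
  refine le_trans ?_ (one_sub_inv_le_log_of_pos hpos)
  rw [← mul_le_mul_iff_left₀ hpos, sub_mul 1, inv_mul_cancel₀ hpos.ne']
  nlinarith [mul_nonneg (sq_nonneg y) (by linarith : 0 ≤ 1 + 2 * y)]

variable {Q : ℝ → ℝ} {b : ℕ} {x t : ℝ}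

/-- The exponent of the polynomial `expApprox Q x`, comparable to `1 + x Q'(x)`. -/
noncomputable def expApproxOrder (Q : ℝ → ℝ) (x : ℝ) : ℕ := ⌊eulerDeriv Q x⌋₊ + 1

/-- The increment of the base of `expApprox Q x` per unit of `t²`, chosen so that the derivative of
`expApprox Q x` at `x` is `Q'(x)`. -/
noncomputable def expApproxStep (Q : ℝ → ℝ) (x : ℝ) : ℝ :=
  radialSlope Q x / (2 * expApproxOrder Q x)

/-- The polynomial `(1 + η (t² - x²)) ^ J`, with step `η` and exponent `J` as above, a substitute
for `e^{Q(t) - Q(x)}` near `x`. -/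
noncomputable def expApprox (Q : ℝ → ℝ) (x : ℝ) : Polynomial ℝ :=
  (Polynomial.C (1 - expApproxStep Q x * x ^ 2) +
    Polynomial.C (expApproxStep Q x) * Polynomial.X ^ 2) ^ expApproxOrder Q x

lemma one_le_expApproxOrder (Q : ℝ → ℝ) (x : ℝ) : (1 : ℝ) ≤ expApproxOrder Q x :=
  Nat.one_le_cast.2 (Nat.le_add_left 1 _)

lemma eulerDeriv_le_expApproxOrder (Q : ℝ → ℝ) (x : ℝ) : eulerDeriv Q x ≤ expApproxOrder Q x := by
  rw [expApproxOrder, Nat.cast_succ]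
  exact (Nat.lt_floor_add_one _).le

lemma expApproxOrder_mul_step (Q : ℝ → ℝ) (x : ℝ) :
    expApproxOrder Q x * expApproxStep Q x = radialSlope Q x / 2 := by
  have := one_le_expApproxOrder Q x
  rw [expApproxStep]
  field_simp

lemma eval_expApprox (Q : ℝ → ℝ) (x t : ℝ) :
    (expApprox Q x).eval t = (1 + expApproxStep Q x * (t ^ 2 - x ^ 2)) ^ expApproxOrder Q x := by
  simp only [expApprox, Polynomial.eval_pow, Polynomial.eval_add, Polynomial.eval_mul,
    Polynomial.eval_C, Polynomial.eval_X]
  ring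

lemma eval_expApprox_self (Q : ℝ → ℝ) (x : ℝ) : (expApprox Q x).eval x = 1 := by
  rw [eval_expApprox, sub_self, mul_zero, add_zero, one_pow]

lemma weightedEval_expApprox_self (Q : ℝ → ℝ) (x : ℝ) :
    weightedEval Q (expApprox Q x) x = exp (-Q x) := by
  rw [weightedEval, eval_expApprox_self, one_mul]

namespace IsFreudExponent

lemma expApproxOrder_le (hQ : IsFreudExponent Q b) (x : ℝ) :
    (expApproxOrder Q x : ℝ) ≤ eulerDeriv Q x + 1 := by
  rw [expApproxOrder, Nat.cast_succ]
  exact add_le_add_left (Nat.floor_le (hQ.eulerDeriv_nonneg x)) 1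

lemma expApproxStep_nonneg (hQ : IsFreudExponent Q b) (x : ℝ) : 0 ≤ expApproxStep Q x :=
  div_nonneg (hQ.radialSlope_nonneg x) (by positivity)

lemma expApproxStep_mul_sq_le (hQ : IsFreudExponent Q b) (x : ℝ) :
    expApproxStep Q x * x ^ 2 ≤ 1 / 2 := by
  have hJ := one_le_expApproxOrder Q x
  have hle := eulerDeriv_le_expApproxOrder Q x
  rw [hQ.eulerDeriv_eq] at hle
  rw [expApproxStep, div_mul_eq_mul_div, div_le_div_iff₀ (by linarith) two_pos]
  linarith

lemma neg_half_le_expApproxStep_mul (hQ : IsFreudExponent Q b) (x t : ℝ) :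
    -(1 / 2) ≤ expApproxStep Q x * (t ^ 2 - x ^ 2) := by
  linarith [hQ.expApproxStep_mul_sq_le x, mul_nonneg (hQ.expApproxStep_nonneg x) (sq_nonneg t)]

lemma nonnegCoeffs_expApprox (hQ : IsFreudExponent Q b) (x : ℝ) :
    NonnegCoeffs (expApprox Q x) :=
  .pow (.add (.C (by linarith [hQ.expApproxStep_mul_sq_le x]))
    (.mul (.C (hQ.expApproxStep_nonneg x)) (.X_pow 2))) _

lemma eval_expApprox_nonneg (hQ : IsFreudExponent Q b) (x t : ℝ) :
    0 ≤ (expApprox Q x).eval t := by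
  rw [eval_expApprox]
  exact pow_nonneg (by linarith [hQ.neg_half_le_expApproxStep_mul x t]) _

lemma weightedEval_expApprox_le (hQ : IsFreudExponent Q b) (x t : ℝ) :
    weightedEval Q (expApprox Q x) t ≤ exp (-Q x) /
      (1 + expApproxOrder Q x * (expApproxStep Q x * (t ^ 2 - x ^ 2)) ^ 2 / 16) := by
  have hQt := hQ.add_half_mul_le x t
  have hy := hQ.neg_half_le_expApproxStep_mul x t
  have hstep := expApproxOrder_mul_step Q x
  rw [weightedEval, eval_expApprox]
  set y := expApproxStep Q x * (t ^ 2 - x ^ 2) with hy_def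
  set J := expApproxOrder Q x
  have hJy : J * y = radialSlope Q x / 2 * (t ^ 2 - x ^ 2) := by rw [hy_def, ← hstep]; ring
  have hbernoulli : 1 + J * y ^ 2 / 16 ≤ (1 + y ^ 2 / 16) ^ J :=
    mul_div_assoc (J : ℝ) (y ^ 2) 16 ▸ one_add_mul_le_pow (by linarith [sq_nonneg y]) J
  have hpow : (1 + y) ^ J * (1 + y ^ 2 / 16) ^ J ≤ exp (J * y) := by
    rw [← mul_pow, exp_nat_mul]
    exact pow_le_pow_left₀ (by nlinarith [sq_nonneg y]) (one_add_mul_le_exp (by linarith)) J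
  rw [le_div_iff₀ (by positivity)]
  calc (1 + y) ^ J * exp (-Q t) * (1 + J * y ^ 2 / 16)
      ≤ (1 + y) ^ J * exp (-Q t) * (1 + y ^ 2 / 16) ^ J := by
        have : 0 ≤ 1 + y := by linarith
        gcongr
    _ = (1 + y) ^ J * (1 + y ^ 2 / 16) ^ J * exp (-Q t) := by ring
    _ ≤ exp (J * y) * exp (-Q t) := by gcongr
    _ ≤ exp (-Q x) := by rw [← exp_add, exp_le_exp]; linarith

lemma peaksAt_expApprox (hQ : IsFreudExponent Q b) (x : ℝ) : PeaksAt Q (expApprox Q x) x :=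
  fun t => (hQ.weightedEval_expApprox_le x t).trans <| by
    rw [weightedEval_expApprox_self]
    exact div_le_self (exp_pos _).le (le_add_of_nonneg_right (by positivity))

theorem exists_weightedEval_expApprox_le (hQ : IsFreudExponent Q b) : ∃ c : ℝ, 0 < c ∧
    ∀ x t, 1 ≤ x → 0 ≤ t → weightedEval Q (expApprox Q x) t ≤
      exp (-Q x) / (1 + c * curvatureScale Q x * (t - x) ^ 2) := by
  have hh1 := hQ.radialSlope_one_pos
  obtain ⟨c, hc, hR⟩ := hQ.exists_mul_curvatureScale_le_radialSlope
  refine ⟨radialSlope Q 1 / (1 + radialSlope Q 1) / 64 * c, by positivity, fun x t hx ht => ?_⟩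
  set θ := radialSlope Q 1 / (1 + radialSlope Q 1) with hθ
  have : 0 < θ := by positivity
  have hh := hQ.radialSlope_nonneg x
  have hJ := one_le_expApproxOrder Q x
  have horder : θ * expApproxOrder Q x ≤ radialSlope Q x * x ^ 2 := by
    have hle := hQ.expApproxOrder_le x
    have hge := mul_le_mul (hQ.radialSlope_one_le (hx.trans (le_abs_self x)))
      (one_le_pow₀ hx : 1 ≤ x ^ 2) zero_le_one hh
    rw [hQ.eulerDeriv_eq] at hle
    rw [hθ, div_mul_eq_mul_div, div_le_iff₀ (by linarith)]
    nlinarith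
  have hsq : x ^ 2 * (t - x) ^ 2 ≤ (t ^ 2 - x ^ 2) ^ 2 := by
    rw [show (t ^ 2 - x ^ 2) ^ 2 = (t + x) ^ 2 * (t - x) ^ 2 by ring]
    gcongr
    linarith
  have hmain : θ / 4 * radialSlope Q x * (t - x) ^ 2 ≤
      expApproxOrder Q x * (expApproxStep Q x * (t ^ 2 - x ^ 2)) ^ 2 := by
    refine le_of_mul_le_mul_left ?_ (zero_lt_one.trans_le hJ)
    calc expApproxOrder Q x * (θ / 4 * radialSlope Q x * (t - x) ^ 2)
        = θ * expApproxOrder Q x * (radialSlope Q x * (t - x) ^ 2 / 4) := by ring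
      _ ≤ radialSlope Q x * x ^ 2 * (radialSlope Q x * (t - x) ^ 2 / 4) := by gcongr
      _ = (radialSlope Q x / 2) ^ 2 * (x ^ 2 * (t - x) ^ 2) := by ring
      _ ≤ (radialSlope Q x / 2) ^ 2 * (t ^ 2 - x ^ 2) ^ 2 := by gcongr
      _ = _ := by rw [← expApproxOrder_mul_step]; ring
  have hcurv : θ / 64 * c * curvatureScale Q x * (t - x) ^ 2 ≤
      θ / 64 * radialSlope Q x * (t - x) ^ 2 := by
    rw [mul_assoc (θ / 64)]
    gcongr
    exact hR x (hx.trans (le_abs_self x))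
  have := hQ.curvatureScale_pos x
  refine (hQ.weightedEval_expApprox_le x t).trans ?_
  gcongr
  linarith

lemma expApproxOrder_mul_sq_le (hQ : IsFreudExponent Q b) (htx : (t - x) ^ 2 ≤ 1 / 4) :
    expApproxOrder Q x * (expApproxStep Q x * (t ^ 2 - x ^ 2)) ^ 2 ≤
      (2 + (1 + radialSlope Q 1) / 8) * (radialSlope Q x * (t - x) ^ 2) := by
  have hJ := one_le_expApproxOrder Q x
  have hh := hQ.radialSlope_nonneg x
  have hh1 := hQ.radialSlope_one_pos
  have heuler := eulerDeriv_le_expApproxOrder Q x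
  rw [hQ.eulerDeriv_eq] at heuler
  have hslope : radialSlope Q x ≤ (1 + radialSlope Q 1) * expApproxOrder Q x := by
    rcases le_total 1 |x| with hx | hx
    · have : 1 ≤ x ^ 2 := (one_le_sq_iff_one_le_abs x).2 hx
      nlinarith
    · have : radialSlope Q x ≤ radialSlope Q 1 :=
        hQ.radialSlope_le_of_abs_le (by rwa [abs_one])
      nlinarith
  have hsum : (t + x) ^ 2 ≤ 8 * x ^ 2 + 1 / 2 := by
    nlinarith [sq_nonneg (2 * x - (t - x))]
  refine le_of_mul_le_mul_left ?_ (zero_lt_one.trans_le hJ)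
  calc expApproxOrder Q x *
        (expApproxOrder Q x * (expApproxStep Q x * (t ^ 2 - x ^ 2)) ^ 2)
      = (radialSlope Q x / 2) ^ 2 * ((t + x) ^ 2 * (t - x) ^ 2) := by
        rw [← expApproxOrder_mul_step]; ring
    _ ≤ (radialSlope Q x / 2) ^ 2 * ((8 * x ^ 2 + 1 / 2) * (t - x) ^ 2) := by gcongr
    _ = (2 * (radialSlope Q x * x ^ 2) + radialSlope Q x / 8) *
          (radialSlope Q x * (t - x) ^ 2) := by ring
    _ ≤ (2 * expApproxOrder Q x + (1 + radialSlope Q 1) * expApproxOrder Q x / 8) *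
          (radialSlope Q x * (t - x) ^ 2) := by gcongr
    _ = _ := by ring

theorem exists_le_weightedEval_expApprox (hQ : IsFreudExponent Q b) : ∃ C : ℝ, 1 ≤ C ∧
    ∀ x t, curvatureScale Q x * (t - x) ^ 2 ≤ 1 / 4 →
      exp (-Q x) * exp (-(C * (curvatureScale Q x * (t - x) ^ 2))) ≤
        weightedEval Q (expApprox Q x) t := by
  obtain ⟨C, hC1, hC⟩ := hQ.exists_le_add_mul_sq
  have hh1 := hQ.radialSlope_one_pos
  refine ⟨C + 2 * (2 + (1 + radialSlope Q 1) / 8), by linarith, fun x t hxt => ?_⟩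
  have hh := hQ.radialSlope_nonneg x
  have hsq : (t - x) ^ 2 ≤ 1 / 4 :=
    (le_mul_of_one_le_left (sq_nonneg _) (hQ.one_le_curvatureScale x)).trans hxt
  have hQt := hC x t (abs_le_of_sq_le_sq (hsq.trans (by norm_num)) zero_le_one)
  have hJy := hQ.expApproxOrder_mul_sq_le hsq
  have hscale : (2 + (1 + radialSlope Q 1) / 8) * (radialSlope Q x * (t - x) ^ 2) ≤
      (2 + (1 + radialSlope Q 1) / 8) * (curvatureScale Q x * (t - x) ^ 2) := by
    gcongr
    exact le_add_of_nonneg_left zero_le_one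
  have hstep := expApproxOrder_mul_step Q x
  rw [weightedEval, eval_expApprox]
  set J := expApproxOrder Q x
  set y := expApproxStep Q x * (t ^ 2 - x ^ 2) with hy
  have hlinear : deriv Q x * (t - x) ≤ J * y := by
    have : J * y = deriv Q x * (t - x) + radialSlope Q x / 2 * (t - x) ^ 2 := by
      rw [hy, hQ.deriv_eq]; linear_combination (t ^ 2 - x ^ 2) * hstep
    linarith [mul_nonneg hh (sq_nonneg (t - x))]
  calc exp (-Q x) * exp (-((C + 2 * (2 + (1 + radialSlope Q 1) / 8)) *
        (curvatureScale Q x * (t - x) ^ 2)))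
      ≤ exp (J * (y - 2 * y ^ 2)) * exp (-Q t) := by
        rw [← exp_add, ← exp_add, exp_le_exp]
        linarith
    _ ≤ (1 + y) ^ J * exp (-Q t) := by
        rw [exp_nat_mul]
        gcongr
        exact exp_sub_two_mul_sq_le (hQ.neg_half_le_expApproxStep_mul x t)

end IsFreudExponent

end

section

lemma integrable_inv_one_add_mul_sq {r : ℝ} (hr : 0 < r) (x : ℝ) :
    Integrable fun t : ℝ => (1 + r * (t - x) ^ 2)⁻¹ := by
  have := (integrable_inv_one_add_sq.comp_mul_left' (sqrt_pos.2 hr).ne').comp_sub_right x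
  simpa only [mul_pow, sq_sqrt hr.le] using this

lemma integral_inv_one_add_mul_sq {r : ℝ} (hr : 0 < r) (x : ℝ) :
    ∫ t : ℝ, (1 + r * (t - x) ^ 2)⁻¹ = π / √r := by
  have hscale := Measure.integral_comp_mul_left (fun u : ℝ => (1 + u ^ 2)⁻¹) √r
  simp only [mul_pow, sq_sqrt hr.le] at hscale
  rw [integral_sub_right_eq_self (fun u : ℝ => (1 + r * u ^ 2)⁻¹) x, hscale,
    integral_univ_inv_one_add_sq, smul_eq_mul, abs_of_pos (inv_pos.2 (sqrt_pos.2 hr)),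
    inv_mul_eq_div]

lemma mul_le_integral_of_forall_mem_Ioc {v : ℝ → ℝ} (hv : Integrable v) (hv_nonneg : ∀ t, 0 ≤ v t)
    {a l m : ℝ} (hl : 0 ≤ l) (hm : ∀ t ∈ Set.Ioc a (a + l), m ≤ v t) : m * l ≤ ∫ t, v t := by
  have hset : ∫ _ in Set.Ioc a (a + l), m ≤ ∫ t in Set.Ioc a (a + l), v t :=
    setIntegral_mono_on (by simp) hv.integrableOn measurableSet_Ioc hm
  have hconst : ∫ _ in Set.Ioc a (a + l), m = m * l := by simp [hl, mul_comm]
  exact hconst ▸ hset.trans (setIntegral_le_integral hv (Eventually.of_forall hv_nonneg))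

variable {Q : ℝ → ℝ} {b n : ℕ} {p : Polynomial ℝ} {z : Fin n → ℝ} {x : ℝ}

lemma eval_expApprox_neg (Q : ℝ → ℝ) (x t : ℝ) :
    (expApprox Q x).eval (-t) = (expApprox Q x).eval t := by
  rw [eval_expApprox, eval_expApprox, neg_sq]

namespace IsFreudExponent

lemma weightedEval_expApprox_neg (hQ : IsFreudExponent Q b) (x t : ℝ) :
    weightedEval Q (expApprox Q x) (-t) = weightedEval Q (expApprox Q x) t := by
  rw [weightedEval, weightedEval, eval_expApprox_neg, hQ.even]

lemma weightedEval_expApprox_nonneg (hQ : IsFreudExponent Q b) (x t : ℝ) :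
    0 ≤ weightedEval Q (expApprox Q x) t :=
  mul_nonneg (hQ.eval_expApprox_nonneg x t) (exp_pos _).le

lemma exists_peakDefect_expApprox_le (hQ : IsFreudExponent Q b) : ∃ C : ℝ, 1 ≤ C ∧ ∀ x t,
    peakDefect Q (expApprox Q x) x t ≤
      C * exp (-Q x) * curvatureScale Q x * (1 + curvatureScale Q x * (t - x) ^ 2)⁻¹ := by
  obtain ⟨C, hC1, hC⟩ := hQ.exists_le_weightedEval_expApprox
  refine ⟨5 * C, by linarith, fun x t => ?_⟩
  have hR := hQ.curvatureScale_pos x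
  rcases eq_or_ne t x with rfl | htx
  · rw [peakDefect, sub_self, zero_div]
    positivity
  have hsq : 0 < (t - x) ^ 2 := sq_pos_of_ne_zero (sub_ne_zero.2 htx)
  have hφ := hQ.weightedEval_expApprox_nonneg x t
  rw [peakDefect, weightedEval_expApprox_self, ← div_eq_mul_inv,
    div_le_div_iff₀ hsq (by positivity), mul_assoc (5 * C * exp (-Q x))]
  have hnear := hC x t
  set u := curvatureScale Q x * (t - x) ^ 2
  have hu : 0 < u := by positivity
  rcases le_total u (1 / 4) with hu' | hu'
  · have hdiff : exp (-Q x) - weightedEval Q (expApprox Q x) t ≤ exp (-Q x) * (C * u) := by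
      have := mul_le_mul_of_nonneg_left (add_one_le_exp (-(C * u))) (exp_pos (-Q x)).le
      linarith [hnear hu']
    calc (exp (-Q x) - weightedEval Q (expApprox Q x) t) * (1 + u)
        ≤ exp (-Q x) * (C * u) * 5 := by gcongr; linarith
      _ = _ := by ring
  · calc (exp (-Q x) - weightedEval Q (expApprox Q x) t) * (1 + u)
        ≤ exp (-Q x) * (1 + u) := by gcongr; linarith
      _ ≤ exp (-Q x) * (5 * C * u) := by gcongr; nlinarith
      _ = _ := by ring

lemma exists_integral_peakDefect_expApprox_le (hQ : IsFreudExponent Q b) : ∃ C : ℝ, 1 ≤ C ∧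
    ∀ x, ∫ t, peakDefect Q (expApprox Q x) x t ≤ C * (exp (-Q x) * √(curvatureScale Q x)) := by
  obtain ⟨C, hC1, hC⟩ := hQ.exists_peakDefect_expApprox_le
  refine ⟨C * π, by nlinarith [pi_gt_three], fun x => ?_⟩
  have hR := hQ.curvatureScale_pos x
  refine (integral_mono ((hQ.peaksAt_expApprox x).integral_peakDefect hQ).1
    ((integrable_inv_one_add_mul_sq hR x).const_mul _) (hC x)).trans_eq ?_
  rw [integral_const_mul, integral_inv_one_add_mul_sq hR, mul_div_assoc', div_eq_iff
    (sqrt_pos.2 hR).ne']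
  linear_combination (-(C * exp (-Q x) * π)) * mul_self_sqrt hR.le

lemma exists_le_integral_peakDefect_expApprox (hQ : IsFreudExponent Q b) : ∃ c : ℝ, 0 < c ∧
    ∀ x, 1 ≤ x →
      c * (exp (-Q x) * √(curvatureScale Q x)) ≤ ∫ t, peakDefect Q (expApprox Q x) x t := by
  obtain ⟨c, hc, hφ⟩ := hQ.exists_weightedEval_expApprox_le
  refine ⟨√c / 2, by positivity, fun x hx => ?_⟩
  have hR := hQ.curvatureScale_pos x
  have hr : 0 < c * curvatureScale Q x := by positivity
  have hpeak := hQ.peaksAt_expApprox x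
  have hlower : ∀ t ∈ Set.Ioc x (x + 1 / √(c * curvatureScale Q x)),
      exp (-Q x) * (c * curvatureScale Q x) / 2 ≤ peakDefect Q (expApprox Q x) x t := by
    rintro t ⟨hxt, ht⟩
    have hsq : 0 < (t - x) ^ 2 := pow_pos (sub_pos.2 hxt) 2
    have hu_le : c * curvatureScale Q x * (t - x) ^ 2 ≤ 1 := by
      have : (t - x) ^ 2 ≤ (1 / √(c * curvatureScale Q x)) ^ 2 :=
        pow_le_pow_left₀ (by linarith) (by linarith) 2
      rw [div_pow, sq_sqrt hr.le, one_pow, le_div_iff₀ hr] at this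
      linarith
    have hφt := hφ x t hx (by linarith)
    rw [peakDefect, weightedEval_expApprox_self, le_div_iff₀ hsq]
    set u := c * curvatureScale Q x * (t - x) ^ 2 with hu
    have hfrac : exp (-Q x) / (1 + u) ≤ exp (-Q x) * (1 - u / 2) := by
      rw [div_le_iff₀ (by positivity), mul_assoc]
      exact le_mul_of_one_le_right (exp_pos _).le (by nlinarith [mul_pos hr hsq])
    calc exp (-Q x) * (c * curvatureScale Q x) / 2 * (t - x) ^ 2
        = exp (-Q x) - exp (-Q x) * (1 - u / 2) := by rw [hu]; ring
      _ ≤ _ := by linarith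
  refine le_of_eq_of_le ?_ (mul_le_integral_of_forall_mem_Ioc (hpeak.integral_peakDefect hQ).1
    hpeak.peakDefect_nonneg (by positivity) hlower)
  rw [mul_one_div, eq_div_iff (sqrt_pos.2 hr).ne', sqrt_mul hc.le]
  linear_combination exp (-Q x) / 2 * (√(curvatureScale Q x) * √(curvatureScale Q x) *
    mul_self_sqrt hc.le + c * mul_self_sqrt hR.le)

lemma exists_mul_exp_le_eval_expApprox (hQ : IsFreudExponent Q b) : ∃ c : ℝ, 0 < c ∧
    ∀ x t, curvatureScale Q x * (t - x) ^ 2 ≤ 1 / 4 →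
      c * exp (-Q x) * exp (Q t) ≤ (expApprox Q x).eval t := by
  obtain ⟨C, hC1, hC⟩ := hQ.exists_le_weightedEval_expApprox
  refine ⟨exp (-(C / 4)), exp_pos _, fun x t hxt => ?_⟩
  have hexp : exp (-(C / 4)) ≤ exp (-(C * (curvatureScale Q x * (t - x) ^ 2))) :=
    exp_le_exp.2 (by nlinarith)
  calc exp (-(C / 4)) * exp (-Q x) * exp (Q t)
      ≤ exp (-(C * (curvatureScale Q x * (t - x) ^ 2))) * exp (-Q x) * exp (Q t) := by gcongr
    _ ≤ weightedEval Q (expApprox Q x) t * exp (Q t) := by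
        gcongr
        exact (mul_comm _ _).trans_le (hC x t hxt)
    _ = (expApprox Q x).eval t := by
        rw [weightedEval, mul_assoc, ← exp_add, neg_add_cancel, exp_zero, mul_one]

lemma exists_weightedIntegral_expApprox_le (hQ : IsFreudExponent Q b) : ∃ C : ℝ, 1 ≤ C ∧
    ∀ x, 1 ≤ x →
      √(curvatureScale Q x) * weightedIntegral Q (expApprox Q x).eval ≤ C * exp (-Q x) := by
  obtain ⟨c, hc, hφ⟩ := hQ.exists_weightedEval_expApprox_le
  refine ⟨1 + 2 * π / √c, le_add_of_nonneg_right (by positivity), fun x hx => ?_⟩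
  have hR := hQ.curvatureScale_pos x
  have hr : 0 < c * curvatureScale Q x := by positivity
  have h_int := integrable_inv_one_add_mul_sq hr
  have hle : weightedIntegral Q (expApprox Q x).eval ≤ ∫ t, exp (-Q x) *
      ((1 + c * curvatureScale Q x * (t - x) ^ 2)⁻¹ +
        (1 + c * curvatureScale Q x * (t - -x) ^ 2)⁻¹) := by
    refine integral_mono ((IsPolyBounded.polynomial (expApprox Q x)).integrable hQ)
      (((h_int x).add (h_int (-x))).const_mul _) fun t => ?_
    change weightedEval Q (expApprox Q x) t ≤ _
    rcases le_total 0 t with ht | ht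
    · refine (hφ x t hx ht).trans ?_
      rw [div_eq_mul_inv]
      gcongr
      exact le_add_of_nonneg_right (by positivity)
    · rw [← hQ.weightedEval_expApprox_neg]
      refine (hφ x (-t) hx (neg_nonneg.2 ht)).trans ?_
      rw [div_eq_mul_inv, ← neg_sq (t - -x), neg_sub', neg_neg]
      gcongr
      exact le_add_of_nonneg_left (by positivity)
  rw [integral_const_mul, integral_add (h_int x) (h_int (-x)), integral_inv_one_add_mul_sq hr,
    integral_inv_one_add_mul_sq hr, sqrt_mul hc.le] at hle
  have : 0 < √(curvatureScale Q x) := sqrt_pos.2 hR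
  calc √(curvatureScale Q x) * weightedIntegral Q (expApprox Q x).eval
      ≤ √(curvatureScale Q x) * (exp (-Q x) * (π / (√c * √(curvatureScale Q x)) +
          π / (√c * √(curvatureScale Q x)))) := by gcongr
    _ = 2 * π / √c * exp (-Q x) := by field_simp; ring
    _ ≤ (1 + 2 * π / √c) * exp (-Q x) := by gcongr; linarith

end IsFreudExponent

/-- The Christoffel number at the node `z k`, divided by the weight `e^{-Q}` at that node. -/
noncomputable def weightedChristoffel (Q : ℝ → ℝ) (z : Fin n → ℝ) (k : Fin n) : ℝ :=
  christoffel Q z k * exp (Q (z k))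

namespace IsOrthonormalNodes

lemma weightedChristoffel_pos (hQ : IsFreudExponent Q b) (hp : IsOrthonormalNodes Q p z)
    (k : Fin n) : 0 < weightedChristoffel Q z k :=
  mul_pos (hp.christoffel_pos hQ k) (exp_pos _)

lemma ladderCoeff_nonneg (hQ : IsFreudExponent Q b) (hp : IsOrthonormalNodes Q p z) (x : ℝ) :
    0 ≤ ladderCoeff Q p x :=
  (div_nonneg (hQ.radialSlope_nonneg x) zero_le_two).trans (hp.half_radialSlope_le_ladderCoeff hQ x)

lemma christoffel_mul_expApprox_nonneg (hQ : IsFreudExponent Q b) (hp : IsOrthonormalNodes Q p z)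
    (x : ℝ) (k : Fin n) : 0 ≤ christoffel Q z k * (expApprox Q x).eval (z k) :=
  mul_nonneg (hp.christoffel_pos hQ k).le (hQ.eval_expApprox_nonneg x _)

lemma sum_expApprox_add_le_ladderCoeff (hQ : IsFreudExponent Q b) (hp : IsOrthonormalNodes Q p z)
    (hx : 0 ≤ x) :
    ∑ k, christoffel Q z k * (expApprox Q x).eval (z k) * (diffQuot p (z k)).eval x ^ 2 +
      p.eval x ^ 2 * ∫ t, peakDefect Q (expApprox Q x) x t ≤ ladderCoeff Q p x := by
  have := hp.sum_christoffel_mul_diffQuot_sq_le hQ hx (hQ.nonnegCoeffs_expApprox x)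
    (hQ.peaksAt_expApprox x)
  rw [eval_expApprox_self, one_mul] at this
  linarith

end IsOrthonormalNodes

namespace IsFreudExponent

theorem exists_eval_sq_mul_sqrt_le (hQ : IsFreudExponent Q b) : ∃ C : ℝ, 1 ≤ C ∧
    ∀ {n : ℕ} {p : Polynomial ℝ} {z : Fin n → ℝ}, IsOrthonormalNodes Q p z → ∀ x, 1 ≤ x →
      p.eval x ^ 2 * exp (-Q x) * √(curvatureScale Q x) ≤ C * ladderCoeff Q p x := by
  obtain ⟨c, hc, hdefect⟩ := hQ.exists_le_integral_peakDefect_expApprox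
  refine ⟨1 + 1 / c, le_add_of_nonneg_right (by positivity), fun {n p z} hp x hx => ?_⟩
  have hsum := hp.sum_expApprox_add_le_ladderCoeff hQ (zero_le_one.trans hx)
  have hsum_nonneg : 0 ≤ ∑ k, christoffel Q z k * (expApprox Q x).eval (z k) *
      (diffQuot p (z k)).eval x ^ 2 :=
    Finset.sum_nonneg fun k _ =>
      mul_nonneg (hp.christoffel_mul_expApprox_nonneg hQ x k) (sq_nonneg _)
  have hdefect' := mul_le_mul_of_nonneg_left (hdefect x hx) (sq_nonneg (p.eval x))
  calc p.eval x ^ 2 * exp (-Q x) * √(curvatureScale Q x)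
      ≤ ladderCoeff Q p x / c := by rw [le_div_iff₀ hc]; linarith
    _ = 1 / c * ladderCoeff Q p x := by ring
    _ ≤ (1 + 1 / c) * ladderCoeff Q p x := by
        gcongr
        · exact hp.ladderCoeff_nonneg hQ x
        · linarith

theorem exists_sum_near_diffQuot_sq_le (hQ : IsFreudExponent Q b) : ∃ C : ℝ, 1 ≤ C ∧
    ∀ {n : ℕ} {p : Polynomial ℝ} {z : Fin n → ℝ}, IsOrthonormalNodes Q p z → ∀ x, 0 ≤ x →
      exp (-Q x) * ∑ k with curvatureScale Q x * (z k - x) ^ 2 ≤ 1 / 4,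
        weightedChristoffel Q z k * (diffQuot p (z k)).eval x ^ 2 ≤ C * ladderCoeff Q p x := by
  obtain ⟨c, hc, hG⟩ := hQ.exists_mul_exp_le_eval_expApprox
  refine ⟨1 + 1 / c, le_add_of_nonneg_right (by positivity), fun {n p z} hp x hx => ?_⟩
  have hsum := hp.sum_expApprox_add_le_ladderCoeff hQ hx
  have hdefect : 0 ≤ p.eval x ^ 2 * ∫ t, peakDefect Q (expApprox Q x) x t :=
    mul_nonneg (sq_nonneg _) (integral_nonneg (hQ.peaksAt_expApprox x).peakDefect_nonneg)
  have hnear : c * (exp (-Q x) * ∑ k with curvatureScale Q x * (z k - x) ^ 2 ≤ 1 / 4,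
      weightedChristoffel Q z k * (diffQuot p (z k)).eval x ^ 2) ≤
      ∑ k, christoffel Q z k * (expApprox Q x).eval (z k) * (diffQuot p (z k)).eval x ^ 2 := by
    rw [← mul_assoc, Finset.mul_sum]
    refine (Finset.sum_le_sum fun k hk => ?_).trans (Finset.sum_le_sum_of_subset_of_nonneg
      (Finset.filter_subset _ _) fun k _ _ =>
        mul_nonneg (hp.christoffel_mul_expApprox_nonneg hQ x k) (sq_nonneg _))
    have := (hp.christoffel_pos hQ k).le
    calc c * exp (-Q x) * (weightedChristoffel Q z k * (diffQuot p (z k)).eval x ^ 2)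
        = christoffel Q z k * (c * exp (-Q x) * exp (Q (z k))) *
            (diffQuot p (z k)).eval x ^ 2 := by rw [weightedChristoffel]; ring
      _ ≤ _ := by gcongr; exact hG x (z k) (Finset.mem_filter.1 hk).2
  calc _ ≤ ladderCoeff Q p x / c := by rw [le_div_iff₀ hc]; linarith
    _ = 1 / c * ladderCoeff Q p x := by ring
    _ ≤ (1 + 1 / c) * ladderCoeff Q p x := by
        gcongr
        · exact hp.ladderCoeff_nonneg hQ x
        · linarith

theorem exists_sum_near_weightedChristoffel_le (hQ : IsFreudExponent Q b) : ∃ C : ℝ, 1 ≤ C ∧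
    ∀ {n : ℕ} {p : Polynomial ℝ} {z : Fin n → ℝ}, IsOrthonormalNodes Q p z → ∀ y, 1 ≤ y →
      √(curvatureScale Q y) * ∑ k with curvatureScale Q y * (|z k| - y) ^ 2 ≤ 1 / 4,
        weightedChristoffel Q z k ≤ C := by
  obtain ⟨c, hc, hG⟩ := hQ.exists_mul_exp_le_eval_expApprox
  obtain ⟨C, hC1, hC⟩ := hQ.exists_weightedIntegral_expApprox_le
  refine ⟨1 + C / c, le_add_of_nonneg_right (by positivity), fun {n p z} hp y hy => ?_⟩
  have hquad := hp.sum_christoffel_mul_eval_le hQ (hQ.nonnegCoeffs_expApprox y)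
  have hnear : c * exp (-Q y) * ∑ k with curvatureScale Q y * (|z k| - y) ^ 2 ≤ 1 / 4,
      weightedChristoffel Q z k ≤ ∑ k, christoffel Q z k * (expApprox Q y).eval (z k) := by
    rw [Finset.mul_sum]
    refine (Finset.sum_le_sum fun k hk => ?_).trans (Finset.sum_le_sum_of_subset_of_nonneg
      (Finset.filter_subset _ _) fun k _ _ => hp.christoffel_mul_expApprox_nonneg hQ y k)
    have := (hp.christoffel_pos hQ k).le
    have hGk := hG y |z k| (Finset.mem_filter.1 hk).2
    rw [hQ.apply_abs, eval_expApprox, sq_abs, ← eval_expApprox] at hGk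
    calc c * exp (-Q y) * weightedChristoffel Q z k
        = christoffel Q z k * (c * exp (-Q y) * exp (Q (z k))) := by
          rw [weightedChristoffel]; ring
      _ ≤ _ := by gcongr
  set S := ∑ k with curvatureScale Q y * (|z k| - y) ^ 2 ≤ 1 / 4, weightedChristoffel Q z k
  have : c * exp (-Q y) * (√(curvatureScale Q y) * S) ≤ C * exp (-Q y) :=
    calc c * exp (-Q y) * (√(curvatureScale Q y) * S)
        = √(curvatureScale Q y) * (c * exp (-Q y) * S) := by ring
      _ ≤ √(curvatureScale Q y) * weightedIntegral Q (expApprox Q y).eval := by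
          gcongr; exact hnear.trans hquad
      _ ≤ _ := hC y hy
  have : √(curvatureScale Q y) * S ≤ C / c := by
    rw [le_div_iff₀ hc]
    exact le_of_mul_le_mul_right (by linarith) (exp_pos (-Q y))
  linarith

end IsFreudExponent

end

/-! ### Local bounds -/

section

lemma inv_one_add_mul_sq_le {r a x y C : ℝ} (hr : 0 < r)
    (hy : r * (y - a) ^ 2 ≤ C * (1 + r * (a - x) ^ 2)) :
    (1 + r * (a - x) ^ 2)⁻¹ ≤ (2 + 2 * C) * (1 + r * (y - x) ^ 2)⁻¹ := by
  have hsplit : (y - x) ^ 2 ≤ 2 * (a - x) ^ 2 + 2 * (y - a) ^ 2 := by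
    nlinarith [sq_nonneg ((a - x) - (y - a))]
  have := mul_le_mul_of_nonneg_left hsplit hr.le
  rw [← div_eq_mul_inv, ← one_div, div_le_div_iff₀ (by positivity) (by positivity)]
  linarith

variable {Q : ℝ → ℝ} {b : ℕ}

/-- An interval to the right of `a` which is so short, in terms of the parameter `C`, that the
curvature scale is comparable to its value at `a` throughout; its length is the expected spacing of
the nodes near `a`. -/
def scaleWindow (Q : ℝ → ℝ) (C a : ℝ) : Set ℝ :=
  Set.Ioc a (a + 1 / (2 * C) / √(curvatureScale Q a))

namespace IsFreudExponent

lemma continuous_curvatureScale (hQ : IsFreudExponent Q b) : Continuous (curvatureScale Q) :=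
  continuous_const.add hQ.continuous_radialSlope

lemma curvatureScale_mul_sq_le_of_mem_scaleWindow (hQ : IsFreudExponent Q b) {C a y : ℝ}
    (hC : 1 ≤ C) (hy : y ∈ scaleWindow Q C a) :
    curvatureScale Q a * (y - a) ^ 2 ≤ 1 / (4 * C) := by
  have hR := hQ.curvatureScale_pos a
  have hle : √(curvatureScale Q a) * (y - a) ≤ 1 / (2 * C) := by
    rw [mul_comm, ← le_div_iff₀ (sqrt_pos.2 hR)]
    linarith [hy.2]
  calc curvatureScale Q a * (y - a) ^ 2 = (√(curvatureScale Q a) * (y - a)) ^ 2 := by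
        rw [mul_pow, sq_sqrt hR.le]
    _ ≤ (1 / (2 * C)) ^ 2 := by
        have := sub_nonneg.2 hy.1.le
        gcongr
    _ ≤ 1 / (4 * C) := by
        rw [div_pow, div_le_div_iff₀ (by positivity) (by positivity)]
        nlinarith

lemma abs_sub_le_of_curvatureScale_mul_sq_le (hQ : IsFreudExponent Q b) {a y c : ℝ} (hc : 0 ≤ c)
    (hy : curvatureScale Q a * (y - a) ^ 2 ≤ c ^ 2) : |y - a| ≤ c :=
  abs_le_of_sq_le_sq
    ((le_mul_of_one_le_left (sq_nonneg _) (hQ.one_le_curvatureScale a)).trans hy) hc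

lemma curvatureScale_mul_sq_le_quarter_of_mem_scaleWindow (hQ : IsFreudExponent Q b) {C a y : ℝ}
    (hC1 : 1 ≤ C) (hC : ∀ x y, |y| ≤ |x| + 1 → curvatureScale Q y ≤ C * curvatureScale Q x)
    (hy : y ∈ scaleWindow Q C a) : curvatureScale Q y * (a - y) ^ 2 ≤ 1 / 4 := by
  have hsq := hQ.curvatureScale_mul_sq_le_of_mem_scaleWindow hC1 hy
  have habs : |y| ≤ |a| + 1 := by
    have hle : 1 / (4 * C) ≤ 1 ^ 2 := by
      rw [one_pow, div_le_one (by positivity)]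
      linarith
    have := hQ.abs_sub_le_of_curvatureScale_mul_sq_le zero_le_one (hsq.trans hle)
    linarith [abs_sub_abs_le_abs_sub y a]
  calc curvatureScale Q y * (a - y) ^ 2 ≤ C * curvatureScale Q a * (y - a) ^ 2 := by
        rw [← neg_sq, neg_sub]
        gcongr
        exact hC _ _ habs
    _ = C * (curvatureScale Q a * (y - a) ^ 2) := by ring
    _ ≤ C * (1 / (4 * C)) := by gcongr
    _ = 1 / 4 := by field_simp

lemma exists_curvatureScale_le_mul_one_add (hQ : IsFreudExponent Q b) : ∃ C : ℝ, 1 ≤ C ∧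
    ∀ x a, curvatureScale Q x ≤
      C * (curvatureScale Q a * (1 + curvatureScale Q x * (a - x) ^ 2)) := by
  obtain ⟨C, hC1, hC⟩ := hQ.exists_curvatureScale_le
  refine ⟨C, hC1, fun x a => ?_⟩
  have hRa := hQ.one_le_curvatureScale a
  have hR := hQ.curvatureScale_pos x
  rw [← mul_assoc]
  rcases le_total |a - x| 1 with hax | hax
  · have : |x| ≤ |a| + 1 := by
      have := abs_sub_abs_le_abs_sub x a
      rw [abs_sub_comm x a] at this
      linarith
    exact (hC a x this).trans (le_mul_of_one_le_right (by positivity)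
      (le_add_of_nonneg_right (by positivity)))
  · have hsq : 1 ≤ (a - x) ^ 2 := (one_le_sq_iff_one_le_abs _).2 hax
    calc curvatureScale Q x ≤ 1 + curvatureScale Q x * (a - x) ^ 2 :=
          (le_mul_of_one_le_right hR.le hsq).trans (le_add_of_nonneg_left zero_le_one)
      _ ≤ _ := le_mul_of_one_le_left (by positivity) (one_le_mul_of_one_le_of_one_le hC1 hRa)

lemma integrable_indicator_scaleWindow (hQ : IsFreudExponent Q b) {g : ℝ → ℝ} (hg : Continuous g)
    (C a : ℝ) :
    Integrable ((scaleWindow Q C a).indicator fun y => √(curvatureScale Q y) * g y) :=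
  (hQ.continuous_curvatureScale.sqrt.mul hg).integrableOn_Ioc.integrable_indicator measurableSet_Ioc

lemma mul_le_integral_indicator_scaleWindow (hQ : IsFreudExponent Q b) {g : ℝ → ℝ}
    (hg : Continuous g) (hg_nonneg : ∀ y, 0 ≤ g y) {C a m : ℝ} (hC : 1 ≤ C) (ha : 0 ≤ a)
    (hm : ∀ y ∈ scaleWindow Q C a, m ≤ g y) : m * (1 / (2 * C)) ≤
      ∫ y, (scaleWindow Q C a).indicator (fun y => √(curvatureScale Q y) * g y) y := by
  have hs : 0 < √(curvatureScale Q a) := sqrt_pos.2 (hQ.curvatureScale_pos a)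
  calc m * (1 / (2 * C)) = √(curvatureScale Q a) * m * (1 / (2 * C) / √(curvatureScale Q a)) := by
        field_simp
    _ ≤ _ := mul_le_integral_of_forall_mem_Ioc (a := a)
        (hQ.integrable_indicator_scaleWindow hg C a)
        (Set.indicator_nonneg fun y _ => mul_nonneg (sqrt_nonneg _) (hg_nonneg y))
        (by positivity) fun y hy => by
          rw [Set.indicator_of_mem (show y ∈ scaleWindow Q C a from hy)]
          have hle : curvatureScale Q a ≤ curvatureScale Q y := hQ.curvatureScale_le_of_abs_le
            (abs_le_abs_of_nonneg ha hy.1.le)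
          exact (mul_le_mul_of_nonneg_left (hm y hy) hs.le).trans
            (mul_le_mul_of_nonneg_right (sqrt_le_sqrt hle) (hg_nonneg y))

lemma exists_sum_indicator_scaleWindow_le (hQ : IsFreudExponent Q b) : ∃ C C' : ℝ, 1 ≤ C ∧
    1 ≤ C' ∧ ∀ {n : ℕ} {p : Polynomial ℝ} {z : Fin n → ℝ}, IsOrthonormalNodes Q p z →
      ∀ (g : ℝ → ℝ) (y : ℝ), 0 ≤ g y → ∑ k with 1 ≤ |z k|, weightedChristoffel Q z k *
        (scaleWindow Q C |z k|).indicator (fun y => √(curvatureScale Q y) * g y) y ≤ C' * g y := by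
  obtain ⟨C, hC1, hC⟩ := hQ.exists_curvatureScale_le
  obtain ⟨C', hC'1, hC'⟩ := hQ.exists_sum_near_weightedChristoffel_le
  refine ⟨C, C', hC1, hC'1, fun {n p z} hp g y hg => ?_⟩
  rcases lt_or_ge y 1 with hy | hy
  · rw [Finset.sum_eq_zero fun k hk => ?_]
    · positivity
    · rw [Set.indicator_of_notMem fun hmem => ?_, mul_zero]
      linarith [hmem.1, (Finset.mem_filter.1 hk).2]
  have hterm : ∀ k, 0 ≤ weightedChristoffel Q z k * (√(curvatureScale Q y) * g y) := fun k =>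
    mul_nonneg (hp.weightedChristoffel_pos hQ k).le (mul_nonneg (sqrt_nonneg _) hg)
  calc _ ≤ ∑ k with curvatureScale Q y * (|z k| - y) ^ 2 ≤ 1 / 4,
        weightedChristoffel Q z k * (√(curvatureScale Q y) * g y) := by
        rw [Finset.sum_filter, Finset.sum_filter]
        refine Finset.sum_le_sum fun k _ => ?_
        by_cases hk : y ∈ scaleWindow Q C |z k|
        · rw [Set.indicator_of_mem hk,
            if_pos (hQ.curvatureScale_mul_sq_le_quarter_of_mem_scaleWindow hC1 hC hk)]
          split_ifs
          exacts [le_rfl, hterm k]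
        · rw [Set.indicator_of_notMem hk, mul_zero, ite_self]
          split_ifs
          exacts [hterm k, le_rfl]
    _ = √(curvatureScale Q y) * (∑ k with curvatureScale Q y * (|z k| - y) ^ 2 ≤ 1 / 4,
        weightedChristoffel Q z k) * g y := by rw [← Finset.sum_mul]; ring
    _ ≤ C' * g y := by gcongr; exact hC' hp y hy

/-- The sum becomes an integral by smearing the mass at each node over its window. -/
theorem exists_sum_weightedChristoffel_mul_le_integral (hQ : IsFreudExponent Q b) : ∃ C : ℝ,
    1 ≤ C ∧ ∀ {n : ℕ} {p : Polynomial ℝ} {z : Fin n → ℝ}, IsOrthonormalNodes Q p z →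
      ∀ {g : ℝ → ℝ} {D : ℝ}, Continuous g → Integrable g → (∀ y, 0 ≤ g y) → 0 < D →
        (∀ a y, curvatureScale Q a * (y - a) ^ 2 ≤ 1 → g a ≤ D * g y) →
          ∑ k with 1 ≤ |z k|, weightedChristoffel Q z k * g |z k| ≤ C * D * ∫ y, g y := by
  obtain ⟨C, C', hC1, hC'1, hsum⟩ := hQ.exists_sum_indicator_scaleWindow_le
  refine ⟨2 * C * C', by nlinarith, fun {n p z} hp {g D} hg hg_int hg_nonneg hD hgD => ?_⟩
  have h_int := fun k => (hQ.integrable_indicator_scaleWindow hg C |z k|).const_mul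
    (weightedChristoffel Q z k)
  have hlower : ∀ k, g |z k| / D * (1 / (2 * C)) ≤
      ∫ y, (scaleWindow Q C |z k|).indicator (fun y => √(curvatureScale Q y) * g y) y := fun k =>
    hQ.mul_le_integral_indicator_scaleWindow hg hg_nonneg hC1 (abs_nonneg _) fun y hy => by
      rw [div_le_iff₀' hD]
      refine hgD _ _ ((hQ.curvatureScale_mul_sq_le_of_mem_scaleWindow hC1 hy).trans ?_)
      rw [div_le_one (by positivity)]
      linarith
  have hupper := integral_mono (integrable_finsetSum _ fun k _ => h_int k) (hg_int.const_mul C')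
    fun y => hsum hp g y (hg_nonneg y)
  rw [integral_finsetSum _ fun k _ => h_int k, integral_const_mul] at hupper
  calc ∑ k with 1 ≤ |z k|, weightedChristoffel Q z k * g |z k|
      = 2 * C * D * ∑ k with 1 ≤ |z k|, weightedChristoffel Q z k *
          (g |z k| / D * (1 / (2 * C))) := by
        rw [Finset.mul_sum]
        exact Finset.sum_congr rfl fun k _ => by field_simp
    _ ≤ 2 * C * D * (C' * ∫ y, g y) := by
        gcongr
        refine (Finset.sum_le_sum fun k _ => ?_).trans hupper
        rw [integral_const_mul]
        exact mul_le_mul_of_nonneg_left (hlower k) (hp.weightedChristoffel_pos hQ k).le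
    _ = _ := by ring

lemma exists_sum_central_weightedChristoffel_le (hQ : IsFreudExponent Q b) : ∃ C : ℝ, 1 ≤ C ∧
    ∀ {n : ℕ} {p : Polynomial ℝ} {z : Fin n → ℝ}, IsOrthonormalNodes Q p z →
      ∑ k with ¬1 ≤ |z k|, weightedChristoffel Q z k ≤ C := by
  have hone : 0 ≤ weightedIntegral Q fun _ => 1 := weightedIntegral_nonneg fun _ => zero_le_one
  refine ⟨1 + (weightedIntegral Q fun _ => 1) * exp (Q 1),
    le_add_of_nonneg_right (mul_nonneg hone (exp_pos _).le), fun {n p z} hp => ?_⟩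
  have hquad := hp.sum_christoffel_mul_eval_le hQ (NonnegCoeffs.C zero_le_one)
  simp only [Polynomial.eval_C, mul_one] at hquad
  calc ∑ k with ¬1 ≤ |z k|, weightedChristoffel Q z k
      ≤ ∑ k with ¬1 ≤ |z k|, christoffel Q z k * exp (Q 1) := by
        refine Finset.sum_le_sum fun k hk => mul_le_mul_of_nonneg_left (exp_le_exp.2 ?_)
          (hp.christoffel_pos hQ k).le
        have hle := hQ.add_half_mul_le (z k) 1
        have hzk := (sq_le_one_iff_abs_le_one _).2 (not_le.1 (Finset.mem_filter.1 hk).2).le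
        nlinarith [hQ.radialSlope_nonneg (z k)]
    _ ≤ ∑ k, christoffel Q z k * exp (Q 1) := Finset.sum_le_sum_of_subset_of_nonneg
        (Finset.filter_subset _ _) fun k _ _ =>
          mul_nonneg (hp.christoffel_pos hQ k).le (exp_pos _).le
    _ = (∑ k, christoffel Q z k) * exp (Q 1) := (Finset.sum_mul _ _ _).symm
    _ ≤ (weightedIntegral Q fun _ => 1) * exp (Q 1) := by gcongr
    _ ≤ _ := le_add_of_nonneg_left zero_le_one

lemma exists_sqrt_mul_sum_outer_le (hQ : IsFreudExponent Q b) : ∃ C : ℝ, 0 ≤ C ∧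
    ∀ {n : ℕ} {p : Polynomial ℝ} {z : Fin n → ℝ}, IsOrthonormalNodes Q p z → ∀ x, 0 ≤ x →
      √(curvatureScale Q x) * ∑ k with 1 ≤ |z k|, weightedChristoffel Q z k *
        (1 + curvatureScale Q x * (z k - x) ^ 2)⁻¹ ≤ C := by
  obtain ⟨C, hC1, hC⟩ := hQ.exists_sum_weightedChristoffel_mul_le_integral
  obtain ⟨D, hD1, hD⟩ := hQ.exists_curvatureScale_le_mul_one_add
  refine ⟨C * (2 + 2 * D) * π, by positivity, fun {n p z} hp x hx => ?_⟩
  have hR := hQ.curvatureScale_pos x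
  set r := curvatureScale Q x
  have hriemann := hC hp (g := fun y => (1 + r * (y - x) ^ 2)⁻¹) (D := 2 + 2 * D)
    (Continuous.inv₀ (by fun_prop) fun y => by positivity) (integrable_inv_one_add_mul_sq hR x)
    (fun y => by positivity) (by positivity) fun a y hay =>
      inv_one_add_mul_sq_le hR (by
        calc r * (y - a) ^ 2 ≤ D * (curvatureScale Q a * (1 + r * (a - x) ^ 2)) * (y - a) ^ 2 :=
              mul_le_mul_of_nonneg_right (hD x a) (sq_nonneg _)
          _ = D * (1 + r * (a - x) ^ 2) * (curvatureScale Q a * (y - a) ^ 2) := by ring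
          _ ≤ _ := mul_le_of_le_one_right (by positivity) hay)
  rw [integral_inv_one_add_mul_sq hR] at hriemann
  calc _ ≤ √r * ∑ k with 1 ≤ |z k|, weightedChristoffel Q z k * (1 + r * (|z k| - x) ^ 2)⁻¹ := by
        gcongr √r * ∑ k with _, _ * (1 + r * ?_)⁻¹ with k
        · exact (hp.weightedChristoffel_pos hQ k).le
        · have := abs_abs_sub_abs_le (z k) x
          rw [abs_of_nonneg hx] at this
          exact sq_le_sq.2 this
    _ ≤ √r * (C * (2 + 2 * D) * (π / √r)) := by gcongr
    _ = _ := by field_simp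

lemma exists_sqrt_mul_sum_central_le (hQ : IsFreudExponent Q b) : ∃ C : ℝ, 1 ≤ C ∧
    ∀ {n : ℕ} {p : Polynomial ℝ} {z : Fin n → ℝ}, IsOrthonormalNodes Q p z → ∀ x,
      √(curvatureScale Q x) * ∑ k with ¬1 ≤ |z k|, weightedChristoffel Q z k *
        (1 + curvatureScale Q x * (z k - x) ^ 2)⁻¹ ≤ C := by
  obtain ⟨D, hD1, hD⟩ := hQ.exists_curvatureScale_le_mul_one_add
  obtain ⟨C, hC1, hC⟩ := hQ.exists_sum_central_weightedChristoffel_le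
  have hR1 := hQ.one_le_curvatureScale 1
  refine ⟨C * (D * curvatureScale Q 1), one_le_mul_of_one_le_of_one_le hC1
    (one_le_mul_of_one_le_of_one_le hD1 hR1), fun {n p z} hp x => ?_⟩
  have hR := hQ.one_le_curvatureScale x
  set r := curvatureScale Q x
  rw [Finset.mul_sum]
  calc _ ≤ ∑ k with ¬1 ≤ |z k|, weightedChristoffel Q z k * (D * curvatureScale Q 1) := by
        refine Finset.sum_le_sum fun k hk => ?_
        rw [mul_left_comm]
        refine mul_le_mul_of_nonneg_left ?_ (hp.weightedChristoffel_pos hQ k).le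
        rw [← div_eq_mul_inv, div_le_iff₀ (by positivity)]
        have hle : curvatureScale Q (z k) ≤ curvatureScale Q 1 := hQ.curvatureScale_le_of_abs_le
          (by simpa only [abs_one] using (not_le.1 (Finset.mem_filter.1 hk).2).le)
        calc √r ≤ r := sqrt_le_self_iff.2 (.inr hR)
          _ ≤ D * (curvatureScale Q (z k) * (1 + r * (z k - x) ^ 2)) := hD x (z k)
          _ ≤ D * (curvatureScale Q 1 * (1 + r * (z k - x) ^ 2)) := by gcongr
          _ = _ := by ring
    _ ≤ _ := by rw [← Finset.sum_mul]; gcongr; exact hC hp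

theorem exists_sqrt_mul_sum_weightedChristoffel_le (hQ : IsFreudExponent Q b) : ∃ C : ℝ, 1 ≤ C ∧
    ∀ {n : ℕ} {p : Polynomial ℝ} {z : Fin n → ℝ}, IsOrthonormalNodes Q p z → ∀ x, 0 ≤ x →
      √(curvatureScale Q x) * ∑ k, weightedChristoffel Q z k *
        (1 + curvatureScale Q x * (z k - x) ^ 2)⁻¹ ≤ C := by
  obtain ⟨C, hC0, hC⟩ := hQ.exists_sqrt_mul_sum_outer_le
  obtain ⟨C', hC'1, hC'⟩ := hQ.exists_sqrt_mul_sum_central_le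
  refine ⟨C + C', le_add_of_nonneg_of_le hC0 hC'1, fun {n p z} hp x hx => ?_⟩
  rw [← Finset.sum_filter_add_sum_filter_not Finset.univ fun k => 1 ≤ |z k|, mul_add]
  exact add_le_add (hC hp x hx) (hC' hp x)

theorem exists_sum_weightedChristoffel_mul_inv_le (hQ : IsFreudExponent Q b) : ∃ C : ℝ, 1 ≤ C ∧
    ∀ {n : ℕ} {p : Polynomial ℝ} {z : Fin n → ℝ}, IsOrthonormalNodes Q p z →
      ∑ k, weightedChristoffel Q z k * (1 + z k ^ 2)⁻¹ ≤ C := by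
  obtain ⟨C, hC1, hC⟩ := hQ.exists_sum_weightedChristoffel_mul_le_integral
  obtain ⟨C₀, hC₀1, hC₀⟩ := hQ.exists_sum_central_weightedChristoffel_le
  refine ⟨C * 4 * π + C₀, le_add_of_nonneg_of_le (by positivity) hC₀1, fun {n p z} hp => ?_⟩
  have hlarge := hC hp (g := fun y => (1 + 1 * (y - 0) ^ 2)⁻¹) (D := 4)
    (Continuous.inv₀ (by fun_prop) fun y => by positivity)
    (integrable_inv_one_add_mul_sq one_pos 0) (fun y => by positivity) (by norm_num)
    fun a y hay => (inv_one_add_mul_sq_le (C := 1) one_pos (by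
      have := le_mul_of_one_le_left (sq_nonneg (y - a)) (hQ.one_le_curvatureScale a)
      nlinarith [sq_nonneg (a - 0)])).trans_eq (by norm_num)
  rw [integral_inv_one_add_mul_sq one_pos] at hlarge
  simp only [sub_zero, sq_abs, one_mul, sqrt_one, div_one] at hlarge
  have hcentral : ∑ k with ¬1 ≤ |z k|, weightedChristoffel Q z k * (1 + z k ^ 2)⁻¹ ≤ C₀ :=
    (Finset.sum_le_sum fun k _ => mul_le_of_le_one_right (hp.weightedChristoffel_pos hQ k).le
      (inv_le_one_of_one_le₀ (one_le_one_add_sq _))).trans (hC₀ hp)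
  rw [← Finset.sum_filter_add_sum_filter_not Finset.univ fun k => 1 ≤ |z k|]
  exact add_le_add hlarge hcentral

end IsFreudExponent

end

/-! ### Bounds in the bulk -/

section

open Polynomial.Chebyshev in
lemma chebyshev_eval_sq_eq_eval_abs_sq (m : ℕ) (u : ℝ) :
    (T ℝ m).eval u ^ 2 = (T ℝ m).eval |u| ^ 2 := by
  rcases abs_choice u with h | h
  · rw [h]
  · rw [h, T_eval_neg, mul_pow]
    rcases Int.units_eq_one_or ((m : ℤ).negOnePow) with hsign | hsign <;> rw [hsign] <;> simp

open Polynomial.Chebyshev in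
lemma chebyshev_eval_sq_le_one (m : ℕ) {u : ℝ} (hu : |u| ≤ 1) : (T ℝ m).eval u ^ 2 ≤ 1 :=
  (sq_le_one_iff_abs_le_one _).2 (abs_eval_T_real_le_one m hu)

open Polynomial.Chebyshev in
lemma chebyshev_eval_eq_cosh (m : ℕ) {u : ℝ} (hu : 1 ≤ u) :
    (T ℝ m).eval u = cosh (m * arcosh u) := by
  simpa [cosh_arcosh hu] using T_real_cosh (arcosh u) m

open Polynomial.Chebyshev in
lemma chebyshev_eval_sq_le_pow (m : ℕ) {u : ℝ} (hu : 1 ≤ |u|) :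
    (T ℝ m).eval u ^ 2 ≤ (2 * |u|) ^ (2 * m) := by
  have hcosh : cosh (m * arcosh |u|) ≤ exp (m * arcosh |u|) := by
    have := arcosh_nonneg hu
    rw [cosh_eq]
    linarith [exp_le_exp.2 (neg_le_self (by positivity : 0 ≤ m * arcosh |u|))]
  have hsqrt : √(|u| ^ 2 - 1) ≤ |u| := by
    rw [sqrt_le_left (by linarith)]; linarith
  rw [chebyshev_eval_sq_eq_eval_abs_sq, chebyshev_eval_eq_cosh m hu, mul_comm 2 m, pow_mul]
  refine pow_le_pow_left₀ (cosh_pos _).le (hcosh.trans ?_) 2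
  rw [exp_nat_mul, exp_arcosh hu]
  exact pow_le_pow_left₀ (by positivity) (by linarith) m

open Polynomial.Chebyshev in
lemma chebyshev_eval_sq_le_cosh_sq (m : ℕ) {u a : ℝ} (ha : 0 ≤ a) (hu : 1 ≤ u)
    (hua : u ≤ cosh a) : (T ℝ m).eval u ^ 2 ≤ cosh (m * a) ^ 2 := by
  have hnonneg := arcosh_nonneg hu
  have harcosh : arcosh u ≤ a := by
    rw [← arcosh_cosh ha]
    exact (arcosh_le_arcosh (by linarith) (cosh_pos _)).2 hua
  rw [chebyshev_eval_eq_cosh m hu]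
  refine pow_le_pow_left₀ (cosh_pos _).le (cosh_le_cosh.2 ?_) 2
  rw [abs_of_nonneg (by positivity), abs_of_nonneg (by positivity)]
  gcongr

/-- The Chebyshev polynomial `T_m` at `cosh (2 / m) - (t - x)² / L²`. Its peak at `x` has the fixed
height `cosh 2`, while its width is only of order `L / m`. -/
noncomputable def chebyshevBump (m : ℕ) (L x : ℝ) : Polynomial ℝ :=
  (Polynomial.Chebyshev.T ℝ m).comp (Polynomial.C (cosh (2 / m)) -
    Polynomial.C (1 / L ^ 2) * (Polynomial.X - Polynomial.C x) ^ 2)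

lemma eval_chebyshevBump (m : ℕ) (L x t : ℝ) :
    (chebyshevBump m L x).eval t =
      (Polynomial.Chebyshev.T ℝ m).eval (cosh (2 / m) - (t - x) ^ 2 / L ^ 2) := by
  simp [chebyshevBump, Polynomial.eval_comp, div_eq_inv_mul]

lemma eval_chebyshevBump_self {m : ℕ} (hm : m ≠ 0) (L x : ℝ) :
    (chebyshevBump m L x).eval x = cosh 2 := by
  have : (m : ℝ) ≠ 0 := Nat.cast_ne_zero.2 hm
  rw [eval_chebyshevBump, sub_self, zero_pow two_ne_zero, zero_div, sub_zero,
    Polynomial.Chebyshev.T_real_cosh]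
  push_cast
  rw [mul_div_cancel₀ _ this]

lemma eval_chebyshevBump_sq_le_cosh_sq {m : ℕ} (hm : m ≠ 0) {L x t : ℝ}
    (ht : (t - x) ^ 2 / L ^ 2 ≤ cosh (2 / m) - 1) :
    (chebyshevBump m L x).eval t ^ 2 ≤ cosh 2 ^ 2 := by
  have : (m : ℝ) ≠ 0 := Nat.cast_ne_zero.2 hm
  have hquot : 0 ≤ (t - x) ^ 2 / L ^ 2 := by positivity
  rw [eval_chebyshevBump]
  simpa only [mul_div_cancel₀ _ this] using chebyshev_eval_sq_le_cosh_sq m (a := 2 / m)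
    (by positivity) (by linarith) (sub_le_self _ hquot)

lemma natDegree_chebyshevBump_le (m : ℕ) (L x : ℝ) : (chebyshevBump m L x).natDegree ≤ m * 2 := by
  refine Polynomial.natDegree_comp_le.trans ?_
  rw [Polynomial.Chebyshev.natDegree_T, Int.natAbs_natCast]
  gcongr
  compute_degree

variable {Q : ℝ → ℝ} {b : ℕ} {K x t : ℝ}

lemma natDegree_expApprox_le (Q : ℝ → ℝ) (x : ℝ) :
    (expApprox Q x).natDegree ≤ expApproxOrder Q x * 2 :=
  Polynomial.natDegree_pow_le.trans (by gcongr; compute_degree)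

lemma one_add_sq_le_exp {u : ℝ} (hu : 0 ≤ u) : 1 + u ^ 2 ≤ exp u := by
  have hexp := sum_le_exp_of_nonneg hu 4
  simp only [Finset.sum_range_succ, Finset.range_zero, Finset.sum_empty, Nat.factorial] at hexp
  norm_num at hexp
  nlinarith [mul_nonneg hu (sq_nonneg (u - 3 / 2))]

namespace IsFreudExponent

lemma add_mul_eulerDeriv_le (hQ : IsFreudExponent Q b) (hxt : 4 * x ^ 2 ≤ t ^ 2) :
    Q x + 3 / 8 / 2 ^ b * eulerDeriv Q t ≤ Q t := by
  have hnear := hQ.add_half_mul_le x (t / 2)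
  have hfar := hQ.add_half_mul_le (t / 2) t
  have hscale := hQ.radialSlope_mul_le (l := 2) one_le_two (t / 2)
  rw [mul_div_cancel₀ t two_ne_zero] at hscale
  have hx := mul_nonneg (hQ.radialSlope_nonneg x) (by linarith : 0 ≤ (t / 2) ^ 2 - x ^ 2)
  have ht : 3 / 8 / 2 ^ b * eulerDeriv Q t ≤
      radialSlope Q (t / 2) / 2 * (t ^ 2 - (t / 2) ^ 2) := by
    rw [hQ.eulerDeriv_eq, div_mul_eq_mul_div, div_le_iff₀ (by positivity)]
    linarith [mul_le_mul_of_nonneg_right hscale (sq_nonneg t)]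
  linarith

lemma eval_expApprox_le_exp (hQ : IsFreudExponent Q b) (hK : 1 ≤ K) (hxt : K * |x| ≤ |t|)
    (ht : K ^ 2 ≤ eulerDeriv Q t) : (expApprox Q x).eval t ≤ exp (eulerDeriv Q t / K) := by
  have : 0 < K := one_pos.trans_le hK
  have habs : |x| ≤ |t| := (le_mul_of_one_le_left (abs_nonneg x) hK).trans hxt
  have hsq : K ^ 2 * x ^ 2 ≤ t ^ 2 := by
    rw [← sq_abs x, ← sq_abs t, ← mul_pow]
    exact pow_le_pow_left₀ (by positivity) hxt 2
  have heuler := hQ.eulerDeriv_nonneg t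
  have hscaled := hQ.mul_eulerDeriv_le habs hsq
  have horder := hQ.expApproxOrder_le x
  set J := (expApproxOrder Q x : ℝ)
  have hJ : 1 ≤ J := one_le_expApproxOrder Q x
  set y := expApproxStep Q x * (t ^ 2 - x ^ 2) with hy
  have hy0 : 0 ≤ y := mul_nonneg (hQ.expApproxStep_nonneg x) (sub_nonneg.2 (sq_le_sq.2 habs))
  have hJy : J * y ≤ eulerDeriv Q t / 2 := by
    rw [hy, ← mul_assoc, expApproxOrder_mul_step, hQ.eulerDeriv_eq]
    nlinarith [mul_nonneg (hQ.radialSlope_nonneg x) (sq_nonneg x),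
      mul_le_mul_of_nonneg_right (hQ.radialSlope_le_of_abs_le habs) (sq_nonneg t)]
  have hJK : J * K ^ 2 ≤ 2 * eulerDeriv Q t := by
    linarith [mul_le_mul_of_nonneg_right horder (sq_nonneg K)]
  have hsqrt : J * √y ≤ eulerDeriv Q t / K := by
    refine le_of_sq_le_sq ?_ (by positivity)
    rw [mul_pow, sq_sqrt hy0, div_pow, le_div_iff₀ (by positivity)]
    calc J ^ 2 * y * K ^ 2 = J * y * (J * K ^ 2) := by ring
      _ ≤ eulerDeriv Q t / 2 * (2 * eulerDeriv Q t) := by gcongr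
      _ = eulerDeriv Q t ^ 2 := by ring
  calc (expApprox Q x).eval t = (1 + √y ^ 2) ^ expApproxOrder Q x := by
        rw [eval_expApprox, sq_sqrt hy0]
    _ ≤ exp (√y) ^ expApproxOrder Q x := by gcongr; exact one_add_sq_le_exp (sqrt_nonneg y)
    _ = exp (J * √y) := (exp_nat_mul _ _).symm
    _ ≤ _ := exp_le_exp.2 hsqrt

end IsFreudExponent

/-- `expApprox Q x` times the weight decays like `exp (-κ t Q'(t))` at all points `t` that are large
and far out compared with `x`, both measured by `K`. -/
structure HasExpApproxDecay (Q : ℝ → ℝ) (κ K : ℝ) : Prop where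
  pos : 0 < κ
  le_one : κ ≤ 1
  ten_le : 10 ≤ K
  weightedEval_le : ∀ {x t : ℝ}, 0 ≤ x → K * x ≤ |t| → K ^ 2 ≤ eulerDeriv Q t →
    weightedEval Q (expApprox Q x) t ≤ exp (-Q x) * exp (-(κ * eulerDeriv Q t))

theorem IsFreudExponent.exists_hasExpApproxDecay (hQ : IsFreudExponent Q b) :
    ∃ κ K, HasExpApproxDecay Q κ K := by
  have hpow : (1 : ℝ) ≤ 2 ^ b := one_le_pow₀ one_le_two
  set κ : ℝ := 3 / 8 / 2 ^ b
  have hκ0 : 0 < κ := by positivity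
  have hκ1 : κ ≤ 3 / 8 := div_le_self (by norm_num) hpow
  have hK : 10 ≤ 2 / (κ / 2) := by rw [le_div_iff₀ (by positivity)]; linarith
  refine ⟨κ / 2, 2 / (κ / 2), by positivity, by linarith, hK, fun {x t} hx hxt ht => ?_⟩
  have hsq : 4 * x ^ 2 ≤ t ^ 2 := by
    have := pow_le_pow_left₀ (by positivity) ((by nlinarith : 2 * x ≤ _).trans hxt) 2
    rw [sq_abs] at this
    linarith
  have heval := hQ.eval_expApprox_le_exp (by linarith) (by rwa [abs_of_nonneg hx]) ht
  have hweight := hQ.add_mul_eulerDeriv_le hsq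
  rw [div_div_eq_mul_div] at heval
  calc weightedEval Q (expApprox Q x) t
      ≤ exp (eulerDeriv Q t * (κ / 2) / 2) * exp (-Q t) := by rw [weightedEval]; gcongr
    _ = exp (eulerDeriv Q t * (κ / 2) / 2 - Q t) := by rw [← exp_add, sub_eq_add_neg]
    _ ≤ exp (-Q x - κ / 2 * eulerDeriv Q t) := exp_le_exp.2 <| by
      linarith [mul_nonneg hκ0.le (hQ.eulerDeriv_nonneg t)]
    _ = _ := by rw [← exp_add, sub_eq_add_neg]

end

section

variable {Q : ℝ → ℝ} {b n : ℕ} {p : Polynomial ℝ} {z : Fin n → ℝ} {κ K L x t : ℝ} {m : ℕ}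

/-- `expApprox Q x` sharpened by the square of a Chebyshev bump. -/
noncomputable def sharpExpApprox (Q : ℝ → ℝ) (m : ℕ) (L x : ℝ) : Polynomial ℝ :=
  expApprox Q x * chebyshevBump m L x ^ 2

/-- The bulk regime: `x` is small compared with the scale `L`, and the degree `m` of the bump is so
small compared with `L Q'(L)` that the decay of `expApprox Q x` beats the growth of the bump. -/
structure IsBulkScale (Q : ℝ → ℝ) (κ K : ℝ) (m : ℕ) (L x : ℝ) : Prop where
  one_le : 1 ≤ L
  sq_le : K ^ 2 ≤ eulerDeriv Q L
  nonneg : 0 ≤ x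
  mul_le : K * x ≤ L
  two_le : 2 ≤ m
  le_mul : (m : ℝ) ≤ κ / 16 * eulerDeriv Q L

lemma weightedEval_sharpExpApprox (Q : ℝ → ℝ) (m : ℕ) (L x t : ℝ) :
    weightedEval Q (sharpExpApprox Q m L x) t =
      weightedEval Q (expApprox Q x) t * (chebyshevBump m L x).eval t ^ 2 := by
  rw [weightedEval, weightedEval, sharpExpApprox, Polynomial.eval_mul, Polynomial.eval_pow]
  ring

lemma two_le_cosh_two_sq : 2 ≤ cosh 2 ^ 2 := by
  have := one_add_sq_le_exp (u := 2) (by norm_num)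
  rw [cosh_eq]
  nlinarith [exp_pos (-2)]

lemma sqrt_cosh_sub_one_le {a : ℝ} (ha : 0 ≤ a) (ha1 : a ≤ 1) : √(cosh a - 1) ≤ a := by
  have hsq : |a ^ 2 / 2| ≤ 1 := by rw [abs_of_nonneg (by positivity)]; nlinarith
  have hexp := (abs_le.1 (abs_exp_sub_one_le hsq)).2
  rw [abs_of_nonneg (by positivity)] at hexp
  rw [sqrt_le_left ha]
  linarith [cosh_le_exp_half_sq a]

namespace IsBulkScale

lemma ten_mul_le (hbulk : IsBulkScale Q κ K m L x) (hK : 10 ≤ K) : 10 * x ≤ L :=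
  (mul_le_mul_of_nonneg_right hK hbulk.nonneg).trans hbulk.mul_le

lemma le_abs_of_two_mul_sq_le (hbulk : IsBulkScale Q κ K m L x) (hK : 10 ≤ K)
    (ht : 2 * L ^ 2 ≤ (t - x) ^ 2) : L ≤ |t| := by
  have hxL := hbulk.ten_mul_le hK
  have := hbulk.one_le
  by_contra! htL
  have htri := abs_sub t x
  rw [abs_of_nonneg hbulk.nonneg] at htri
  have hsq := pow_lt_pow_left₀ (by linarith : |t - x| < 11 / 10 * L) (abs_nonneg _) two_ne_zero
  rw [sq_abs] at hsq
  nlinarith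

lemma eval_chebyshevBump_sq_le_exp (hQ : IsFreudExponent Q b) (hdecay : HasExpApproxDecay Q κ K)
    (hbulk : IsBulkScale Q κ K m L x) (ht : cosh (2 / m) - (t - x) ^ 2 / L ^ 2 ≤ -1)
    (htL : L ≤ |t|) :
    (chebyshevBump m L x).eval t ^ 2 ≤ exp (κ * eulerDeriv Q t) := by
  have hL := hbulk.one_le
  have hL2 : 0 < L ^ 2 := by positivity
  have hxt : x ^ 2 ≤ t ^ 2 := by
    rw [sq_le_sq, abs_of_nonneg hbulk.nonneg]
    linarith [hbulk.ten_mul_le hdecay.ten_le]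
  set v := (t - x) ^ 2 / L ^ 2
  set s := t ^ 2 / L ^ 2
  have hvs : v ≤ 4 * s := by
    rw [mul_div_assoc', div_le_div_iff_of_pos_right hL2]
    nlinarith [sq_nonneg (t + x)]
  have hs : s * eulerDeriv Q L ≤ eulerDeriv Q t :=
    hQ.mul_eulerDeriv_le (by rwa [abs_of_pos (by linarith)])
      (div_mul_cancel₀ _ hL2.ne').le
  have habs : |cosh (2 / m) - v| = v - cosh (2 / m) := by
    rw [abs_of_nonpos (by linarith), neg_sub]
  have hcosh := cosh_pos (2 / m)
  rw [eval_chebyshevBump]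
  calc _ ≤ (2 * |cosh (2 / m) - v|) ^ (2 * m) :=
        chebyshev_eval_sq_le_pow m (by rw [habs]; linarith)
    _ ≤ exp (8 * s) ^ (2 * m) := by
        refine pow_le_pow_left₀ (by positivity) ?_ _
        rw [habs]
        linarith [add_one_le_exp (8 * s)]
    _ = exp (16 * m * s) := by rw [← exp_nat_mul]; congr 1; push_cast; ring
    _ ≤ exp (κ * eulerDeriv Q t) := exp_le_exp.2 <| by
        have := hdecay.pos
        calc 16 * m * s ≤ 16 * (κ / 16 * eulerDeriv Q L) * s := by gcongr; exact hbulk.le_mul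
          _ = κ * (s * eulerDeriv Q L) := by ring
          _ ≤ _ := by gcongr

lemma weightedEval_sharpExpApprox_le (hQ : IsFreudExponent Q b) (hdecay : HasExpApproxDecay Q κ K)
    (hbulk : IsBulkScale Q κ K m L x) (ht : cosh (2 / m) - 1 ≤ (t - x) ^ 2 / L ^ 2) :
    weightedEval Q (sharpExpApprox Q m L x) t ≤ exp (-Q x) := by
  have hL := hbulk.one_le
  have hw := hQ.weightedEval_expApprox_nonneg x t
  have hpeak := hQ.peaksAt_expApprox x t
  rw [weightedEval_expApprox_self] at hpeak
  rw [weightedEval_sharpExpApprox]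
  rcases le_total (-1) (cosh (2 / m) - (t - x) ^ 2 / L ^ 2) with hmid | hfar
  · have hbump := chebyshev_eval_sq_le_one m (abs_le.2 ⟨hmid, by linarith⟩)
    rw [← eval_chebyshevBump] at hbump
    exact (mul_le_of_le_one_right hw hbump).trans hpeak
  have htL := hbulk.le_abs_of_two_mul_sq_le (t := t) hdecay.ten_le <| by
    rw [← le_div_iff₀ (by positivity)]
    linarith [one_le_cosh (2 / m)]
  have hFt : eulerDeriv Q L ≤ eulerDeriv Q t :=
    hQ.eulerDeriv_le_of_abs_le (by rwa [abs_of_pos (by linarith)])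
  calc _ ≤ exp (-Q x) * exp (-(κ * eulerDeriv Q t)) * exp (κ * eulerDeriv Q t) :=
        mul_le_mul (hdecay.weightedEval_le hbulk.nonneg (hbulk.mul_le.trans htL)
          (hbulk.sq_le.trans hFt)) (hbulk.eval_chebyshevBump_sq_le_exp hQ hdecay hfar htL)
          (sq_nonneg _) (by positivity)
    _ = exp (-Q x) := by rw [mul_assoc, ← exp_add, neg_add_cancel, exp_zero, mul_one]

lemma weightedEval_sharpExpApprox_self (hbulk : IsBulkScale Q κ K m L x) :
    weightedEval Q (sharpExpApprox Q m L x) x = exp (-Q x) * cosh 2 ^ 2 := by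
  have hm := hbulk.two_le
  rw [weightedEval_sharpExpApprox, weightedEval_expApprox_self,
    eval_chebyshevBump_self (by omega)]

lemma eval_sharpExpApprox_self (hbulk : IsBulkScale Q κ K m L x) :
    (sharpExpApprox Q m L x).eval x = cosh 2 ^ 2 := by
  have hm := hbulk.two_le
  rw [sharpExpApprox, Polynomial.eval_mul, Polynomial.eval_pow, eval_expApprox_self,
    eval_chebyshevBump_self (by omega), one_mul]

lemma peaksAt_sharpExpApprox (hQ : IsFreudExponent Q b) (hdecay : HasExpApproxDecay Q κ K)
    (hbulk : IsBulkScale Q κ K m L x) : PeaksAt Q (sharpExpApprox Q m L x) x := by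
  intro t
  have hm := hbulk.two_le
  rw [hbulk.weightedEval_sharpExpApprox_self]
  rcases le_total (cosh (2 / m) - 1) ((t - x) ^ 2 / L ^ 2) with hfar | hnear
  · refine (hbulk.weightedEval_sharpExpApprox_le hQ hdecay hfar).trans ?_
    exact le_mul_of_one_le_right (exp_pos _).le (by linarith [two_le_cosh_two_sq])
  · have hpeak := hQ.peaksAt_expApprox x t
    rw [weightedEval_expApprox_self] at hpeak
    rw [weightedEval_sharpExpApprox]
    exact mul_le_mul hpeak (eval_chebyshevBump_sq_le_cosh_sq (by omega) hnear) (sq_nonneg _)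
      (exp_pos _).le

lemma natDegree_sharpExpApprox_lt (hQ : IsFreudExponent Q b) (hdecay : HasExpApproxDecay Q κ K)
    (hbulk : IsBulkScale Q κ K m L x) (hn : eulerDeriv Q L = n) :
    (sharpExpApprox Q m L x).natDegree < 2 * n := by
  have hK := hdecay.ten_le
  have hxL := hbulk.ten_mul_le hK
  have hsq := hbulk.sq_le
  have hm := hbulk.le_mul
  have hx := hQ.mul_eulerDeriv_le (l := 100) (s := x) (t := L)
    (by rw [abs_of_nonneg hbulk.nonneg]; exact le_abs.2 (Or.inl (by linarith [hbulk.nonneg])))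
    (by nlinarith [hbulk.nonneg])
  rw [hn] at hsq hm hx
  have hdeg : (sharpExpApprox Q m L x).natDegree ≤ expApproxOrder Q x * 2 + 2 * (m * 2) :=
    Polynomial.natDegree_mul_le.trans <| add_le_add (natDegree_expApprox_le Q x) <|
      Polynomial.natDegree_pow_le.trans (by gcongr; exact natDegree_chebyshevBump_le m L x)
  refine hdeg.trans_lt ((Nat.cast_lt (α := ℝ)).1 ?_)
  push_cast
  nlinarith [hQ.expApproxOrder_le x, hdecay.le_one]

lemma le_integral_peakDefect (hQ : IsFreudExponent Q b) (hdecay : HasExpApproxDecay Q κ K)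
    (hbulk : IsBulkScale Q κ K m L x) :
    cosh 2 ^ 2 * exp (-Q x) * m ≤
      16 * L * ∫ t, peakDefect Q (sharpExpApprox Q m L x) x t := by
  have hpeak := hbulk.peaksAt_sharpExpApprox hQ hdecay
  have hD := two_le_cosh_two_sq
  have hL : 0 < L := one_pos.trans_le hbulk.one_le
  have hm2 : (2 : ℝ) ≤ m := by exact_mod_cast hbulk.two_le
  have hm : (0 : ℝ) < m := two_pos.trans_le hm2
  set D := cosh 2 ^ 2
  set c := cosh (2 / m)
  have hc : 0 < c - 1 := sub_pos.2 (one_lt_cosh.2 (by positivity))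
  have : 0 < √(c - 1) := sqrt_pos.2 hc
  have he2 : √(c - 1) ^ 2 = c - 1 := sq_sqrt hc.le
  have hem : √(c - 1) * m ≤ 2 :=
    (le_div_iff₀ hm).1 (sqrt_cosh_sub_one_le (by positivity) ((div_le_one hm).2 hm2))
  set l := √(c - 1) * L with hl
  have hl0 : 0 < l := by positivity
  have hlower : ∀ t ∈ Set.Ioc (x + l) (x + l + l),
      exp (-Q x) * D / (8 * l ^ 2) ≤ peakDefect Q (sharpExpApprox Q m L x) x t := by
    intro t ⟨htl, htu⟩
    have hfar := hbulk.weightedEval_sharpExpApprox_le hQ hdecay (t := t) <| by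
      rw [le_div_iff₀ (by positivity), ← he2, ← mul_pow]
      exact pow_le_pow_left₀ hl0.le (by linarith) 2
    have hupper : (t - x) ^ 2 ≤ (2 * l) ^ 2 := pow_le_pow_left₀ (by linarith) (by linarith) 2
    rw [peakDefect, hbulk.weightedEval_sharpExpApprox_self,
      div_le_div_iff₀ (by positivity) (pow_pos (by linarith) 2)]
    calc exp (-Q x) * D * (t - x) ^ 2 ≤ exp (-Q x) * D * (2 * l) ^ 2 := by gcongr
      _ = exp (-Q x) * D / 2 * (8 * l ^ 2) := by ring
      _ ≤ _ := by gcongr; nlinarith [exp_pos (-Q x)]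
  have h_int := mul_le_integral_of_forall_mem_Ioc (hpeak.integral_peakDefect hQ).1
    hpeak.peakDefect_nonneg hl0.le hlower
  rw [(by field_simp : exp (-Q x) * D / (8 * l ^ 2) * l = exp (-Q x) * D / (8 * l)),
    div_le_iff₀ (by positivity)] at h_int
  set I := ∫ t, peakDefect Q (sharpExpApprox Q m L x) x t
  have hI : 0 ≤ I := integral_nonneg hpeak.peakDefect_nonneg
  calc D * exp (-Q x) * m = exp (-Q x) * D * m := by ring
    _ ≤ I * (8 * l) * m := by gcongr
    _ = 8 * L * I * (√(c - 1) * m) := by rw [hl]; ring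
    _ ≤ 8 * L * I * 2 := by gcongr
    _ = _ := by ring

end IsBulkScale

theorem IsOrthonormalNodes.eval_sq_mul_exp_mul_le (hQ : IsFreudExponent Q b)
    (hdecay : HasExpApproxDecay Q κ K) (hbulk : IsBulkScale Q κ K m L x)
    (hp : IsOrthonormalNodes Q p z) (hn : eulerDeriv Q L = n) :
    p.eval x ^ 2 * exp (-Q x) * m ≤ 16 * L * ladderCoeff Q p x := by
  have hpeak := hbulk.peaksAt_sharpExpApprox hQ hdecay
  have hdeg : (diffQuot (diffQuot (sharpExpApprox Q m L x) x) x).degree < (2 * n : ℕ) :=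
    ((Polynomial.degree_divByMonic_le _ _).trans (Polynomial.degree_divByMonic_le _ _)).trans_lt <|
      Polynomial.degree_le_natDegree.trans_lt <| by
        exact_mod_cast hbulk.natDegree_sharpExpApprox_lt hQ hdecay hn
  have hsum := hp.sum_christoffel_mul_diffQuot_sq_eq hQ hdeg hpeak
  have hsum_nonneg : 0 ≤ ∑ k, christoffel Q z k * (sharpExpApprox Q m L x).eval (z k) *
      (diffQuot p (z k)).eval x ^ 2 := Finset.sum_nonneg fun k _ => by
    rw [sharpExpApprox, Polynomial.eval_mul, Polynomial.eval_pow]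
    have := hp.christoffel_pos hQ k
    have := hQ.eval_expApprox_nonneg x (z k)
    positivity
  rw [hbulk.eval_sharpExpApprox_self] at hsum
  have hlower := mul_le_mul_of_nonneg_left (hbulk.le_integral_peakDefect hQ hdecay)
    (sq_nonneg (p.eval x))
  have hL := hbulk.one_le
  refine le_of_mul_le_mul_left ?_ (two_pos.trans_le two_le_cosh_two_sq)
  nlinarith

end

section

variable {Q : ℝ → ℝ} {b n : ℕ} {p : Polynomial ℝ} {z : Fin n → ℝ} {κ K L x : ℝ}

namespace IsFreudExponent

lemma continuous_eulerDeriv (hQ : IsFreudExponent Q b) : Continuous (eulerDeriv Q) :=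
  continuous_id.mul hQ.continuous_deriv

lemma isPolyBounded_eulerDeriv (hQ : IsFreudExponent Q b) : IsPolyBounded (eulerDeriv Q) :=
  IsPolyBounded.id.mul hQ.isPolyBounded_deriv

lemma radialSlope_le_add (hQ : IsFreudExponent Q b) (hL : L ≠ 0) (t : ℝ) :
    radialSlope Q t ≤ radialSlope Q L + 1 / L ^ 2 * eulerDeriv Q t := by
  have ht := hQ.radialSlope_nonneg t
  rcases le_total |t| |L| with htL | htL
  · have := hQ.eulerDeriv_nonneg t
    exact (hQ.radialSlope_le_of_abs_le htL).trans (le_add_of_nonneg_right (by positivity))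
  · have hone : 1 ≤ t ^ 2 / L ^ 2 := (one_le_div (by positivity)).2 (sq_le_sq.2 htL)
    rw [hQ.eulerDeriv_eq]
    calc radialSlope Q t ≤ radialSlope Q t * (t ^ 2 / L ^ 2) := le_mul_of_one_le_right ht hone
      _ = 0 + 1 / L ^ 2 * (radialSlope Q t * t ^ 2) := by ring
      _ ≤ _ := by gcongr; exact hQ.radialSlope_nonneg L

/-- The solutions `L n` of `t Q'(t) = n` play the role of the Mhaskar-Rakhmanov-Saff numbers. -/
lemma exists_eulerDeriv_eq_natCast (hQ : IsFreudExponent Q b) :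
    ∃ L : ℕ → ℝ, Tendsto L atTop atTop ∧ ∀ n, 0 ≤ L n ∧ eulerDeriv Q (L n) = n := by
  have hh1 := hQ.radialSlope_one_pos
  have hex : ∀ n : ℕ, ∃ L : ℝ, 0 ≤ L ∧ eulerDeriv Q L = n := fun n => by
    set T : ℝ := 1 + n / radialSlope Q 1 with hT
    have hT1 : 1 ≤ T := le_add_of_nonneg_right (by positivity)
    have hn : (n : ℝ) ∈ Set.Icc (eulerDeriv Q 0) (eulerDeriv Q T) := by
      refine ⟨by rw [eulerDeriv, zero_mul]; positivity, ?_⟩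
      have hslope := hQ.radialSlope_one_le (hT1.trans (le_abs_self T))
      rw [hQ.eulerDeriv_eq]
      calc (n : ℝ) ≤ radialSlope Q 1 * T := by rw [hT]; field_simp; linarith
        _ ≤ radialSlope Q 1 * T ^ 2 := by gcongr; nlinarith
        _ ≤ _ := by gcongr
    obtain ⟨L, hL, heq⟩ :=
      intermediate_value_Icc (by linarith) hQ.continuous_eulerDeriv.continuousOn hn
    exact ⟨L, hL.1, heq⟩
  choose L hL using hex
  refine ⟨L, tendsto_atTop.2 fun A => ?_, hL⟩
  filter_upwards [tendsto_natCast_atTop_atTop.eventually_gt_atTop (eulerDeriv Q A)] with n hn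
  by_contra! hlt
  have hmono := hQ.eulerDeriv_le_of_abs_le (s := L n) (t := A)
    (by rw [abs_of_nonneg (hL n).1]; exact hlt.le.trans (le_abs_self A))
  linarith [(hL n).2]

end IsFreudExponent

namespace IsOrthonormalNodes

lemma weightedIntegral_sq_mul_eulerDeriv (hQ : IsFreudExponent Q b)
    (hp : IsOrthonormalNodes Q p z) :
    weightedIntegral Q (fun t => p.eval t ^ 2 * eulerDeriv Q t) = 2 * n + 1 := by
  set r : Polynomial ℝ := Polynomial.X * p.derivative - Polynomial.C (n : ℝ) * p with hr
  have hr_deg : r.degree < n := by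
    refine (Polynomial.degree_lt_iff_coeff_zero _ _).2 fun m hm => ?_
    rw [hr, Polynomial.coeff_sub, Polynomial.coeff_C_mul]
    rcases m with _ | m
    · rw [Nat.le_zero.1 hm, Polynomial.coeff_X_mul_zero, Nat.cast_zero, zero_mul, sub_zero]
    rw [Polynomial.coeff_X_mul, Polynomial.coeff_derivative]
    rcases hm.eq_or_lt with rfl | hlt
    · push_cast; ring
    · rw [Polynomial.coeff_eq_zero_of_natDegree_lt (hp.natDegree_eq ▸ hlt)]; ring
  have hpb := IsPolyBounded.polynomial p
  have hsplit : (fun t => (Polynomial.X * p ^ 2).derivative.eval t -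
      (Polynomial.X * p ^ 2).eval t * deriv Q t) = fun t =>
        ((2 * n + 1) * p.eval t ^ 2 + 2 * (p.eval t * r.eval t)) -
          p.eval t ^ 2 * eulerDeriv Q t := by
    funext t
    simp only [hr, eulerDeriv, Polynomial.derivative_mul, Polynomial.derivative_X,
      Polynomial.derivative_pow, Polynomial.eval_add, Polynomial.eval_sub, Polynomial.eval_mul,
      Polynomial.eval_pow, Polynomial.eval_X, Polynomial.eval_C, Polynomial.eval_one]
    push_cast
    ring
  have hparts := weightedIntegral_derivative_sub hQ (Polynomial.X * p ^ 2)
  rw [hsplit, weightedIntegral_sub hQ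
      (((hpb.pow 2).const_mul _).add ((hpb.mul (.polynomial r)).const_mul 2))
      ((hpb.pow 2).mul hQ.isPolyBounded_eulerDeriv),
    weightedIntegral_add hQ ((hpb.pow 2).const_mul _) ((hpb.mul (.polynomial r)).const_mul 2),
    weightedIntegral_const_mul, weightedIntegral_const_mul, hp.normalized,
    hp.orthogonal r hr_deg] at hparts
  linarith

lemma weightedIntegral_sq_mul_radialSlope_le (hQ : IsFreudExponent Q b)
    (hp : IsOrthonormalNodes Q p z) (hL : 1 ≤ eulerDeriv Q L) (hn : eulerDeriv Q L = n) :
    weightedIntegral Q (fun t => p.eval t ^ 2 * radialSlope Q t) ≤ 4 * radialSlope Q L := by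
  have hsq := (IsPolyBounded.polynomial p).pow 2
  have hL0 : L ≠ 0 := by
    rintro rfl
    rw [eulerDeriv, zero_mul] at hL
    linarith
  have hmono := weightedIntegral_mono hQ (hsq.mul hQ.isPolyBounded_radialSlope)
    ((hsq.const_mul (radialSlope Q L)).add
      ((hsq.mul hQ.isPolyBounded_eulerDeriv).const_mul (1 / L ^ 2))) fun t => by
        nlinarith [mul_le_mul_of_nonneg_left (hQ.radialSlope_le_add hL0 t) (sq_nonneg (p.eval t))]
  rw [weightedIntegral_add hQ (hsq.const_mul _)
      ((hsq.mul hQ.isPolyBounded_eulerDeriv).const_mul _), weightedIntegral_const_mul,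
    weightedIntegral_const_mul, hp.normalized, hp.weightedIntegral_sq_mul_eulerDeriv hQ] at hmono
  have hbound : 1 / L ^ 2 * (2 * (n : ℝ) + 1) ≤ 3 * radialSlope Q L := by
    rw [one_div, inv_mul_le_iff₀ (by positivity)]
    linarith [hQ.eulerDeriv_eq L]
  linarith

lemma ladderCoeff_le_of_radialSlope_le (hQ : IsFreudExponent Q b)
    (hp : IsOrthonormalNodes Q p z) (hL : 1 ≤ eulerDeriv Q L) (hn : eulerDeriv Q L = n) {M : ℝ}
    (hxM : radialSlope Q x ≤ M) (hLM : radialSlope Q L ≤ M) :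
    ladderCoeff Q p x ≤ 5 * b * M := by
  have h_int := hp.weightedIntegral_sq_mul_radialSlope_le hQ hL hn
  calc ladderCoeff Q p x ≤ _ := hp.ladderCoeff_le hQ x
    _ ≤ b * (M + 4 * M) := by gcongr; linarith
    _ = 5 * b * M := by ring

lemma eval_sq_mul_exp_le_div (hQ : IsFreudExponent Q b) (hdecay : HasExpApproxDecay Q κ K)
    (hp : IsOrthonormalNodes Q p z) (hL : 1 ≤ L) (hn : eulerDeriv Q L = n) (hnK : K ^ 2 ≤ n)
    (hnκ : 32 / κ ≤ n) (hx : 0 ≤ x) (hxL : K * x ≤ L) :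
    p.eval x ^ 2 * exp (-Q x) ≤ 2560 * b / κ / L := by
  have hκ := hdecay.pos
  have hK := hdecay.ten_le
  rw [div_le_iff₀ hκ] at hnκ
  have hfloor : κ / 16 * n < ⌊κ / 16 * n⌋₊ + 1 := Nat.lt_floor_add_one _
  have hfloor_le : (⌊κ / 16 * n⌋₊ : ℝ) ≤ κ / 16 * n := Nat.floor_le (by positivity)
  have hfloor_two : 2 ≤ ⌊κ / 16 * n⌋₊ := Nat.le_floor (by push_cast; linarith)
  set m := ⌊κ / 16 * n⌋₊
  have hm : κ / 32 * n ≤ m := by linarith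
  have hbulk : IsBulkScale Q κ K m L x :=
    ⟨hL, by rwa [hn], hx, hxL, hfloor_two, by rwa [hn]⟩
  have hn1 : (1 : ℝ) ≤ n := by nlinarith
  have hpoly := hp.eval_sq_mul_exp_mul_le hQ hdecay hbulk hn
  have hcoeff : ladderCoeff Q p x ≤ 5 * b * radialSlope Q L :=
    hp.ladderCoeff_le_of_radialSlope_le hQ (by rwa [hn]) hn
      (hQ.radialSlope_le_of_abs_le (abs_le_abs_of_nonneg hx (by nlinarith))) le_rfl
  have hnL : (n : ℝ) = radialSlope Q L * L ^ 2 := by rw [← hn, hQ.eulerDeriv_eq]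
  have hmain : p.eval x ^ 2 * exp (-Q x) * (κ / 32 * n) * L ≤ 80 * b * n := by
    calc _ ≤ p.eval x ^ 2 * exp (-Q x) * m * L := by gcongr
      _ ≤ 16 * L * ladderCoeff Q p x * L := mul_le_mul_of_nonneg_right hpoly (by linarith)
      _ ≤ 16 * L * (5 * b * radialSlope Q L) * L := by gcongr
      _ = _ := by rw [hnL]; ring
  rw [le_div_iff₀ (by linarith), le_div_iff₀ hκ]
  refine le_of_mul_le_mul_right ?_ (one_pos.trans_le hn1)
  linarith

lemma half_radialSlope_one_le_weightedIntegral (hQ : IsFreudExponent Q b)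
    (hp : IsOrthonormalNodes Q p z)
    (hsmall : ∀ t ∈ Set.Icc (-1 : ℝ) 1, p.eval t ^ 2 * exp (-Q t) ≤ 1 / 4) :
    radialSlope Q 1 / 2 ≤ weightedIntegral Q fun t => p.eval t ^ 2 * radialSlope Q t := by
  have hh1 := hQ.radialSlope_one_pos
  have hsq := (IsPolyBounded.polynomial p).pow 2
  have hslope := (hsq.mul hQ.isPolyBounded_radialSlope).integrable hQ
  have hind : Integrable ((Set.Icc (-1 : ℝ) 1).indicator fun _ => radialSlope Q 1 * (1 / 4)) :=
    (integrableOn_const (by simp)).integrable_indicator measurableSet_Icc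
  have hle := integral_mono ((hsq.const_mul (radialSlope Q 1)).integrable hQ) (hslope.add hind)
    fun t => by
      simp only [Pi.add_apply]
      by_cases ht : t ∈ Set.Icc (-1 : ℝ) 1
      · have hnonneg := mul_nonneg (mul_nonneg (sq_nonneg (p.eval t)) (hQ.radialSlope_nonneg t))
          (exp_pos (-Q t)).le
        rw [Set.indicator_of_mem ht]
        nlinarith [hsmall t ht]
      · have hfar : 1 ≤ |t| := le_of_not_gt fun hlt => ht (abs_le.1 hlt.le)
        rw [Set.indicator_of_notMem ht, add_zero, mul_comm (radialSlope Q 1)]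
        gcongr
        exact hQ.radialSlope_one_le hfar
  rw [integral_add' hslope hind, integral_indicator measurableSet_Icc, setIntegral_const,
    volume_real_Icc, smul_eq_mul] at hle
  change weightedIntegral Q (fun t => radialSlope Q 1 * p.eval t ^ 2) ≤
    weightedIntegral Q (fun t => p.eval t ^ 2 * radialSlope Q t) + _ at hle
  rw [weightedIntegral_const_mul, hp.normalized] at hle
  norm_num at hle
  linarith

lemma eval_abs_sq (hQ : IsFreudExponent Q b) (hp : IsOrthonormalNodes Q p z) (t : ℝ) :
    p.eval |t| ^ 2 = p.eval t ^ 2 := by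
  rcases abs_choice t with h | h
  · rw [h]
  · rw [h, hp.eval_neg hQ, mul_pow, ← pow_mul, mul_comm n, pow_mul, neg_one_sq, one_pow, one_mul]

lemma min_mul_curvatureScale_le_ladderCoeff (hQ : IsFreudExponent Q b)
    (hp : IsOrthonormalNodes Q p z)
    (hsmall : ∀ t ∈ Set.Icc (0 : ℝ) 1, p.eval t ^ 2 * exp (-Q t) ≤ 1 / 4) (x : ℝ) :
    min (1 / 4) (radialSlope Q 1 / 8) * curvatureScale Q x ≤ ladderCoeff Q p x := by
  have hslope := hp.half_radialSlope_le_ladderCoeff hQ x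
  have h_int := half_weightedIntegral_le_ladderCoeff hQ p x
  have hlower := hp.half_radialSlope_one_le_weightedIntegral hQ fun t ht => by
    rw [← hQ.apply_abs, ← hp.eval_abs_sq hQ]
    exact hsmall |t| ⟨abs_nonneg t, abs_le.2 ht⟩
  have h1 := min_le_left (1 / 4) (radialSlope Q 1 / 8)
  have h2 := min_le_right (1 / 4) (radialSlope Q 1 / 8)
  rw [curvatureScale]
  nlinarith [hQ.radialSlope_nonneg x]

end IsOrthonormalNodes

/-- The bounds on `p` and on the coefficients `ladderCoeff Q p` that hold for all degrees `n ≥ N`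
with constants independent of `n`; `L n` is the scale of the zeros in degree `n`. -/
structure UniformBounds (Q : ℝ → ℝ) (K C c : ℝ) (N : ℕ) (L : ℕ → ℝ) : Prop where
  ten_le : 10 ≤ K
  one_le : 1 ≤ C
  pos : 0 < c
  tendsto : Tendsto L atTop atTop
  one_le_scale : ∀ {n}, N ≤ n → 1 ≤ L n
  eval_sq_mul_exp_le : ∀ {n : ℕ} {p : Polynomial ℝ} {z : Fin n → ℝ}, N ≤ n →
    IsOrthonormalNodes Q p z → ∀ {x}, 0 ≤ x → K * x ≤ L n → p.eval x ^ 2 * exp (-Q x) ≤ C / L n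
  ladderCoeff_le : ∀ {n : ℕ} {p : Polynomial ℝ} {z : Fin n → ℝ}, N ≤ n →
    IsOrthonormalNodes Q p z → ∀ {x}, L n ≤ K * x → ladderCoeff Q p x ≤ C * radialSlope Q x
  le_ladderCoeff : ∀ {n : ℕ} {p : Polynomial ℝ} {z : Fin n → ℝ}, N ≤ n →
    IsOrthonormalNodes Q p z → ∀ x, c * curvatureScale Q x ≤ ladderCoeff Q p x

theorem IsFreudExponent.exists_uniformBounds (hQ : IsFreudExponent Q b) :
    ∃ K C c N L, UniformBounds Q K C c N L := by
  obtain ⟨κ, K, hdecay⟩ := hQ.exists_hasExpApproxDecay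
  obtain ⟨L, hLtop, hL⟩ := hQ.exists_eulerDeriv_eq_natCast
  have hκ := hdecay.pos
  have hK := hdecay.ten_le
  have hh1 := hQ.radialSlope_one_pos
  have hKb : (1 : ℝ) ≤ K ^ b := one_le_pow₀ (by linarith)
  have hin : 0 ≤ 2560 * b / κ := by positivity
  set C := 2560 * b / κ + 5 * b * K ^ b + 1
  have hout : 5 * b * K ^ b ≤ C := by linarith
  have hC1 : 1 ≤ C := by linarith [(by positivity : 0 ≤ 5 * b * K ^ b)]
  obtain ⟨N, hN⟩ := eventually_atTop.1 <|
    (tendsto_natCast_atTop_atTop.eventually_ge_atTop (K ^ 2)).and <|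
      (tendsto_natCast_atTop_atTop.eventually_ge_atTop (32 / κ)).and <|
        hLtop.eventually_ge_atTop (K + 4 * C)
  have hinner : ∀ {n : ℕ} {p : Polynomial ℝ} {z : Fin n → ℝ}, N ≤ n →
      IsOrthonormalNodes Q p z → ∀ {x}, 0 ≤ x → K * x ≤ L n →
        p.eval x ^ 2 * exp (-Q x) ≤ C / L n := fun {n p z} hn hp x hx hxL => by
    obtain ⟨hnK, hnκ, hLn⟩ := hN n hn
    refine (hp.eval_sq_mul_exp_le_div hQ hdecay (by linarith) (hL n).2 hnK hnκ hx hxL).trans ?_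
    gcongr
    · exact (hL n).1
    · linarith [(by positivity : 0 ≤ 5 * b * K ^ b)]
  refine ⟨K, C, min (1 / 4) (radialSlope Q 1 / 8), N, L, hK, hC1, by positivity, hLtop,
    fun {n} hn => by linarith [(hN n hn).2.2], hinner, fun {n p z} hn hp x hxL => ?_,
    fun {n p z} hn hp x => hp.min_mul_curvatureScale_le_ladderCoeff hQ (fun t ht => ?_) x⟩
  · have hslope := hQ.radialSlope_nonneg x
    have hLx : radialSlope Q (L n) ≤ K ^ b * radialSlope Q x :=
      (hQ.radialSlope_le_of_abs_le (abs_le_abs_of_nonneg (hL n).1 hxL)).trans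
        (hQ.radialSlope_mul_le (by linarith) x)
    calc ladderCoeff Q p x ≤ 5 * b * (K ^ b * radialSlope Q x) :=
          hp.ladderCoeff_le_of_radialSlope_le hQ (by rw [(hL n).2]; nlinarith [(hN n hn).1])
            (hL n).2 (le_mul_of_one_le_left hslope hKb) hLx
      _ = 5 * b * K ^ b * radialSlope Q x := by ring
      _ ≤ _ := by gcongr
  · have hLn := (hN n hn).2.2
    refine (hinner hn hp ht.1 (by nlinarith [ht.2])).trans ?_
    rw [div_le_iff₀ (by linarith)]
    linarith

end

/-! ### Uniform boundedness of the Grünwald operators -/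

section

variable {Q tw : ℝ → ℝ} {b n N : ℕ} {p : Polynomial ℝ} {z : Fin n → ℝ} {D K C c x : ℝ} {L : ℕ → ℝ}

/-- The weight `tw` is comparable to `e^{-Q} / curvatureScale Q` up to the factor `D`. The modified
weight is of this form, since `curvatureScale Q x` is comparable to `Q'(x) / x` for `|x| ≥ 1`. -/
structure IsComparableWeight (Q tw : ℝ → ℝ) (D : ℝ) : Prop where
  one_le : 1 ≤ D
  exp_neg_le : ∀ x, exp (-Q x) ≤ D * curvatureScale Q x * tw x
  le : ∀ x, curvatureScale Q x * tw x ≤ D * exp (-Q x)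

namespace IsComparableWeight

lemma pos (htw : IsComparableWeight Q tw D) (hQ : IsFreudExponent Q b) (t : ℝ) : 0 < tw t :=
  pos_of_mul_pos_right ((exp_pos _).trans_le (htw.exp_neg_le t))
    (mul_nonneg (zero_le_one.trans htw.one_le) (hQ.curvatureScale_pos t).le)

lemma inv_le (htw : IsComparableWeight Q tw D) (hQ : IsFreudExponent Q b) (t : ℝ) :
    (tw t)⁻¹ ≤ D * curvatureScale Q t * exp (Q t) := by
  rw [inv_le_iff_one_le_mul₀ (htw.pos hQ t)]
  calc 1 = exp (-Q t) * exp (Q t) := by rw [← exp_add, neg_add_cancel, exp_zero]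
    _ ≤ D * curvatureScale Q t * tw t * exp (Q t) := by gcongr; exact htw.exp_neg_le t
    _ = _ := by ring

lemma le_mul_exp_neg (htw : IsComparableWeight Q tw D) (hQ : IsFreudExponent Q b) (t : ℝ) :
    tw t ≤ D * exp (-Q t) :=
  (le_mul_of_one_le_left (htw.pos hQ t).le (hQ.one_le_curvatureScale t)).trans (htw.le t)

lemma le_mul_exp_neg_zero (htw : IsComparableWeight Q tw D) (hQ : IsFreudExponent Q b) (t : ℝ) :
    tw t ≤ D * exp (-Q 0) :=
  (htw.le_mul_exp_neg hQ t).trans <| mul_le_mul_of_nonneg_left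
    (exp_le_exp.2 (neg_le_neg (hQ.apply_zero_le t))) (zero_le_one.trans htw.one_le)

end IsComparableWeight

namespace IsOrthonormalNodes

lemma diffQuot_node_sq_of_ne (hp : IsOrthonormalNodes Q p z) {k : Fin n} (hne : x ≠ z k) :
    (diffQuot p (z k)).eval x ^ 2 = p.eval x ^ 2 * (1 / (z k - x) ^ 2) := by
  have hne' : z k - x ≠ 0 := sub_ne_zero.2 hne.symm
  rw [← hp.sub_mul_eval_diffQuot k x]
  field_simp
  ring

end IsOrthonormalNodes

namespace UniformBounds

lemma ladderCoeff_pos (hU : UniformBounds Q K C c N L) (hQ : IsFreudExponent Q b) (hn : N ≤ n)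
    (hp : IsOrthonormalNodes Q p z) (x : ℝ) : 0 < ladderCoeff Q p x :=
  (mul_pos hU.pos (hQ.curvatureScale_pos x)).trans_le (hU.le_ladderCoeff hn hp x)

lemma basis_sq_div_le (hU : UniformBounds Q K C c N L) (hQ : IsFreudExponent Q b)
    (htw : IsComparableWeight Q tw D) (hn : N ≤ n) (hp : IsOrthonormalNodes Q p z)
    (k : Fin n) (x : ℝ) :
    (Lagrange.basis univ z k).eval x ^ 2 / tw (z k) ≤
      D / c * (weightedChristoffel Q z k * (diffQuot p (z k)).eval x ^ 2) := by
  have hD := htw.one_le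
  have hc := hU.pos
  have hscale : D * curvatureScale Q (z k) ≤ D / c * ladderCoeff Q p (z k) := by
    calc _ = D / c * (c * curvatureScale Q (z k)) := by field_simp
      _ ≤ _ := by gcongr; exact hU.le_ladderCoeff hn hp (z k)
  rw [div_eq_mul_inv]
  calc _ ≤ (Lagrange.basis univ z k).eval x ^ 2 * (D * curvatureScale Q (z k) * exp (Q (z k))) := by
        gcongr; exact htw.inv_le hQ (z k)
    _ ≤ (Lagrange.basis univ z k).eval x ^ 2 *
        (D / c * ladderCoeff Q p (z k) * exp (Q (z k))) := by gcongr
    _ = D / c * exp (Q (z k)) *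
        ((Lagrange.basis univ z k).eval x ^ 2 * ladderCoeff Q p (z k)) := by ring
    _ = _ := by rw [hp.basis_sq_mul_ladderCoeff hQ, weightedChristoffel]; ring

lemma basis_sq_div_le_of_ne (hU : UniformBounds Q K C c N L) (hQ : IsFreudExponent Q b)
    (htw : IsComparableWeight Q tw D) (hn : N ≤ n) (hp : IsOrthonormalNodes Q p z) {k : Fin n}
    (hne : x ≠ z k) {r : ℝ} (hr : 1 / (z k - x) ^ 2 ≤ r) :
    (Lagrange.basis univ z k).eval x ^ 2 / tw (z k) ≤
      D / c * (weightedChristoffel Q z k * (p.eval x ^ 2 * r)) := by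
  have hD := htw.one_le
  have hc := hU.pos
  have hν := hp.weightedChristoffel_pos hQ k
  refine (hU.basis_sq_div_le hQ htw hn hp k x).trans ?_
  rw [hp.diffQuot_node_sq_of_ne hne]
  gcongr

lemma exists_eval_sq_mul_exp_le (hU : UniformBounds Q K C c N L) (hQ : IsFreudExponent Q b) :
    ∃ C' : ℝ, 1 ≤ C' ∧ ∃ N' ≥ N, ∀ {n : ℕ} {p : Polynomial ℝ} {z : Fin n → ℝ}, N' ≤ n →
      IsOrthonormalNodes Q p z → ∀ {x}, 0 ≤ x →
        p.eval x ^ 2 * exp (-Q x) ≤ C' * √(curvatureScale Q x) := by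
  obtain ⟨C₂, hC₂, hlarge⟩ := hQ.exists_eval_sq_mul_sqrt_le
  obtain ⟨N₁, hN₁⟩ := eventually_atTop.1 (hU.tendsto.eventually_ge_atTop K)
  have hC := hU.one_le
  have hK := hU.ten_le
  refine ⟨C * C₂, one_le_mul_of_one_le_of_one_le hC hC₂, max N N₁, le_max_left _ _,
    fun {n p z} hn hp x hx => ?_⟩
  have hnN : N ≤ n := (le_max_left _ _).trans hn
  have hLn := hN₁ n ((le_max_right _ _).trans hn)
  have hR := hQ.curvatureScale_pos x
  have hsqrt : 1 ≤ √(curvatureScale Q x) := one_le_sqrt.2 (hQ.one_le_curvatureScale x)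
  rcases le_total (K * x) (L n) with hxL | hxL
  · have hL := hU.one_le_scale hnN
    calc _ ≤ C / L n := hU.eval_sq_mul_exp_le hnN hp hx hxL
      _ ≤ C / 1 := by gcongr
      _ = C * 1 * 1 := by ring
      _ ≤ C * C₂ * √(curvatureScale Q x) := by gcongr
  · have hx1 : 1 ≤ x := by
      by_contra! hlt
      nlinarith
    have hslope : radialSlope Q x ≤ curvatureScale Q x := le_add_of_nonneg_left zero_le_one
    refine le_of_mul_le_mul_right ?_ (zero_lt_one.trans_le hsqrt)
    calc p.eval x ^ 2 * exp (-Q x) * √(curvatureScale Q x) ≤ C₂ * ladderCoeff Q p x :=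
          hlarge hp x hx1
      _ ≤ C₂ * (C * radialSlope Q x) := by gcongr; exact hU.ladderCoeff_le hnN hp hxL
      _ ≤ C₂ * (C * curvatureScale Q x) := by gcongr
      _ = C * C₂ * (√(curvatureScale Q x) * √(curvatureScale Q x)) := by
          rw [mul_self_sqrt hR.le]; ring
      _ = _ := by ring

lemma exists_ladderCoeff_le_mul (hU : UniformBounds Q K C c N L) (hQ : IsFreudExponent Q b) :
    ∃ C' : ℝ, 0 ≤ C' ∧ ∀ {n : ℕ} {p : Polynomial ℝ} {z : Fin n → ℝ}, N ≤ n →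
      IsOrthonormalNodes Q p z → ∀ {x y}, |x| ≤ |y| + 1 →
        ladderCoeff Q p x ≤ C' * ladderCoeff Q p y := by
  obtain ⟨C₁, hC₁, hscale⟩ := hQ.exists_curvatureScale_le
  have hc := hU.pos
  refine ⟨b * (C₁ / c + 2), by positivity, fun {n p z} hn hp x y hxy => ?_⟩
  have h_int := half_weightedIntegral_le_ladderCoeff hQ p y
  have hslope : radialSlope Q x ≤ C₁ / c * ladderCoeff Q p y := by
    calc radialSlope Q x ≤ curvatureScale Q x := le_add_of_nonneg_left zero_le_one
      _ ≤ C₁ * curvatureScale Q y := hscale y x hxy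
      _ = C₁ / c * (c * curvatureScale Q y) := by field_simp
      _ ≤ _ := by gcongr; exact hU.le_ladderCoeff hn hp y
  calc ladderCoeff Q p x ≤ _ := hp.ladderCoeff_le hQ x
    _ ≤ b * (C₁ / c * ladderCoeff Q p y + 2 * ladderCoeff Q p y) := by gcongr; linarith
    _ = _ := by ring

lemma exists_basis_sq_div_mul_ladderCoeff_le (hU : UniformBounds Q K C c N L)
    (hQ : IsFreudExponent Q b) (htw : IsComparableWeight Q tw D) :
    ∃ C' : ℝ, 0 ≤ C' ∧ ∀ {n : ℕ} {p : Polynomial ℝ} {z : Fin n → ℝ}, N ≤ n →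
      IsOrthonormalNodes Q p z → ∀ {x k}, |z k - x| ≤ 1 →
        (Lagrange.basis univ z k).eval x ^ 2 / tw (z k) * ladderCoeff Q p x ≤
          C' * curvatureScale Q x *
            (weightedChristoffel Q z k * (diffQuot p (z k)).eval x ^ 2) := by
  obtain ⟨C₁, hC₁, hscale⟩ := hQ.exists_curvatureScale_le
  obtain ⟨C₂, hC₂, hcoeff⟩ := hU.exists_ladderCoeff_le_mul hQ
  have hD := htw.one_le
  refine ⟨D * C₁ * C₂, by positivity, fun {n p z} hn hp x k hk => ?_⟩
  have hR := hQ.curvatureScale_pos (z k)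
  have hRx := hQ.curvatureScale_pos x
  have hA := hU.ladderCoeff_pos hQ hn hp x
  have hscale_k : curvatureScale Q (z k) ≤ C₁ * curvatureScale Q x :=
    hscale x (z k) (by linarith [abs_sub_abs_le_abs_sub (z k) x])
  have hcoeff_k : ladderCoeff Q p x ≤ C₂ * ladderCoeff Q p (z k) :=
    hcoeff hn hp (by rw [abs_sub_comm] at hk; linarith [abs_sub_abs_le_abs_sub x (z k)])
  rw [div_eq_mul_inv]
  calc _ ≤ (Lagrange.basis univ z k).eval x ^ 2 *
          (D * curvatureScale Q (z k) * exp (Q (z k))) * ladderCoeff Q p x := by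
        gcongr; exact htw.inv_le hQ (z k)
    _ ≤ (Lagrange.basis univ z k).eval x ^ 2 *
          (D * (C₁ * curvatureScale Q x) * exp (Q (z k))) * (C₂ * ladderCoeff Q p (z k)) := by
        gcongr
    _ = D * C₁ * C₂ * curvatureScale Q x * exp (Q (z k)) *
          ((Lagrange.basis univ z k).eval x ^ 2 * ladderCoeff Q p (z k)) := by ring
    _ = _ := by rw [hp.basis_sq_mul_ladderCoeff hQ, weightedChristoffel]; ring

lemma exists_sum_near_basis_sq_div_le (hU : UniformBounds Q K C c N L)
    (hQ : IsFreudExponent Q b) (htw : IsComparableWeight Q tw D) :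
    ∃ C' : ℝ, 0 ≤ C' ∧ ∀ {n : ℕ} {p : Polynomial ℝ} {z : Fin n → ℝ}, N ≤ n →
      IsOrthonormalNodes Q p z → ∀ {x}, 0 ≤ x →
        exp (-Q x) * ∑ k with curvatureScale Q x * (z k - x) ^ 2 ≤ 1 / 4,
          (Lagrange.basis univ z k).eval x ^ 2 / tw (z k) ≤ C' * curvatureScale Q x := by
  obtain ⟨C₁, hC₁, hnode⟩ := hU.exists_basis_sq_div_mul_ladderCoeff_le hQ htw
  obtain ⟨C₂, hC₂, hsum⟩ := hQ.exists_sum_near_diffQuot_sq_le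
  refine ⟨C₁ * C₂, by positivity, fun {n p z} hn hp x hx => ?_⟩
  have hR := hQ.curvatureScale_pos x
  have hA := hU.ladderCoeff_pos hQ hn hp x
  have hsum_x := hsum hp x hx
  refine le_of_mul_le_mul_right ?_ hA
  calc _ = exp (-Q x) * ∑ k with curvatureScale Q x * (z k - x) ^ 2 ≤ 1 / 4,
          (Lagrange.basis univ z k).eval x ^ 2 / tw (z k) * ladderCoeff Q p x := by
        rw [mul_assoc, Finset.sum_mul]
    _ ≤ exp (-Q x) * ∑ k with curvatureScale Q x * (z k - x) ^ 2 ≤ 1 / 4, C₁ * curvatureScale Q x *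
          (weightedChristoffel Q z k * (diffQuot p (z k)).eval x ^ 2) := by
        refine mul_le_mul_of_nonneg_left (Finset.sum_le_sum fun k hk => ?_) (exp_pos _).le
        refine hnode hn hp (abs_le_of_sq_le_sq ?_ zero_le_one)
        nlinarith [(Finset.mem_filter.1 hk).2, hQ.one_le_curvatureScale x, sq_nonneg (z k - x)]
    _ = C₁ * curvatureScale Q x * (exp (-Q x) *
          ∑ k with curvatureScale Q x * (z k - x) ^ 2 ≤ 1 / 4,
            weightedChristoffel Q z k * (diffQuot p (z k)).eval x ^ 2) := by
        rw [← Finset.mul_sum]; ring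
    _ ≤ C₁ * curvatureScale Q x * (C₂ * ladderCoeff Q p x) := by gcongr
    _ = _ := by ring

lemma exists_sum_far_basis_sq_div_le (hU : UniformBounds Q K C c N L)
    (hQ : IsFreudExponent Q b) (htw : IsComparableWeight Q tw D) :
    ∃ C' : ℝ, 0 ≤ C' ∧ ∃ N' ≥ N, ∀ {n : ℕ} {p : Polynomial ℝ} {z : Fin n → ℝ}, N' ≤ n →
      IsOrthonormalNodes Q p z → ∀ {x}, 0 ≤ x →
        exp (-Q x) * ∑ k with ¬curvatureScale Q x * (z k - x) ^ 2 ≤ 1 / 4,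
          (Lagrange.basis univ z k).eval x ^ 2 / tw (z k) ≤ C' * curvatureScale Q x := by
  obtain ⟨C₁, hC₁, N', hN', hpoly⟩ := hU.exists_eval_sq_mul_exp_le hQ
  obtain ⟨C₂, hC₂, hsum⟩ := hQ.exists_sqrt_mul_sum_weightedChristoffel_le
  have hD := htw.one_le
  have hc := hU.pos
  refine ⟨D / c * 5 * C₁ * C₂, by positivity, N', hN', fun {n p z} hn hp x hx => ?_⟩
  have hR := hQ.curvatureScale_pos x
  have hν : ∀ k, 0 ≤ weightedChristoffel Q z k * (1 + curvatureScale Q x * (z k - x) ^ 2)⁻¹ :=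
    fun k => mul_nonneg (hp.weightedChristoffel_pos hQ k).le (by positivity)
  have hpoly_x := hpoly hn hp hx
  have hnode : ∀ k, ¬curvatureScale Q x * (z k - x) ^ 2 ≤ 1 / 4 →
      (Lagrange.basis univ z k).eval x ^ 2 / tw (z k) ≤
        D / c * 5 * curvatureScale Q x * p.eval x ^ 2 *
          (weightedChristoffel Q z k * (1 + curvatureScale Q x * (z k - x) ^ 2)⁻¹) := by
    intro k hk
    have hne : x ≠ z k := by rintro rfl; norm_num at hk
    have hsq : 0 < (z k - x) ^ 2 := by have := sub_ne_zero.2 hne.symm; positivity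
    refine (hU.basis_sq_div_le_of_ne hQ htw (hN'.le.trans hn) hp hne (r := 5 * curvatureScale Q x *
      (1 + curvatureScale Q x * (z k - x) ^ 2)⁻¹) ?_).trans (by ring_nf; rfl)
    rw [← div_eq_mul_inv, div_le_div_iff₀ hsq (by positivity)]
    linarith
  calc _ ≤ exp (-Q x) * ∑ k, D / c * 5 * curvatureScale Q x * p.eval x ^ 2 *
          (weightedChristoffel Q z k * (1 + curvatureScale Q x * (z k - x) ^ 2)⁻¹) := by
        gcongr
        refine (Finset.sum_le_sum fun k hk => hnode k (Finset.mem_filter.1 hk).2).trans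
          (Finset.sum_le_sum_of_subset_of_nonneg (Finset.filter_subset _ _) fun k _ _ => ?_)
        exact mul_nonneg (by positivity) (hν k)
    _ = D / c * 5 * curvatureScale Q x * (p.eval x ^ 2 * exp (-Q x)) * ∑ k,
          weightedChristoffel Q z k * (1 + curvatureScale Q x * (z k - x) ^ 2)⁻¹ := by
        rw [← Finset.mul_sum]; ring
    _ ≤ D / c * 5 * curvatureScale Q x * (C₁ * √(curvatureScale Q x)) * ∑ k,
          weightedChristoffel Q z k * (1 + curvatureScale Q x * (z k - x) ^ 2)⁻¹ := by
        gcongr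
        exact Finset.sum_nonneg fun k _ => hν k
    _ = D / c * 5 * curvatureScale Q x * C₁ * (√(curvatureScale Q x) * ∑ k,
          weightedChristoffel Q z k * (1 + curvatureScale Q x * (z k - x) ^ 2)⁻¹) := by ring
    _ ≤ D / c * 5 * curvatureScale Q x * C₁ * C₂ := by gcongr; exact hsum hp x hx
    _ = _ := by ring

theorem exists_mul_sum_basis_sq_div_le (hU : UniformBounds Q K C c N L)
    (hQ : IsFreudExponent Q b) (htw : IsComparableWeight Q tw D) :
    ∃ C' : ℝ, 1 ≤ C' ∧ ∃ N' ≥ N, ∀ {n : ℕ} {p : Polynomial ℝ} {z : Fin n → ℝ}, N' ≤ n →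
      IsOrthonormalNodes Q p z → ∀ {x}, 0 ≤ x →
        tw x * ∑ k, (Lagrange.basis univ z k).eval x ^ 2 / tw (z k) ≤ C' := by
  obtain ⟨C₁, hC₁, hnear⟩ := hU.exists_sum_near_basis_sq_div_le hQ htw
  obtain ⟨C₂, hC₂, N', hN', hfar⟩ := hU.exists_sum_far_basis_sq_div_le hQ htw
  have hD := htw.one_le
  refine ⟨1 + D * (C₁ + C₂), le_add_of_nonneg_right (by positivity), N', hN',
    fun {n p z} hn hp x hx => le_add_of_nonneg_of_le zero_le_one ?_⟩
  have hnear_x := hnear (hN'.le.trans hn) hp hx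
  have hfar_x := hfar hn hp hx
  have htw_x := htw.le x
  have hsum : 0 ≤ ∑ k, (Lagrange.basis univ z k).eval x ^ 2 / tw (z k) :=
    Finset.sum_nonneg fun k _ => div_nonneg (sq_nonneg _) (htw.pos hQ _).le
  refine le_of_mul_le_mul_left ?_ (hQ.curvatureScale_pos x)
  calc _ = curvatureScale Q x * tw x *
          ∑ k, (Lagrange.basis univ z k).eval x ^ 2 / tw (z k) := by ring
    _ ≤ D * exp (-Q x) * ∑ k, (Lagrange.basis univ z k).eval x ^ 2 / tw (z k) := by
        gcongr
    _ = D * (exp (-Q x) * ∑ k, (Lagrange.basis univ z k).eval x ^ 2 / tw (z k)) := by ring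
    _ ≤ D * (C₁ * curvatureScale Q x + C₂ * curvatureScale Q x) := by
        rw [← Finset.sum_filter_add_sum_filter_not univ
          (fun k => curvatureScale Q x * (z k - x) ^ 2 ≤ 1 / 4), mul_add]
        gcongr
    _ = _ := by ring

end UniformBounds

end

section

variable {Q tw f : ℝ → ℝ} {b n N : ℕ} {p : Polynomial ℝ} {z : Fin n → ℝ} {D K C c x : ℝ} {L : ℕ → ℝ}

/-- The Grünwald operator `Y_n(f, x)` on the nodes `z`. -/
noncomputable def grunwald (z : Fin n → ℝ) (f : ℝ → ℝ) (x : ℝ) : ℝ :=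
  ∑ k, (Lagrange.basis univ z k).eval x ^ 2 * f (z k)

lemma abs_grunwald_mul_le (htw : ∀ t, 0 < tw t) (z : Fin n → ℝ) (f : ℝ → ℝ) (x : ℝ) :
    |grunwald z f x| * tw x ≤
      ∑ k, |f (z k)| * tw (z k) * (tw x * ((Lagrange.basis univ z k).eval x ^ 2 / tw (z k))) := by
  have htw_x := (htw x).le
  calc _ ≤ (∑ k, |(Lagrange.basis univ z k).eval x ^ 2 * f (z k)|) * tw x := by
        gcongr; exact Finset.abs_sum_le_sum_abs _ _
    _ = _ := by
        rw [Finset.sum_mul]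
        refine Finset.sum_congr rfl fun k _ => ?_
        have := (htw (z k)).ne'
        rw [abs_mul, abs_of_nonneg (sq_nonneg _)]
        field_simp

namespace UniformBounds

lemma exists_eval_sq_mul_weight_le (hU : UniformBounds Q K C c N L) (hQ : IsFreudExponent Q b)
    (htw : IsComparableWeight Q tw D) :
    ∃ C' : ℝ, 1 ≤ C' ∧ ∃ N' ≥ N, ∀ {n : ℕ} {p : Polynomial ℝ} {z : Fin n → ℝ}, N' ≤ n →
      IsOrthonormalNodes Q p z → ∀ {x}, 0 ≤ x → p.eval x ^ 2 * tw x ≤ C' := by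
  obtain ⟨C', hC', N', hN', hp_le⟩ := hU.exists_eval_sq_mul_exp_le hQ
  have hD := htw.one_le
  refine ⟨D * C', one_le_mul_of_one_le_of_one_le hD hC', N', hN', fun {n p z} hn hp x hx => ?_⟩
  have hR := hQ.curvatureScale_pos x
  have hp_x := hp_le hn hp hx
  have htw_x := htw.le x
  have hsqrt : √(curvatureScale Q x) ≤ curvatureScale Q x :=
    sqrt_le_self_iff.2 (.inr (hQ.one_le_curvatureScale x))
  refine le_of_mul_le_mul_left ?_ hR
  calc curvatureScale Q x * (p.eval x ^ 2 * tw x)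
      = p.eval x ^ 2 * (curvatureScale Q x * tw x) := by ring
    _ ≤ p.eval x ^ 2 * (D * exp (-Q x)) := by gcongr
    _ = D * (p.eval x ^ 2 * exp (-Q x)) := by ring
    _ ≤ D * (C' * √(curvatureScale Q x)) := by gcongr
    _ ≤ D * (C' * curvatureScale Q x) := by gcongr
    _ = _ := by ring

lemma basis_sq_div_le_of_abs_le (hU : UniformBounds Q K C c N L) (hQ : IsFreudExponent Q b)
    (htw : IsComparableWeight Q tw D) (hn : N ≤ n) (hp : IsOrthonormalNodes Q p z) {k : Fin n}
    {A : ℝ} (hz : |z k| ≤ A) (hx : 0 < x) (hAx : 2 * A ≤ x) :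
    (Lagrange.basis univ z k).eval x ^ 2 / tw (z k) ≤
      D / c * 4 * p.eval x ^ 2 * ((1 + A ^ 2) / x ^ 2) *
        (weightedChristoffel Q z k * (1 + z k ^ 2)⁻¹) := by
  have hdist : x / 2 ≤ |z k - x| := by
    linarith [neg_abs_le (z k - x), le_abs_self (z k)]
  have hsq : x ^ 2 / 4 ≤ (z k - x) ^ 2 := by
    rw [← sq_abs (z k - x)]
    linarith [pow_le_pow_left₀ (by positivity) hdist 2]
  have hne : x ≠ z k := by
    rintro rfl
    rw [sub_self, abs_zero] at hdist
    linarith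
  have hone : 1 ≤ (1 + A ^ 2) * (1 + z k ^ 2)⁻¹ := by
    rw [← div_eq_mul_inv, one_le_div (by positivity), ← sq_abs (z k)]
    gcongr
  have hr : 1 / (z k - x) ^ 2 ≤ 4 / x ^ 2 * ((1 + A ^ 2) * (1 + z k ^ 2)⁻¹) := by
    calc 1 / (z k - x) ^ 2 ≤ 1 / (x ^ 2 / 4) := by gcongr
      _ = 4 / x ^ 2 := one_div_div _ _
      _ ≤ _ := le_mul_of_one_le_right (by positivity) hone
  refine (hU.basis_sq_div_le_of_ne hQ htw hn hp hne hr).trans_eq ?_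
  ring

lemma abs_mul_basis_sq_div_le (hU : UniformBounds Q K C c N L) (hQ : IsFreudExponent Q b)
    (htw : IsComparableWeight Q tw D) (hn : N ≤ n) (hp : IsOrthonormalNodes Q p z) {F A e C' : ℝ}
    (he : 0 ≤ e) (hF : ∀ t, |f t| * tw t ≤ F)
    (hdecay : ∀ t, A ≤ |t| → |f t| * tw t ≤ e) (hx : 0 < x) (hAx : 2 * A ≤ x)
    (hp_x : p.eval x ^ 2 * tw x ≤ C') (k : Fin n) :
    |f (z k)| * tw (z k) * (tw x * ((Lagrange.basis univ z k).eval x ^ 2 / tw (z k))) ≤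
      e * (tw x * ((Lagrange.basis univ z k).eval x ^ 2 / tw (z k))) +
        D / c * 4 * C' * (F * (1 + A ^ 2) / x ^ 2) *
          (weightedChristoffel Q z k * (1 + z k ^ 2)⁻¹) := by
  have hc := hU.pos
  have hD := htw.one_le
  have htw_x := htw.pos hQ x
  have htw_k := htw.pos hQ (z k)
  have hν := hp.weightedChristoffel_pos hQ k
  have hF_k := hF (z k)
  have hF0 : 0 ≤ F := (mul_nonneg (abs_nonneg _) htw_k.le).trans hF_k
  have hC' : 0 ≤ C' := (mul_nonneg (sq_nonneg _) htw_x.le).trans hp_x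
  rcases le_total A |z k| with hAz | hzA
  · exact le_add_of_le_of_nonneg
      (mul_le_mul_of_nonneg_right (hdecay _ hAz) (by positivity)) (by positivity)
  · have hℓ := hU.basis_sq_div_le_of_abs_le hQ htw hn hp hzA hx hAx
    refine le_add_of_nonneg_of_le (by positivity) ?_
    calc _ ≤ F * (tw x * (D / c * 4 * p.eval x ^ 2 * ((1 + A ^ 2) / x ^ 2) *
            (weightedChristoffel Q z k * (1 + z k ^ 2)⁻¹))) := by gcongr
      _ = D / c * 4 * (p.eval x ^ 2 * tw x) * (F * (1 + A ^ 2) / x ^ 2) *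
            (weightedChristoffel Q z k * (1 + z k ^ 2)⁻¹) := by ring
      _ ≤ _ := by gcongr

lemma exists_abs_grunwald_mul_le (hU : UniformBounds Q K C c N L) (hQ : IsFreudExponent Q b)
    (htw : IsComparableWeight Q tw D) :
    ∃ C' : ℝ, 1 ≤ C' ∧ ∃ N', ∀ {n : ℕ} {p : Polynomial ℝ} {z : Fin n → ℝ}, N' ≤ n →
      IsOrthonormalNodes Q p z → ∀ {f : ℝ → ℝ} {F A e : ℝ}, 0 ≤ A → 0 ≤ e →
        (∀ t, |f t| * tw t ≤ F) → (∀ t, A ≤ |t| → |f t| * tw t ≤ e) → ∀ {x}, 1 + 2 * A ≤ x →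
          |grunwald z f x| * tw x ≤ C' * (e + F * (1 + A ^ 2) / x ^ 2) := by
  obtain ⟨C₁, hC₁, N₁, hN₁, hbound⟩ := hU.exists_mul_sum_basis_sq_div_le hQ htw
  obtain ⟨C₂, hC₂, N₂, -, hp_le⟩ := hU.exists_eval_sq_mul_weight_le hQ htw
  obtain ⟨C₃, hC₃, hν_sum⟩ := hQ.exists_sum_weightedChristoffel_mul_inv_le
  have hc := hU.pos
  have hD := htw.one_le
  set E := D / c * 4 * C₂
  refine ⟨C₁ + E * C₃, le_add_of_le_of_nonneg hC₁ (by positivity), max N₁ N₂,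
    fun {n p z} hn hp {f F A e} hA he hF hdecay x hx => ?_⟩
  have hx0 : 0 < x := by linarith
  have hF0 : 0 ≤ F := (mul_nonneg (abs_nonneg _) (htw.pos hQ 0).le).trans (hF 0)
  have hp_x := hp_le ((le_max_right _ _).trans hn) hp hx0.le
  have hnN := hN₁.le.trans ((le_max_left _ _).trans hn)
  have hbound_x := hbound ((le_max_left _ _).trans hn) hp hx0.le
  have hnode := hU.abs_mul_basis_sq_div_le hQ htw hnN hp he hF hdecay hx0 (by linarith) hp_x
  calc _ ≤ _ := abs_grunwald_mul_le (htw.pos hQ) z f x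
    _ ≤ _ := Finset.sum_le_sum fun k _ => hnode k
    _ = e * (tw x * ∑ k, (Lagrange.basis univ z k).eval x ^ 2 / tw (z k)) +
        E * (F * (1 + A ^ 2) / x ^ 2) * ∑ k, weightedChristoffel Q z k * (1 + z k ^ 2)⁻¹ := by
        rw [Finset.sum_add_distrib, ← Finset.mul_sum, ← Finset.mul_sum, ← Finset.mul_sum]
    _ ≤ e * C₁ + E * (F * (1 + A ^ 2) / x ^ 2) * C₃ := by gcongr; exact hν_sum hp
    _ ≤ _ := by
        have : 0 ≤ C₁ * (F * (1 + A ^ 2) / x ^ 2) + E * C₃ * e := by positivity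
        linarith

theorem exists_forall_ge_abs_grunwald_sub_mul_le (hU : UniformBounds Q K C c N L)
    (hQ : IsFreudExponent Q b) (htw : IsComparableWeight Q tw D) {F : ℝ}
    (hF : ∀ t, |f t| * tw t ≤ F) (hdecay : ∀ e > 0, ∃ A, ∀ t, A ≤ |t| → |f t| * tw t ≤ e)
    {ε : ℝ} (hε : 0 < ε) :
    ∃ (X : ℝ) (N' : ℕ), ∀ {n : ℕ} {p : Polynomial ℝ} {z : Fin n → ℝ}, N' ≤ n →
      IsOrthonormalNodes Q p z → ∀ {x}, X ≤ x → |(grunwald z f x - f x) * tw x| ≤ ε := by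
  obtain ⟨C', hC', N', hgrunwald⟩ := hU.exists_abs_grunwald_mul_le hQ htw
  obtain ⟨A, hA⟩ := hdecay (ε / (4 * C')) (by positivity)
  have hF0 : 0 ≤ F := (mul_nonneg (abs_nonneg _) (htw.pos hQ 0).le).trans (hF 0)
  set E := F * (1 + |A| ^ 2)
  refine ⟨1 + 2 * |A| + 4 * C' * E / ε, N', fun {n p z} hn hp x hx => ?_⟩
  have hE0 : 0 ≤ 4 * C' * E / ε := by positivity
  have hx1 : 1 + 2 * |A| ≤ x := by linarith
  have htw_x := htw.pos hQ x
  have hA0 := abs_nonneg A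
  have hgrunwald_x := hgrunwald hn hp hA0 (by positivity : 0 ≤ ε / (4 * C')) hF
    (fun t ht => hA t ((le_abs_self A).trans ht)) hx1
  have hfx : |f x| * tw x ≤ ε / (4 * C') :=
    hA x (by rw [abs_of_nonneg (by linarith)]; linarith [le_abs_self A])
  have hmain : C' * (ε / (4 * C')) = ε / 4 := by field_simp
  have hfx' : ε / (4 * C') ≤ ε / 4 := by gcongr; linarith
  have htail : C' * (E / x ^ 2) ≤ ε / 4 := by
    have hsq : 4 * C' * E / ε ≤ x ^ 2 := by nlinarith
    rw [div_le_iff₀ hε] at hsq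
    rw [← mul_div_assoc, div_le_iff₀ (by nlinarith)]
    linarith
  calc |(grunwald z f x - f x) * tw x| = |grunwald z f x - f x| * tw x := by
        rw [abs_mul, abs_of_pos htw_x]
    _ ≤ (|grunwald z f x| + |f x|) * tw x := by gcongr; exact abs_sub _ _
    _ ≤ C' * (ε / (4 * C') + E / x ^ 2) + ε / (4 * C') := by rw [add_mul]; gcongr
    _ ≤ ε := by rw [mul_add, hmain]; linarith

end UniformBounds

end

/-! ### Convergence on compact sets -/

section

variable {Q f : ℝ → ℝ} {b N : ℕ} {K C c : ℝ} {L : ℕ → ℝ}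

lemma exists_forall_abs_sub_le (hf : Continuous f) (X : ℝ) {η : ℝ} (hη : 0 < η) :
    ∃ δ : ℝ, 0 < δ ∧ δ ≤ 1 ∧ ∀ {x t}, |x| ≤ X → |t - x| ≤ δ → |f t - f x| ≤ η := by
  have huc : UniformContinuousOn f (Set.Icc (-(X + 1)) (X + 1)) :=
    isCompact_Icc.uniformContinuousOn_of_continuous hf.continuousOn
  obtain ⟨δ, hδ, hf_sub⟩ := Metric.uniformContinuousOn_iff_le.1 huc η hη
  refine ⟨min δ 1, lt_min hδ one_pos, min_le_right _ _, fun {x t} hx ht => ?_⟩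
  have ht1 : |t| ≤ X + 1 := by
    linarith [abs_sub_abs_le_abs_sub t x, ht.trans (min_le_right _ _)]
  exact hf_sub t (abs_le.1 ht1) x (abs_le.1 (hx.trans (le_add_of_nonneg_right zero_le_one)))
    (ht.trans (min_le_left _ _))

namespace IsFreudExponent

lemma abs_dslope_deriv_sub_le (hQ : IsFreudExponent Q b) {x y X : ℝ} (hx : |x| ≤ X)
    (hy : |y| ≤ X) (t : ℝ) :
    |dslope (deriv Q) x t - dslope (deriv Q) x y| ≤
      b * (2 * radialSlope Q X + 1) * (1 + radialSlope Q t) := by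
  have hX : |X| = X := abs_of_nonneg ((abs_nonneg _).trans hx)
  have hx_le : radialSlope Q x ≤ radialSlope Q X := hQ.radialSlope_le_of_abs_le (by rwa [hX])
  have hy_le : radialSlope Q y ≤ radialSlope Q X := hQ.radialSlope_le_of_abs_le (by rwa [hX])
  have hX0 := hQ.radialSlope_nonneg X
  have hy0 := hQ.radialSlope_nonneg y
  have ht0 := hQ.radialSlope_nonneg t
  have hsum : b * (radialSlope Q x + radialSlope Q y + radialSlope Q t) ≤
      b * (2 * radialSlope Q X + 1) * (1 + radialSlope Q t) := by
    rw [mul_assoc]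
    gcongr
    nlinarith
  have hb : (0 : ℝ) ≤ b := b.cast_nonneg
  have ht_le : b * (radialSlope Q x + radialSlope Q t) ≤
      b * (radialSlope Q x + radialSlope Q y + radialSlope Q t) :=
    mul_le_mul_of_nonneg_left (by linarith) hb
  have hy_le' : b * (radialSlope Q x + radialSlope Q y) ≤
      b * (radialSlope Q x + radialSlope Q y + radialSlope Q t) :=
    mul_le_mul_of_nonneg_left (by linarith) hb
  refine (abs_sub_le_of_nonneg_of_le (hQ.dslope_deriv_nonneg x t) ?_
    (hQ.dslope_deriv_nonneg x y) ?_).trans hsum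
  · exact (hQ.dslope_deriv_le x t).trans ht_le
  · exact (hQ.dslope_deriv_le x y).trans hy_le'

lemma exists_abs_dslope_deriv_sub_le (hQ : IsFreudExponent Q b) (X : ℝ) {η : ℝ} (hη : 0 < η) :
    ∃ δ : ℝ, 0 < δ ∧ ∀ {x y}, |y| ≤ X → |x - y| ≤ δ → ∀ t,
      |dslope (deriv Q) x t - dslope (deriv Q) y t| ≤ η * (1 + radialSlope Q t) := by
  obtain ⟨r, hr, hr1, hr_sub⟩ :=
    exists_forall_abs_sub_le hQ.continuous_deriv_deriv X (half_pos hη)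
  set W := (b : ℝ) * (2 * radialSlope Q (X + 1) + 1)
  have hb : (1 : ℝ) ≤ b := mod_cast hQ.one_le
  have hW : 0 < W := by have := hQ.radialSlope_nonneg (X + 1); positivity
  refine ⟨min r (r * η / W), by positivity, fun {x y} hy hxy t => ?_⟩
  have hxr : |x - y| ≤ r := hxy.trans (min_le_left _ _)
  have hht := hQ.radialSlope_nonneg t
  rcases le_or_gt |t - y| r with htr | hrt
  · have hball {u : ℝ} (hu : |u - y| ≤ r) : Set.uIcc u t ⊆ Metric.closedBall y r :=
      (convex_closedBall y r).ordConnected.uIcc_subset hu htr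
    obtain ⟨s, hs, hκx⟩ := hQ.exists_dslope_deriv_eq x t
    obtain ⟨s', hs', hκy⟩ := hQ.exists_dslope_deriv_eq y t
    rw [hκx, hκy]
    have hs_sub := abs_le.1 (hr_sub hy (hball hxr hs))
    have hs'_sub := abs_le.1 (hr_sub hy (hball (by simpa using hr.le) hs'))
    refine (abs_le.2 ⟨?_, ?_⟩ : _ ≤ η).trans (le_mul_of_one_le_right hη.le (by linarith)) <;>
      linarith
  · have hswap : (t - y) * (dslope (deriv Q) x t - dslope (deriv Q) y t) =
        (x - y) * (dslope (deriv Q) x t - dslope (deriv Q) x y) := by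
      have hxt := sub_smul_dslope (deriv Q) x t
      have hyt := sub_smul_dslope (deriv Q) y t
      have hxy := sub_smul_dslope (deriv Q) x y
      simp only [smul_eq_mul] at hxt hyt hxy
      linear_combination hxt - hyt - hxy
    have hx : |x| ≤ X + 1 := by linarith [abs_sub_abs_le_abs_sub x y]
    have hbound := hQ.abs_dslope_deriv_sub_le hx (by linarith : |y| ≤ X + 1) t
    refine le_of_mul_le_mul_left ?_ hr
    calc r * |dslope (deriv Q) x t - dslope (deriv Q) y t|
        ≤ |t - y| * |dslope (deriv Q) x t - dslope (deriv Q) y t| := by gcongr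
      _ = |x - y| * |dslope (deriv Q) x t - dslope (deriv Q) x y| := by
          rw [← abs_mul, hswap, abs_mul]
      _ ≤ r * η / W * (W * (1 + radialSlope Q t)) := by
          gcongr
          exact hxy.trans (min_le_right _ _)
      _ = _ := by field_simp

lemma eval_expApprox_le (hQ : IsFreudExponent Q b) (x t : ℝ) :
    (expApprox Q x).eval t ≤ exp (Q t) * exp (-Q x) := by
  have hpeak := hQ.peaksAt_expApprox x t
  rw [weightedEval_expApprox_self] at hpeak
  calc _ = exp (Q t) * weightedEval Q (expApprox Q x) t := by
        rw [weightedEval, mul_left_comm, ← exp_add, add_neg_cancel, exp_zero, mul_one]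
    _ ≤ _ := by gcongr

lemma exists_le_eval_expApprox (hQ : IsFreudExponent Q b) : ∃ C : ℝ, 1 ≤ C ∧
    ∀ x t, curvatureScale Q x * (t - x) ^ 2 ≤ 1 / 4 →
      exp (Q t - Q x - C * (curvatureScale Q x * (t - x) ^ 2)) ≤ (expApprox Q x).eval t := by
  obtain ⟨C, hC, hlower⟩ := hQ.exists_le_weightedEval_expApprox
  refine ⟨C, hC, fun x t hxt => ?_⟩
  calc _ = exp (-Q x) * exp (-(C * (curvatureScale Q x * (t - x) ^ 2))) * exp (Q t) := by
        rw [← exp_add, ← exp_add]; ring_nf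
    _ ≤ weightedEval Q (expApprox Q x) t * exp (Q t) := by gcongr; exact hlower x t hxt
    _ = _ := by rw [weightedEval, mul_assoc, ← exp_add, neg_add_cancel, exp_zero, mul_one]

lemma exists_abs_eval_expApprox_sub_one_le (hQ : IsFreudExponent Q b) (X : ℝ) {η : ℝ}
    (hη : 0 < η) : ∃ δ : ℝ, 0 < δ ∧ ∀ {x t}, |x| ≤ X → |t - x| ≤ δ →
      |(expApprox Q x).eval t - 1| ≤ η := by
  obtain ⟨C, hC, hlower⟩ := hQ.exists_le_eval_expApprox
  set a := min (η / 2) (1 / 4)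
  have ha : 0 < a := by positivity
  have ha1 : a ≤ 1 / 4 := min_le_right _ _
  have haη : a ≤ η / 2 := min_le_left _ _
  obtain ⟨δ, hδ, hδ1, hQ_sub⟩ := exists_forall_abs_sub_le hQ.continuous X ha
  have hRX := hQ.curvatureScale_pos X
  refine ⟨min δ (a / (C * curvatureScale Q X)), by positivity, fun {x t} hx ht => ?_⟩
  have hQtx := abs_le.1 (hQ_sub hx (ht.trans (min_le_left _ _)))
  have hR : curvatureScale Q x ≤ curvatureScale Q X :=
    hQ.curvatureScale_le_of_abs_le (hx.trans (le_abs_self X))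
  have hR0 := hQ.curvatureScale_pos x
  have hsq : (t - x) ^ 2 ≤ a / (C * curvatureScale Q X) := by
    rw [← sq_abs]
    nlinarith [abs_nonneg (t - x), ht.trans (min_le_left _ _), ht.trans (min_le_right _ _)]
  have hCR : C * (curvatureScale Q x * (t - x) ^ 2) ≤ a := by
    calc _ ≤ C * (curvatureScale Q X * (a / (C * curvatureScale Q X))) := by gcongr
      _ = a := by field_simp
  have hR4 : curvatureScale Q x * (t - x) ^ 2 ≤ 1 / 4 :=
    (le_mul_of_one_le_left (by positivity) hC).trans (hCR.trans ha1)
  have hupper : (expApprox Q x).eval t ≤ exp a := by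
    refine (hQ.eval_expApprox_le x t).trans ?_
    rw [← exp_add, exp_le_exp]
    linarith
  have hlower_t : exp (-(2 * a)) ≤ (expApprox Q x).eval t :=
    (exp_le_exp.2 (by linarith)).trans (hlower x t hR4)
  have hexp := (abs_le.1 (abs_exp_sub_one_le (x := a) (by rw [abs_of_pos ha]; linarith))).2
  rw [abs_of_pos ha] at hexp
  have hexp' := add_one_le_exp (-(2 * a))
  exact abs_le.2 ⟨by linarith, by linarith⟩

end IsFreudExponent

lemma abs_weightedIntegral_le (hQ : IsFreudExponent Q b) {g : ℝ → ℝ} (hg : IsPolyBounded g)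
    (hfg : ∀ t, |f t| ≤ g t) : |weightedIntegral Q f| ≤ weightedIntegral Q g := by
  have hbound (t : ℝ) : ‖f t * exp (-Q t)‖ ≤ g t * exp (-Q t) := by
    rw [norm_eq_abs, abs_mul, abs_of_pos (exp_pos _)]
    exact mul_le_mul_of_nonneg_right (hfg t) (exp_pos _).le
  exact norm_integral_le_of_norm_le (hg.integrable hQ) (.of_forall hbound)

/-- The error of `f` against the multiple of `A · expApprox Q x` that agrees with `f` at `x`, where
`A = ladderCoeff Q p`. On this multiple the Grünwald operator is nearly exact at `x`. -/
noncomputable def ladderError (Q : ℝ → ℝ) (p : Polynomial ℝ) (f : ℝ → ℝ) (x t : ℝ) : ℝ :=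
  f t - f x * (ladderCoeff Q p t / ladderCoeff Q p x * (expApprox Q x).eval t)

namespace UniformBounds

lemma exists_abs_ladderCoeff_sub_le (hU : UniformBounds Q K C c N L) (hQ : IsFreudExponent Q b)
    (X : ℝ) {η : ℝ} (hη : 0 < η) :
    ∃ δ : ℝ, 0 < δ ∧ ∀ {n : ℕ} {p : Polynomial ℝ} {z : Fin n → ℝ}, N ≤ n →
      IsOrthonormalNodes Q p z → ∀ {x y}, |x| ≤ X → |y - x| ≤ δ →
        |ladderCoeff Q p y - ladderCoeff Q p x| ≤ η * ladderCoeff Q p x := by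
  have hc := hU.pos
  obtain ⟨δ, hδ, hκ⟩ := hQ.exists_abs_dslope_deriv_sub_le X (η := η / (1 / c + 2)) (by positivity)
  refine ⟨δ, hδ, fun {n p z} hn hp {x y} hx hxy => ?_⟩
  have hsq := (IsPolyBounded.polynomial p).pow 2
  have hmoment := half_weightedIntegral_le_ladderCoeff hQ p x
  have hone : 1 ≤ 1 / c * ladderCoeff Q p x := by
    rw [one_div, ← div_eq_inv_mul, one_le_div hc]
    exact (le_mul_of_one_le_right hc.le (hQ.one_le_curvatureScale x)).trans
      (hU.le_ladderCoeff hn hp x)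
  rw [ladderCoeff, ladderCoeff,
    ← weightedIntegral_sub hQ (hsq.mul (hQ.isPolyBounded_dslope_deriv y))
      (hsq.mul (hQ.isPolyBounded_dslope_deriv x)), ← ladderCoeff]
  calc _ ≤ weightedIntegral Q fun t =>
          η / (1 / c + 2) * (p.eval t ^ 2 + p.eval t ^ 2 * radialSlope Q t) := by
        refine abs_weightedIntegral_le hQ
          ((hsq.add (hsq.mul hQ.isPolyBounded_radialSlope)).const_mul _) fun t => ?_
        rw [← mul_sub, abs_mul, abs_of_nonneg (sq_nonneg _)]
        refine (mul_le_mul_of_nonneg_left (hκ hx hxy t) (sq_nonneg _)).trans_eq ?_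
        ring
    _ = η / (1 / c + 2) * (1 + weightedIntegral Q fun t => p.eval t ^ 2 * radialSlope Q t) := by
        rw [weightedIntegral_const_mul,
          weightedIntegral_add hQ hsq (hsq.mul hQ.isPolyBounded_radialSlope), hp.normalized]
    _ ≤ η / (1 / c + 2) * (1 / c * ladderCoeff Q p x + 2 * ladderCoeff Q p x) := by
        gcongr; linarith
    _ = _ := by field_simp

lemma exists_abs_ladderError_le (hU : UniformBounds Q K C c N L) (hQ : IsFreudExponent Q b)
    (hf : Continuous f) (X : ℝ) {η : ℝ} (hη : 0 < η) :
    ∃ δ : ℝ, 0 < δ ∧ ∀ {n : ℕ} {p : Polynomial ℝ} {z : Fin n → ℝ}, N ≤ n →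
      IsOrthonormalNodes Q p z → ∀ {x t}, |x| ≤ X → |t - x| ≤ δ →
        |ladderError Q p f x t| ≤ η := by
  obtain ⟨F, hF⟩ :=
    (isCompact_Icc (a := -X) (b := X)).exists_bound_of_continuousOn hf.continuousOn
  set a := min 1 (η / (6 * (|F| + 1)))
  have ha : 0 < a := by positivity
  have ha1 : a ≤ 1 := min_le_left _ _
  have haη : a * (6 * (|F| + 1)) ≤ η := (le_div_iff₀ (by positivity)).1 (min_le_right _ _)
  obtain ⟨δ₁, hδ₁, -, hf_sub⟩ := exists_forall_abs_sub_le hf X (half_pos hη)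
  obtain ⟨δ₂, hδ₂, hA⟩ := hU.exists_abs_ladderCoeff_sub_le hQ X ha
  obtain ⟨δ₃, hδ₃, hG⟩ := hQ.exists_abs_eval_expApprox_sub_one_le X ha
  refine ⟨min δ₁ (min δ₂ δ₃), by positivity, fun {n p z} hn hp {x t} hx ht => ?_⟩
  obtain ⟨ht₁, ht₂, ht₃⟩ : |t - x| ≤ δ₁ ∧ |t - x| ≤ δ₂ ∧ |t - x| ≤ δ₃ := by
    simpa only [le_min_iff] using ht
  have hAx := hU.ladderCoeff_pos hQ hn hp x
  rw [ladderError]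
  set ρ := ladderCoeff Q p t / ladderCoeff Q p x
  set g := (expApprox Q x).eval t
  have hρ : |ρ - 1| ≤ a := by
    rw [div_sub_one hAx.ne', abs_div, abs_of_pos hAx, div_le_iff₀ hAx]
    exact hA hn hp hx ht₂
  have hg : |g - 1| ≤ a := hG hx ht₃
  have hρg : |ρ * g - 1| ≤ 3 * a := by
    calc |ρ * g - 1| = |(ρ - 1) * (g - 1) + (ρ - 1) + (g - 1)| := by ring_nf
      _ ≤ |ρ - 1| * |g - 1| + |ρ - 1| + |g - 1| := by
          rw [← abs_mul]; exact abs_add_three _ _ _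
      _ ≤ a * 1 + a + a := by gcongr; exact hg.trans ha1
      _ = 3 * a := by ring
  have hfx : |f x| ≤ |F| := (hF x (abs_le.1 hx)).trans (le_abs_self F)
  have hf_tx := hf_sub hx ht₁
  calc |f t - f x * (ρ * g)| = |f t - f x - f x * (ρ * g - 1)| := by ring_nf
    _ ≤ |f t - f x| + |f x| * |ρ * g - 1| := by rw [← abs_mul]; exact abs_sub _ _
    _ ≤ η / 2 + |F| * (3 * a) := by gcongr
    _ ≤ η := by linarith

end UniformBounds

end

section

variable {Q tw f : ℝ → ℝ} {b n N : ℕ} {p : Polynomial ℝ} {z : Fin n → ℝ}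
  {D K C c F x : ℝ} {L : ℕ → ℝ}

lemma natDegree_diffQuot_le (p : Polynomial ℝ) (x : ℝ) :
    (diffQuot p x).natDegree ≤ p.natDegree := by
  rw [diffQuot, Polynomial.natDegree_divByMonic _ (Polynomial.monic_X_sub_C x)]
  exact Nat.sub_le _ _

lemma one_div_sub_sq_le {X δ t : ℝ} (hx : |x| ≤ X) (hδ : 0 < δ) (ht : δ < |t - x|) :
    1 / (t - x) ^ 2 ≤ ((1 + 2 * X ^ 2) / δ ^ 2 + 2) * (1 + t ^ 2)⁻¹ := by
  have hδt : δ ^ 2 ≤ (t - x) ^ 2 := by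
    rw [← sq_abs (t - x)]
    exact pow_le_pow_left₀ hδ.le ht.le 2
  have hxX : x ^ 2 ≤ X ^ 2 := by
    rw [← sq_abs x]
    exact pow_le_pow_left₀ (abs_nonneg x) hx 2
  have ht_sq : 1 + t ^ 2 ≤ 1 + 2 * X ^ 2 + 2 * (t - x) ^ 2 := by
    linarith [sq_nonneg (t - 2 * x)]
  have hX : 1 + 2 * X ^ 2 ≤ (1 + 2 * X ^ 2) / δ ^ 2 * (t - x) ^ 2 := by
    rw [div_mul_eq_mul_div, le_div_iff₀ (by positivity)]
    gcongr
  rw [← div_eq_mul_inv, div_le_div_iff₀ (by linarith [pow_pos hδ 2]) (by positivity)]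
  linarith

theorem IsOrthonormalNodes.grunwald_sub_eq (hQ : IsFreudExponent Q b)
    (hp : IsOrthonormalNodes Q p z) (hA : ladderCoeff Q p x ≠ 0) (hn : expApproxOrder Q x < n)
    (f : ℝ → ℝ) :
    grunwald z f x - f x =
      grunwald z (ladderError Q p f x) x - f x *
        (p.eval x ^ 2 * ∫ t, peakDefect Q (expApprox Q x) x t) / ladderCoeff Q p x := by
  have hdeg : (diffQuot (diffQuot (expApprox Q x) x) x).degree < (2 * n : ℕ) := by
    refine Polynomial.degree_le_natDegree.trans_lt (mod_cast ?_)
    have hle := (natDegree_diffQuot_le (diffQuot (expApprox Q x) x) x).trans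
      ((natDegree_diffQuot_le _ x).trans (natDegree_expApprox_le Q x))
    omega
  have hsum := hp.sum_christoffel_mul_diffQuot_sq_eq hQ hdeg (hQ.peaksAt_expApprox x)
  rw [eval_expApprox_self, one_mul] at hsum
  have herror : grunwald z (ladderError Q p f x) x =
      grunwald z f x - f x / ladderCoeff Q p x * ∑ k,
        christoffel Q z k * (expApprox Q x).eval (z k) * (diffQuot p (z k)).eval x ^ 2 := by
    rw [grunwald, grunwald, Finset.mul_sum, ← Finset.sum_sub_distrib]
    refine Finset.sum_congr rfl fun k _ => ?_
    rw [ladderError]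
    linear_combination (-(f x / ladderCoeff Q p x * (expApprox Q x).eval (z k))) *
      hp.basis_sq_mul_ladderCoeff hQ k x
  rw [herror, hsum]
  field_simp
  ring

lemma IsFreudExponent.exists_expApproxOrder_lt (hQ : IsFreudExponent Q b) (X : ℝ) :
    ∃ N : ℕ, ∀ n ≥ N, ∀ {x}, |x| ≤ X → expApproxOrder Q x < n := by
  obtain ⟨N, hN⟩ := exists_nat_gt (eulerDeriv Q X + 1)
  refine ⟨N, fun n hn x hx => lt_of_lt_of_le ?_ hn⟩
  have horder := hQ.expApproxOrder_le x
  have hle := hQ.eulerDeriv_le_of_abs_le (hx.trans (le_abs_self X))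
  exact_mod_cast (by linarith : (expApproxOrder Q x : ℝ) < N)

namespace UniformBounds

lemma mul_basis_sq_div_le_of_ne (hU : UniformBounds Q K C c N L) (hQ : IsFreudExponent Q b)
    (htw : IsComparableWeight Q tw D) (hn : N ≤ n) (hp : IsOrthonormalNodes Q p z) {k : Fin n}
    (hne : x ≠ z k) {r : ℝ} (hr : 1 / (z k - x) ^ 2 ≤ r) :
    tw x * ((Lagrange.basis univ z k).eval x ^ 2 / tw (z k)) ≤
      D * (D / c) * (p.eval x ^ 2 * exp (-Q x) * (weightedChristoffel Q z k * r)) := by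
  have htw_x := htw.le_mul_exp_neg hQ x
  have htw_k := htw.pos hQ (z k)
  have hℓ := hU.basis_sq_div_le_of_ne hQ htw hn hp hne hr
  have hD := htw.one_le
  calc _ ≤ D * exp (-Q x) * (D / c * (weightedChristoffel Q z k * (p.eval x ^ 2 * r))) := by
        gcongr
    _ = _ := by ring

lemma basis_sq_mul_ladderCoeff_div_le (hU : UniformBounds Q K C c N L)
    (hQ : IsFreudExponent Q b) (hn : N ≤ n) (hp : IsOrthonormalNodes Q p z) {k : Fin n}
    (hne : x ≠ z k) {r : ℝ} (hr : 1 / (z k - x) ^ 2 ≤ r) :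
    (Lagrange.basis univ z k).eval x ^ 2 *
        (ladderCoeff Q p (z k) / ladderCoeff Q p x * (expApprox Q x).eval (z k)) ≤
      1 / c * (p.eval x ^ 2 * exp (-Q x) * (weightedChristoffel Q z k * r)) := by
  have hc := hU.pos
  have hcA : c ≤ ladderCoeff Q p x :=
    (le_mul_of_one_le_right hc.le (hQ.one_le_curvatureScale x)).trans (hU.le_ladderCoeff hn hp x)
  have hG := hQ.eval_expApprox_le x (z k)
  have hG0 := hQ.eval_expApprox_nonneg x (z k)
  have hweight := (hp.christoffel_pos hQ k).le
  calc _ = 1 / ladderCoeff Q p x * (expApprox Q x).eval (z k) *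
        ((Lagrange.basis univ z k).eval x ^ 2 * ladderCoeff Q p (z k)) := by ring
    _ = 1 / ladderCoeff Q p x * (expApprox Q x).eval (z k) *
        (christoffel Q z k * (p.eval x ^ 2 * (1 / (z k - x) ^ 2))) := by
        rw [hp.basis_sq_mul_ladderCoeff hQ, hp.diffQuot_node_sq_of_ne hne]
    _ ≤ 1 / c * (exp (Q (z k)) * exp (-Q x)) * (christoffel Q z k * (p.eval x ^ 2 * r)) := by
        gcongr
    _ = _ := by rw [weightedChristoffel]; ring

lemma basis_sq_mul_abs_ladderError_le_of_ne (hU : UniformBounds Q K C c N L)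
    (hQ : IsFreudExponent Q b) (htw : IsComparableWeight Q tw D) (hF : ∀ t, |f t| * tw t ≤ F)
    (hn : N ≤ n) (hp : IsOrthonormalNodes Q p z) {k : Fin n} (hne : x ≠ z k) {r : ℝ}
    (hr : 1 / (z k - x) ^ 2 ≤ r) :
    (Lagrange.basis univ z k).eval x ^ 2 * |ladderError Q p f x (z k)| * tw x ≤
      F * (D * (D / c) + 1 / c) *
        (p.eval x ^ 2 * exp (-Q x) * (weightedChristoffel Q z k * r)) := by
  have htw_x := htw.pos hQ x
  have htw_k := htw.pos hQ (z k)
  have hF_x := hF x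
  have hF_k := hF (z k)
  have hF0 : 0 ≤ F := (by positivity : 0 ≤ |f x| * tw x).trans hF_x
  have hbasis := hU.mul_basis_sq_div_le_of_ne hQ htw hn hp hne hr
  have hladder := hU.basis_sq_mul_ladderCoeff_div_le hQ hn hp hne hr
  set ρ := ladderCoeff Q p (z k) / ladderCoeff Q p x * (expApprox Q x).eval (z k)
  have hρ : 0 ≤ ρ := mul_nonneg (div_nonneg (hp.ladderCoeff_nonneg hQ _)
    (hp.ladderCoeff_nonneg hQ _)) (hQ.eval_expApprox_nonneg x (z k))
  have herror : |ladderError Q p f x (z k)| ≤ |f (z k)| + |f x| * ρ := by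
    refine (abs_sub _ _).trans_eq ?_
    rw [abs_mul, abs_of_nonneg hρ]
  calc _ ≤ (Lagrange.basis univ z k).eval x ^ 2 * (|f (z k)| + |f x| * ρ) * tw x := by gcongr
    _ = |f (z k)| * tw (z k) * (tw x * ((Lagrange.basis univ z k).eval x ^ 2 / tw (z k))) +
        |f x| * tw x * ((Lagrange.basis univ z k).eval x ^ 2 * ρ) := by field_simp
    _ ≤ F * (D * (D / c) * (p.eval x ^ 2 * exp (-Q x) * (weightedChristoffel Q z k * r))) +
        F * (1 / c * (p.eval x ^ 2 * exp (-Q x) * (weightedChristoffel Q z k * r))) := by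
        gcongr
    _ = _ := by ring

lemma exists_basis_sq_mul_abs_ladderError_le (hU : UniformBounds Q K C c N L)
    (hQ : IsFreudExponent Q b) (htw : IsComparableWeight Q tw D) (hf : Continuous f)
    (hF : ∀ t, |f t| * tw t ≤ F) (X : ℝ) {η : ℝ} (hη : 0 < η) :
    ∃ E : ℝ, 0 ≤ E ∧ ∀ {n : ℕ} {p : Polynomial ℝ} {z : Fin n → ℝ}, N ≤ n →
      IsOrthonormalNodes Q p z → ∀ {x}, |x| ≤ X → ∀ k,
        (Lagrange.basis univ z k).eval x ^ 2 * |ladderError Q p f x (z k)| * tw x ≤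
          η * (tw x * ((Lagrange.basis univ z k).eval x ^ 2 / tw (z k))) +
            E * (p.eval x ^ 2 * exp (-Q x)) * (weightedChristoffel Q z k * (1 + z k ^ 2)⁻¹) := by
  have hc := hU.pos
  have hD := htw.one_le
  have hF0 : 0 ≤ F := (mul_nonneg (abs_nonneg _) (htw.pos hQ 0).le).trans (hF 0)
  set T := D * exp (-Q 0)
  obtain ⟨δ, hδ, hnear⟩ := hU.exists_abs_ladderError_le hQ hf X
    (by positivity : 0 < η / T)
  refine ⟨F * (D * (D / c) + 1 / c) * ((1 + 2 * X ^ 2) / δ ^ 2 + 2), by positivity,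
    fun {n p z} hn hp x hx k => ?_⟩
  have hν := hp.weightedChristoffel_pos hQ k
  have htw_x := htw.pos hQ x
  have htw_k := htw.pos hQ (z k)
  rcases le_or_gt |z k - x| δ with hzx | hxz
  · refine le_add_of_le_of_nonneg ?_ (by positivity)
    have herror := hnear hn hp hx hzx
    have htw_le : tw (z k) ≤ T := htw.le_mul_exp_neg_zero hQ (z k)
    calc _ ≤ (Lagrange.basis univ z k).eval x ^ 2 * (η / T) * tw x := by gcongr
      _ ≤ (Lagrange.basis univ z k).eval x ^ 2 * (η / tw (z k)) * tw x := by gcongr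
      _ = _ := by ring
  · refine le_add_of_nonneg_of_le (by positivity) ?_
    have hne : x ≠ z k := by
      rintro rfl
      rw [sub_self, abs_zero] at hxz
      exact hδ.not_gt hxz
    refine (hU.basis_sq_mul_abs_ladderError_le_of_ne hQ htw hF hn hp hne
      (one_div_sub_sq_le hx hδ hxz)).trans_eq ?_
    ring

lemma exists_abs_grunwald_ladderError_le (hU : UniformBounds Q K C c N L)
    (hQ : IsFreudExponent Q b) (htw : IsComparableWeight Q tw D) (hf : Continuous f)
    (hF : ∀ t, |f t| * tw t ≤ F) (X : ℝ) {η : ℝ} (hη : 0 < η) :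
    ∃ E : ℝ, 0 ≤ E ∧ ∃ N' ≥ N, ∀ {n : ℕ} {p : Polynomial ℝ} {z : Fin n → ℝ}, N' ≤ n →
      IsOrthonormalNodes Q p z → ∀ {x}, 0 ≤ x → x ≤ X →
        |grunwald z (ladderError Q p f x) x| * tw x ≤
          η + E * (p.eval x ^ 2 * exp (-Q x)) := by
  obtain ⟨C₁, hC₁, N', hN', hbound⟩ := hU.exists_mul_sum_basis_sq_div_le hQ htw
  obtain ⟨C₂, hC₂, hν_sum⟩ := hQ.exists_sum_weightedChristoffel_mul_inv_le
  obtain ⟨E, hE, hnode⟩ := hU.exists_basis_sq_mul_abs_ladderError_le hQ htw hf hF X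
    (by positivity : 0 < η / C₁)
  refine ⟨E * C₂, by positivity, N', hN', fun {n p z} hn hp x hx hxX => ?_⟩
  have hν_sum_z := hν_sum hp
  have hbound_x := hbound hn hp hx
  have htw_x := htw.pos hQ x
  calc _ ≤ ∑ k, (Lagrange.basis univ z k).eval x ^ 2 * |ladderError Q p f x (z k)| * tw x := by
        rw [← Finset.sum_mul, grunwald]
        gcongr
        refine (Finset.abs_sum_le_sum_abs _ _).trans_eq (Finset.sum_congr rfl fun k _ => ?_)
        rw [abs_mul, abs_of_nonneg (sq_nonneg _)]
    _ ≤ _ := Finset.sum_le_sum fun k _ =>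
        hnode (hN'.le.trans hn) hp (by rwa [abs_of_nonneg hx]) k
    _ = η / C₁ * (tw x * ∑ k, (Lagrange.basis univ z k).eval x ^ 2 / tw (z k)) +
        E * (p.eval x ^ 2 * exp (-Q x)) *
          ∑ k, weightedChristoffel Q z k * (1 + z k ^ 2)⁻¹ := by
        rw [Finset.sum_add_distrib, ← Finset.mul_sum, ← Finset.mul_sum, ← Finset.mul_sum]
    _ ≤ η / C₁ * C₁ + E * (p.eval x ^ 2 * exp (-Q x)) * C₂ := by gcongr
    _ = _ := by field_simp

lemma exists_abs_mul_integral_peakDefect_le (hU : UniformBounds Q K C c N L)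
    (hQ : IsFreudExponent Q b) (hF : ∀ t, |f t| * tw t ≤ F) (htw : ∀ t, 0 < tw t) :
    ∃ E : ℝ, 0 ≤ E ∧ ∀ {n : ℕ} {p : Polynomial ℝ} {z : Fin n → ℝ}, N ≤ n →
      IsOrthonormalNodes Q p z → ∀ x,
        |f x * (p.eval x ^ 2 * ∫ t, peakDefect Q (expApprox Q x) x t) / ladderCoeff Q p x| *
          tw x ≤ E * (p.eval x ^ 2 * exp (-Q x)) := by
  obtain ⟨C', hC', hdefect⟩ := hQ.exists_integral_peakDefect_expApprox_le
  have hc := hU.pos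
  have hF0 : 0 ≤ F := (mul_nonneg (abs_nonneg _) (htw 0).le).trans (hF 0)
  refine ⟨F * C' / c, by positivity, fun {n p z} hn hp x => ?_⟩
  have hR := hQ.curvatureScale_pos x
  have hA := hU.le_ladderCoeff hn hp x
  have hA0 := hU.ladderCoeff_pos hQ hn hp x
  have hF_x := hF x
  have hsqrt : √(curvatureScale Q x) ≤ curvatureScale Q x :=
    sqrt_le_self_iff.2 (.inr (hQ.one_le_curvatureScale x))
  have hdefect_x : ∫ t, peakDefect Q (expApprox Q x) x t ≤
      C' * (exp (-Q x) * curvatureScale Q x) := (hdefect x).trans (by gcongr)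
  have hdefect0 : 0 ≤ p.eval x ^ 2 * ∫ t, peakDefect Q (expApprox Q x) x t :=
    mul_nonneg (sq_nonneg _) (integral_nonneg (hQ.peaksAt_expApprox x).peakDefect_nonneg)
  rw [abs_div, abs_mul, abs_of_pos hA0, abs_of_nonneg hdefect0]
  calc _ = |f x| * tw x * (p.eval x ^ 2 * ∫ t, peakDefect Q (expApprox Q x) x t) /
        ladderCoeff Q p x := by ring
    _ ≤ F * (p.eval x ^ 2 * (C' * (exp (-Q x) * curvatureScale Q x))) /
        (c * curvatureScale Q x) := by gcongr
    _ = _ := by field_simp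

theorem exists_forall_le_abs_grunwald_sub_mul_le (hU : UniformBounds Q K C c N L)
    (hQ : IsFreudExponent Q b) (htw : IsComparableWeight Q tw D) (hf : Continuous f)
    (hF : ∀ t, |f t| * tw t ≤ F) (X : ℝ) {ε : ℝ} (hε : 0 < ε) :
    ∃ N' : ℕ, ∀ {n : ℕ} {p : Polynomial ℝ} {z : Fin n → ℝ}, N' ≤ n →
      IsOrthonormalNodes Q p z → ∀ {x}, 0 ≤ x → x ≤ X →
        |(grunwald z f x - f x) * tw x| ≤ ε := by
  obtain ⟨E₁, hE₁, N₁, hN₁, herror⟩ :=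
    hU.exists_abs_grunwald_ladderError_le hQ htw hf hF X (half_pos hε)
  obtain ⟨E₂, hE₂, hdefect⟩ := hU.exists_abs_mul_integral_peakDefect_le hQ hF (htw.pos hQ)
  obtain ⟨N₂, horder⟩ := hQ.exists_expApproxOrder_lt X
  obtain ⟨N₃, hscale⟩ := eventually_atTop.1 (hU.tendsto.eventually_ge_atTop
    (max (K * X) ((E₁ + E₂) * C / (ε / 2))))
  refine ⟨max N₁ (max N₂ N₃), fun {n p z} hn hp x hx hxX => ?_⟩
  simp only [max_le_iff] at hn
  obtain ⟨hn₁, hn₂, hn₃⟩ := hn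
  have hnN : N ≤ n := hN₁.le.trans hn₁
  obtain ⟨hKX, hEL⟩ := max_le_iff.1 (hscale n hn₃)
  have hL : 0 < L n := zero_lt_one.trans_le (hU.one_le_scale hnN)
  have hK : 0 ≤ K := by linarith [hU.ten_le]
  have hp_x := hU.eval_sq_mul_exp_le hnN hp hx ((mul_le_mul_of_nonneg_left hxX hK).trans hKX)
  have hp_small : (E₁ + E₂) * (p.eval x ^ 2 * exp (-Q x)) ≤ ε / 2 := by
    refine (mul_le_mul_of_nonneg_left hp_x (by positivity)).trans ?_
    rwa [← mul_div_assoc, div_le_comm₀ hL (half_pos hε)]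
  have herror_x := herror hn₁ hp hx hxX
  have hdefect_x := hdefect hnN hp x
  have htw_x := htw.pos hQ x
  rw [hp.grunwald_sub_eq hQ (hU.ladderCoeff_pos hQ hnN hp x).ne'
    (horder n hn₂ (by rwa [abs_of_nonneg hx])), abs_mul, abs_of_pos htw_x]
  calc _ ≤ (|grunwald z (ladderError Q p f x) x| + |f x * (p.eval x ^ 2 *
        ∫ t, peakDefect Q (expApprox Q x) x t) / ladderCoeff Q p x|) * tw x := by
        gcongr; exact abs_sub _ _
    _ ≤ ε := by rw [add_mul]; linarith

end UniformBounds

end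

/-! ### Comparison weights -/

section

variable {Q tw f : ℝ → ℝ} {b n : ℕ} {p : Polynomial ℝ} {z : Fin n → ℝ} {D : ℝ}

lemma exists_isFreudExponent (heven : Function.Even Q) (hsmooth : ContDiff ℝ 2 Q)
    (hpos : ∀ x, 0 < x → 0 < deriv Q x) {B : ℝ}
    (hlower : ∀ x, 0 < x → 2 ≤ deriv (fun y => y * deriv Q y) x / deriv Q x)
    (hupper : ∀ x, 0 < x → deriv (fun y => y * deriv Q y) x / deriv Q x ≤ B) :
    ∃ b, IsFreudExponent Q b := by
  have hdiff : Differentiable ℝ (deriv Q) :=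
    (contDiff_one_iff_deriv.1 ((contDiff_succ_iff_deriv (n := 1)).1 hsmooth).2.2).1
  have hderiv (x : ℝ) :
      deriv (fun y => y * deriv Q y) x = deriv Q x + x * deriv (deriv Q) x := by
    simpa only [one_mul] using ((hasDerivAt_id' x).fun_mul (hdiff x).hasDerivAt).deriv
  refine ⟨⌈B⌉₊, heven, hsmooth, hpos, fun x hx => ?_, fun x hx => ?_⟩
  · have h := hlower x hx
    rw [hderiv, le_div_iff₀ (hpos x hx)] at h
    linarith
  · have h := hupper x hx
    rw [hderiv, div_le_iff₀ (hpos x hx)] at h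
    have hB : B * deriv Q x ≤ ⌈B⌉₊ * deriv Q x :=
      mul_le_mul_of_nonneg_right (Nat.le_ceil B) (hpos x hx).le
    linarith [hpos x hx]

lemma exists_forall_abs_le_le_and_one_le_mul {g : ℝ → ℝ} (hg : Continuous g)
    (hpos : ∀ x, 0 < g x) (d : ℝ) : ∃ C : ℝ, ∀ x, |x| ≤ d → g x ≤ C ∧ 1 ≤ C * g x := by
  obtain ⟨C₁, hC₁⟩ :=
    (isCompact_Icc (a := -d) (b := d)).exists_bound_of_continuousOn hg.continuousOn
  obtain ⟨C₂, hC₂⟩ := (isCompact_Icc (a := -d) (b := d)).exists_bound_of_continuousOn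
    (hg.inv₀ fun x => (hpos x).ne').continuousOn
  refine ⟨max C₁ C₂, fun x hx => ⟨?_, ?_⟩⟩
  · exact (le_abs_self _).trans ((hC₁ x (abs_le.1 hx)).trans (le_max_left _ _))
  · rw [← inv_le_iff_one_le_mul₀ (hpos x)]
    exact (le_abs_self _).trans ((hC₂ x (abs_le.1 hx)).trans (le_max_right _ _))

namespace IsFreudExponent

lemma curvatureScale_neg (hQ : IsFreudExponent Q b) (x : ℝ) :
    curvatureScale Q (-x) = curvatureScale Q x := by
  rw [← hQ.curvatureScale_abs, abs_neg, hQ.curvatureScale_abs]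

lemma exists_isComparableWeight (hQ : IsFreudExponent Q b) (hcont : Continuous tw)
    (hpos : ∀ x, 0 < tw x) {d : ℝ}
    (houter : ∀ x, d ≤ |x| → tw x = exp (-Q x) * |x| / deriv Q |x|) :
    ∃ D, IsComparableWeight Q tw D := by
  set g := fun x => curvatureScale Q x * tw x / exp (-Q x)
  have hR (x : ℝ) := hQ.curvatureScale_pos x
  have hgpos (x : ℝ) : 0 < g x := div_pos (mul_pos (hR x) (hpos x)) (exp_pos _)
  have hgcont : Continuous g := ((continuous_const.add hQ.continuous_radialSlope).mul hcont).div
    (continuous_exp.comp hQ.continuous.neg) fun x => (exp_pos _).ne'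
  obtain ⟨C, hC⟩ := exists_forall_abs_le_le_and_one_le_mul hgcont hgpos (max d 1)
  obtain ⟨c, hc, hcR⟩ := hQ.exists_mul_curvatureScale_le_radialSlope
  set D := max 1 (max C c⁻¹)
  have hCD : C ≤ D := (le_max_left _ _).trans (le_max_right _ _)
  have hcD : c⁻¹ ≤ D := (le_max_right _ _).trans (le_max_right _ _)
  have hgD (x : ℝ) : g x ≤ D ∧ 1 ≤ D * g x := by
    rcases le_total |x| (max d 1) with hx | hx
    · exact ⟨(hC x hx).1.trans hCD,
        (hC x hx).2.trans (mul_le_mul_of_nonneg_right hCD (hgpos x).le)⟩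
    · obtain ⟨hdx, hx1⟩ := max_le_iff.1 hx
      have hx0 : 0 < |x| := zero_lt_one.trans_le hx1
      have hslope := hQ.radialSlope_pos (abs_pos.1 hx0)
      have hg : g x = curvatureScale Q x / radialSlope Q x := by
        have := hQ.deriv_pos _ hx0
        rw [← hQ.radialSlope_abs, hQ.radialSlope_eq_div hx0.ne']
        simp only [g, houter x hdx]
        field_simp
      have hg1 : 1 ≤ g x := by
        rw [hg, one_le_div hslope]
        exact le_add_of_nonneg_left zero_le_one
      refine ⟨?_, one_le_mul_of_one_le_of_one_le (le_max_left _ _) hg1⟩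
      rw [hg, div_le_iff₀ hslope]
      refine le_trans ?_ (mul_le_mul_of_nonneg_right hcD hslope.le)
      rw [inv_mul_eq_div, le_div_iff₀ hc, mul_comm]
      exact hcR x hx1
  refine ⟨D, le_max_left _ _, fun x => ?_, fun x => ?_⟩
  · have h := (hgD x).2
    simp only [g, ← mul_div_assoc, one_le_div (exp_pos _)] at h
    rwa [mul_assoc]
  · exact (div_le_iff₀ (exp_pos _)).1 (hgD x).1

end IsFreudExponent

namespace IsComparableWeight

lemma comp_neg (htw : IsComparableWeight Q tw D) (hQ : IsFreudExponent Q b) :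
    IsComparableWeight Q (fun x => tw (-x)) D where
  one_le := htw.one_le
  exp_neg_le x := by simpa only [hQ.even x, hQ.curvatureScale_neg] using htw.exp_neg_le (-x)
  le x := by simpa only [hQ.even x, hQ.curvatureScale_neg] using htw.le (-x)

lemma exists_forall_abs_mul_le_of_tendsto (htw : IsComparableWeight Q tw D)
    (hQ : IsFreudExponent Q b) (hlim : Tendsto (fun x => f x * tw x) (cocompact ℝ) (nhds 0))
    {e : ℝ} (he : 0 < e) : ∃ A : ℝ, ∀ t, A ≤ |t| → |f t| * tw t ≤ e := by
  have hevent := Metric.tendsto_nhds.1 hlim e he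
  rw [← Metric.cobounded_eq_cocompact, ← comap_norm_atTop, eventually_comap] at hevent
  obtain ⟨A, hA⟩ := eventually_atTop.1 hevent
  refine ⟨A, fun t ht => ?_⟩
  have hdist := hA |t| ht t rfl
  rw [dist_zero_right, norm_eq_abs, abs_mul, abs_of_pos (htw.pos hQ t)] at hdist
  exact hdist.le

lemma exists_forall_abs_mul_le (htw : IsComparableWeight Q tw D) (hQ : IsFreudExponent Q b)
    (hf : Continuous f) (hlim : Tendsto (fun x => f x * tw x) (cocompact ℝ) (nhds 0)) :
    ∃ F : ℝ, ∀ t, |f t| * tw t ≤ F := by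
  obtain ⟨A, hA⟩ := htw.exists_forall_abs_mul_le_of_tendsto hQ hlim one_pos
  obtain ⟨M, hM⟩ :=
    (isCompact_Icc (a := -A) (b := A)).exists_bound_of_continuousOn hf.continuousOn
  refine ⟨max 1 (M * (D * exp (-Q 0))), fun t => ?_⟩
  rcases le_total A |t| with hAt | htA
  · exact (hA t hAt).trans (le_max_left _ _)
  · have hfM := hM t (abs_le.1 htA)
    exact (mul_le_mul hfM (htw.le_mul_exp_neg_zero hQ t) (htw.pos hQ t).le
      ((norm_nonneg _).trans hfM)).trans (le_max_right _ _)

end IsComparableWeight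

lemma IsOrthonormalNodes.neg (hQ : IsFreudExponent Q b) (hp : IsOrthonormalNodes Q p z) :
    IsOrthonormalNodes Q p (fun k => -z k) where
  natDegree_eq := hp.natDegree_eq
  orthogonal := hp.orthogonal
  normalized := hp.normalized
  injective := neg_injective.comp hp.injective
  eval_node k := by rw [hp.eval_neg hQ, hp.eval_node, mul_zero]

lemma grunwald_eq_sum_prod (z : Fin n → ℝ) (f : ℝ → ℝ) (x : ℝ) :
    grunwald z f x =
      ∑ k, (∏ j ∈ Finset.univ.erase k, (x - z j) / (z k - z j)) ^ 2 * f (z k) := by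
  simp only [grunwald, Lagrange.basis, Lagrange.basisDivisor, Polynomial.eval_prod,
    Polynomial.eval_mul, Polynomial.eval_C, Polynomial.eval_sub, Polynomial.eval_X,
    div_eq_inv_mul]

lemma grunwald_neg (z : Fin n → ℝ) (f : ℝ → ℝ) (x : ℝ) :
    grunwald (fun k => -z k) (fun t => f (-t)) (-x) = grunwald z f x := by
  simp only [grunwald_eq_sum_prod, neg_sub_neg, neg_neg]
  refine Finset.sum_congr rfl fun k _ => ?_
  congr 2
  refine Finset.prod_congr rfl fun j _ => ?_
  rw [← neg_sub x, ← neg_sub (z k), neg_div_neg_eq]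

theorem exists_forall_nonneg_abs_grunwald_sub_mul_le (hQ : IsFreudExponent Q b)
    (htw : IsComparableWeight Q tw D) (hf : Continuous f)
    (hlim : Tendsto (fun x => f x * tw x) (cocompact ℝ) (nhds 0)) {ε : ℝ} (hε : 0 < ε) :
    ∃ N : ℕ, ∀ {n : ℕ} {p : Polynomial ℝ} {z : Fin n → ℝ}, N ≤ n → IsOrthonormalNodes Q p z →
      ∀ {x}, 0 ≤ x → |(grunwald z f x - f x) * tw x| ≤ ε := by
  obtain ⟨K, C, c, N, L, hU⟩ := hQ.exists_uniformBounds
  obtain ⟨F, hF⟩ := htw.exists_forall_abs_mul_le hQ hf hlim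
  obtain ⟨X, N₁, htail⟩ := hU.exists_forall_ge_abs_grunwald_sub_mul_le hQ htw hF
    (fun e he => htw.exists_forall_abs_mul_le_of_tendsto hQ hlim he) hε
  obtain ⟨N₂, hcompact⟩ := hU.exists_forall_le_abs_grunwald_sub_mul_le hQ htw hf hF X hε
  refine ⟨max N₁ N₂, fun {n p z} hn hp x hx => ?_⟩
  rcases le_total X x with hXx | hxX
  · exact htail ((le_max_left _ _).trans hn) hp hXx
  · exact hcompact ((le_max_right _ _).trans hn) hp hx hxX

end

end GrunwaldInterpolation

open GrunwaldInterpolation in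
theorem grunwald_interpolation_converges_general {Q tw : ℝ → ℝ} {b : ℕ} {D : ℝ}
    (hQ : IsFreudExponent Q b) (htw : IsComparableWeight Q tw D) {f : ℝ → ℝ}
    (hf : Continuous f) (hlim : Tendsto (fun x => f x * tw x) (cocompact ℝ) (nhds 0))
    {ε : ℝ} (hε : 0 < ε) :
    ∃ N : ℕ, ∀ n : ℕ, N ≤ n → ∀ (p : Polynomial ℝ) (z : Fin n → ℝ),
      IsOrthonormalNodes Q p z → ∀ x, |(grunwald z f x - f x) * tw x| ≤ ε := by
  obtain ⟨N₁, hpos⟩ := exists_forall_nonneg_abs_grunwald_sub_mul_le hQ htw hf hlim hε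
  obtain ⟨N₂, hneg⟩ := exists_forall_nonneg_abs_grunwald_sub_mul_le hQ (htw.comp_neg hQ)
    (hf.comp continuous_neg)
    (hlim.comp (Homeomorph.neg ℝ).isClosedEmbedding.tendsto_cocompact) hε
  refine ⟨max N₁ N₂, fun n hn p z hp x => ?_⟩
  rcases le_total 0 x with hx | hx
  · exact hpos ((le_max_left _ _).trans hn) hp hx
  · have hneg_x := hneg ((le_max_right _ _).trans hn) (hp.neg hQ) (neg_nonneg.2 hx)
    simpa only [Function.comp_def, grunwald_neg, neg_neg] using hneg_x

/-- With the Freud weight `w = e^{-Q}` and the modified weight `w̃` as in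
the text, for every continuous `f : ℝ → ℝ` with `f(x)·w̃(x) → 0` as `|x| → ∞`, the Grünwald
interpolation `Y_n(f,·)` on the zeros of the orthonormal polynomials `p_n` satisfies
`sup_x |(Y_n(f,x) - f(x))·w̃(x)| → 0` as `n → ∞`. -/
theorem grunwald_interpolation_converges
    (Q : ℝ → ℝ) (hQeven : ∀ x, Q (-x) = Q x) (hQsmooth : ContDiff ℝ 3 Q)
    (hQ'pos : ∀ x : ℝ, 0 < x → 0 < deriv Q x)
    (A B : ℝ) (hA : 2 ≤ A)
    (hAB : ∀ x : ℝ, 0 < x →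
      A ≤ deriv (fun y => y * deriv Q y) x / deriv Q x ∧
      deriv (fun y => y * deriv Q y) x / deriv Q x ≤ B)
    (c : ℝ) (hc : ∀ x : ℝ, 1 ≤ |x| →
      |x * iteratedDeriv 3 Q x / iteratedDeriv 2 Q x| ≤ c)
    (d : ℝ) (hd1 : 1 ≤ d)
    (hd : ∀ x : ℝ, d ≤ |x| →
      (1 - (B - 1) ^ 2 - c * (B - 1)) / x ^ 2 ≤ iteratedDeriv 2 Q x)
    (tw : ℝ → ℝ) (htw_even : ∀ x, tw (-x) = tw x) (htw_pos : ∀ x, 0 < tw x)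
    (htw_smooth : ContDiff ℝ 2 tw)
    (htw_inner : ∀ x : ℝ, |x| ≤ 1 → tw x = Real.exp (-(Q x)))
    (htw_outer : ∀ x : ℝ, d ≤ |x| → tw x = Real.exp (-(Q x)) * |x| / deriv Q |x|)
    (hlog1 : ∀ x : ℝ, 0 < x → 0 < deriv (fun y => Real.log (1 / tw y)) x)
    (hlog2 : ∀ x : ℝ, 0 < x →
      0 < deriv (deriv (fun y => Real.log (1 / tw y))) x)
    (hlog1c : ContinuousOn (deriv (fun y => Real.log (1 / tw y))) (Set.Ioi 0))
    (hlog2c : ContinuousOn (deriv (deriv (fun y => Real.log (1 / tw y)))) (Set.Ioi 0))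
    (P : ℕ → Polynomial ℝ)
    (hdeg : ∀ n, (P n).natDegree = n) (hlead : ∀ n, 0 < (P n).leadingCoeff)
    (horth : ∀ n : ℕ, ∀ q : Polynomial ℝ, q.degree < n →
      ∫ t : ℝ, (P n).eval t * q.eval t * Real.exp (-(Q t)) = 0)
    (hnorm : ∀ n : ℕ, ∫ t : ℝ, ((P n).eval t) ^ 2 * Real.exp (-(Q t)) = 1)
    (xz : (n : ℕ) → Fin n → ℝ)
    (hxz_mono : ∀ n, StrictMono (xz n))
    (hxz_zero : ∀ n : ℕ, ∀ k : Fin n, (P n).eval (xz n k) = 0) :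
    ∀ f : ℝ → ℝ, Continuous f →
      Tendsto (fun x => f x * tw x) (cocompact ℝ) (nhds 0) →
      ∀ ε : ℝ, 0 < ε → ∃ N : ℕ, ∀ n : ℕ, N ≤ n → ∀ x : ℝ,
        |((∑ k : Fin n,
            (∏ j ∈ Finset.univ.erase k, (x - xz n j) / (xz n k - xz n j)) ^ 2 * f (xz n k))
          - f x) * tw x| ≤ ε := by
  intro f hf hlim ε hε
  obtain ⟨b, hQ⟩ := GrunwaldInterpolation.exists_isFreudExponent hQeven
    (hQsmooth.of_le (by norm_num)) hQ'pos
    (fun x hx => hA.trans (hAB x hx).1) fun x hx => (hAB x hx).2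
  obtain ⟨D, htw⟩ := hQ.exists_isComparableWeight htw_smooth.continuous htw_pos htw_outer
  obtain ⟨N, hN⟩ := grunwald_interpolation_converges_general hQ htw hf hlim hε
  refine ⟨N, fun n hn x => ?_⟩
  simpa only [GrunwaldInterpolation.grunwald_eq_sum_prod] using hN n hn (P n) (xz n)
    ⟨hdeg n, horth n, hnorm n, (hxz_mono n).injective, hxz_zero n⟩ x
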